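/- arXiv:2402.09647 — 5 statements merged into one kernel-verified Lean document; each statement's English description precedes it below -/
import Mathlib

section
/- There exists a real constant C ≥ 1 such that the following two assertions hold: (a) for every ε > 0 there exists a positive integer N such that every positive integer m satisfying ψ_C(m, N) has ‖α·m‖ < ε; (b) for every positive integer N there exists ε > 0 such that every positive integer m with ‖α·m‖ < ε satisfies ψ_C(m, N). -/
/-!
STATEMENT 7: the property ψ_C(m, N) characterises smallness of ‖α·m‖.
-/

namespace Stmt7

/-- The second symmetric discrete derivative. -/
def Δ2 (g : ℤ → ℤ) (n₀ n₁ n₂ : ℤ) : ℤ :=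
  g (n₀ + n₁ + n₂) - g (n₀ + n₁) - g (n₁ + n₂) - g (n₂ + n₀)
    + g n₀ + g n₁ + g n₂ - g 0

/-- `μ_C(n₀, n₁)`: there is a positive integer `n₂ ≥ C·n₁` with `Δ²g(n₀,n₁,n₂) = 0`. -/
def mu (C : ℝ) (g : ℤ → ℤ) (n₀ n₁ : ℤ) : Prop :=
  ∃ n₂ : ℤ, 0 < n₂ ∧ C * n₁ ≤ (n₂ : ℝ) ∧ Δ2 g n₀ n₁ n₂ = 0

/-- `ψ_C(m, N)`: `μ_C(n, m)` holds for every positive integer `n ≤ N`. -/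
def psi (C : ℝ) (g : ℤ → ℤ) (m N : ℤ) : Prop :=
  ∀ n : ℤ, 0 < n → n ≤ N → mu C g n m

theorem round_eq_of_abs {x : ℝ} {k : ℤ} (h : |x - k| < 1 / 2) : round x = k := by
  rw [abs_lt] at h
  rw [round_eq, Int.floor_eq_iff]
  constructor <;> linarith [h.1, h.2]

/-- Simultaneous recurrence. -/
theorem recur3 (a b c δ : ℝ) (hδ : 0 < δ) (K : ℕ) :
    ∃ q : ℤ, (K : ℤ) < q ∧ ∃ p₁ p₂ p₃ : ℤ,
      |a * q - p₁| < δ ∧ |b * q - p₂| < δ ∧ |c * q - p₃| < δ := by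
  let u : ℕ → ℝ × ℝ × ℝ := fun n =>
    (Int.fract (a * ((K + 1 : ℕ) * n : ℕ)), Int.fract (b * ((K + 1 : ℕ) * n : ℕ)),
      Int.fract (c * ((K + 1 : ℕ) * n : ℕ)))
  have hc : IsCompact (Set.Icc (0 : ℝ) 1 ×ˢ (Set.Icc (0 : ℝ) 1 ×ˢ Set.Icc (0 : ℝ) 1)) :=
    isCompact_Icc.prod (isCompact_Icc.prod isCompact_Icc)
  have hu : ∀ n, u n ∈ Set.Icc (0 : ℝ) 1 ×ˢ (Set.Icc (0 : ℝ) 1 ×ˢ Set.Icc (0 : ℝ) 1) := by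
    intro n
    simp only [u, Set.mem_prod, Set.mem_Icc]
    refine ⟨⟨Int.fract_nonneg _, (Int.fract_lt_one _).le⟩,
      ⟨Int.fract_nonneg _, (Int.fract_lt_one _).le⟩,
      ⟨Int.fract_nonneg _, (Int.fract_lt_one _).le⟩⟩
  obtain ⟨l, -, φ, hφ, hl⟩ := hc.tendsto_subseq hu
  have hcs := hl.cauchySeq
  rw [Metric.cauchySeq_iff] at hcs
  obtain ⟨M, hM⟩ := hcs δ hδ
  have hd := hM (M + 1) (by omega) M le_rfl
  have hlt : φ M < φ (M + 1) := hφ (Nat.lt_succ_self M)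
  simp only [Function.comp, u, Prod.dist_eq, max_lt_iff, Real.dist_eq] at hd
  obtain ⟨h1, h2, h3⟩ := hd
  have key : ∀ x y : ℝ, ∃ p : ℤ, Int.fract x - Int.fract y = x - y - p := by
    intro x y
    refine ⟨⌊x⌋ - ⌊y⌋, ?_⟩
    have := Int.floor_add_fract x
    have := Int.floor_add_fract y
    push_cast
    linarith
  obtain ⟨p₁, e1⟩ := key (a * ((K + 1 : ℕ) * (φ (M + 1)) : ℕ)) (a * ((K + 1 : ℕ) * (φ M) : ℕ))
  obtain ⟨p₂, e2⟩ := key (b * ((K + 1 : ℕ) * (φ (M + 1)) : ℕ)) (b * ((K + 1 : ℕ) * (φ M) : ℕ))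
  obtain ⟨p₃, e3⟩ := key (c * ((K + 1 : ℕ) * (φ (M + 1)) : ℕ)) (c * ((K + 1 : ℕ) * (φ M) : ℕ))
  rw [e1] at h1
  rw [e2] at h2
  rw [e3] at h3
  refine ⟨((K : ℤ) + 1) * ((φ (M + 1) : ℤ) - φ M), ?_, p₁, p₂, p₃, ?_, ?_, ?_⟩
  · have : (1 : ℤ) ≤ (φ (M + 1) : ℤ) - φ M := by omega
    nlinarith [Int.natCast_nonneg K]
  · refine lt_of_eq_of_lt (congrArg _ ?_) h1
    push_cast
    ring
  · refine lt_of_eq_of_lt (congrArg _ ?_) h2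
    push_cast
    ring
  · refine lt_of_eq_of_lt (congrArg _ ?_) h3
    push_cast
    ring

/-- Recurrence data. -/
def Rec (α β : ℝ) (y : ℝ) (δ : ℝ) (K : ℕ) (n a p q r : ℤ) : Prop :=
  (K : ℤ) < n ∧ |α * n - a| < δ ∧ |β * n - p| < δ ∧ |β * a - q| < δ ∧ |β * n * a - y - r| < δ

def Lim (α β : ℝ) (y : ℝ) : Prop :=
  ∀ δ : ℝ, 0 < δ → ∀ K : ℕ, ∃ n a p q r : ℤ, Rec α β y δ K n a p q r

theorem recur_base (α β δ : ℝ) (hδ : 0 < δ) (K : ℕ) :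
    ∃ n a p q : ℤ, (K : ℤ) < n ∧ |α * n - a| < δ ∧ |β * n - p| < δ ∧ |β * a - q| < δ := by
  have hb : 0 < 1 + |β| := by positivity
  obtain ⟨n, hn, a, p, q, h1, h2, h3⟩ := recur3 α β (α * β) (δ / 2 / (1 + |β|)) (by positivity) K
  have hle : δ / 2 / (1 + |β|) ≤ δ / 2 := div_le_self (by positivity) (by linarith [abs_nonneg β])
  refine ⟨n, a, p, q, hn, by linarith, by linarith, ?_⟩
  have e : β * a - q = (α * β * n - q) - β * (α * n - a) := by ring
  have h4 : |β * (α * n - a)| ≤ δ / 2 := by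
    rw [abs_mul]
    calc |β| * |α * n - a| ≤ (1 + |β|) * (δ / 2 / (1 + |β|)) := by
          gcongr
          linarith
      _ = δ / 2 := by field_simp
  rw [e]
  calc _ ≤ _ := abs_sub _ _
    _ < δ := by linarith

theorem exists_lim (α β : ℝ) : ∃ y, Lim α β y := by
  have h : ∀ k : ℕ, ∃ n a p q : ℤ, (k : ℤ) < n ∧ |α * n - a| < 1 / ((k : ℝ) + 1) ∧
      |β * n - p| < 1 / ((k : ℝ) + 1) ∧ |β * a - q| < 1 / ((k : ℝ) + 1) :=
    fun k => recur_base α β _ (by positivity) k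
  choose n a p q hn h1 h2 h3 using h
  obtain ⟨y, -, φ, hφ, hl⟩ := (isCompact_Icc (a := (0 : ℝ)) (b := 1)).tendsto_subseq
    (x := fun k => Int.fract (β * n k * a k))
    (fun k => ⟨Int.fract_nonneg _, (Int.fract_lt_one _).le⟩)
  refine ⟨y, fun δ hδ K => ?_⟩
  rw [Metric.tendsto_atTop] at hl
  obtain ⟨M, hM⟩ := hl δ hδ
  obtain ⟨L, hL⟩ := exists_nat_one_div_lt hδ
  let k := max M (max K L)
  have hk : k ≤ φ k := hφ.id_le k
  have hkK : K ≤ k := le_trans (le_max_left _ _) (le_max_right _ _)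
  have hkL : L ≤ k := le_trans (le_max_right _ _) (le_max_right _ _)
  have hd := hM k (le_max_left _ _)
  have hsmall : 1 / ((φ k : ℝ) + 1) < δ := by
    refine lt_of_le_of_lt ?_ hL
    have : (L : ℝ) ≤ φ k := by exact_mod_cast hkL.trans hk
    gcongr
  refine ⟨n (φ k), a (φ k), p (φ k), q (φ k), ⌊β * n (φ k) * a (φ k)⌋, ?_,
    (h1 _).trans hsmall, (h2 _).trans hsmall, (h3 _).trans hsmall, ?_⟩
  · have := hn (φ k)
    omega
  · simp only [Function.comp, Real.dist_eq] at hd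
    convert hd using 2
    have := Int.floor_add_fract (β * n (φ k) * a (φ k))
    linarith

theorem lim_add {α β y₁ y₂ : ℝ} (h₁ : Lim α β y₁) (h₂ : Lim α β y₂) : Lim α β (y₁ + y₂) := by
  intro δ hδ K
  obtain ⟨n, a, p, q, r, hn, ha, hp, hq, hr⟩ := h₁ (δ / 3) (by positivity) K
  have hB : (1 : ℝ) ≤ 1 + |(n : ℝ)| + |(a : ℝ)| := by
    linarith [abs_nonneg (n : ℝ), abs_nonneg (a : ℝ)]
  have hB0 : (0 : ℝ) < 1 + |(n : ℝ)| + |(a : ℝ)| := by linarith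
  obtain ⟨n', a', p', q', r', hn', ha', hp', hq', hr'⟩ :=
    h₂ (δ / 3 / (1 + |(n : ℝ)| + |(a : ℝ)|)) (by positivity) 0
  have hD : δ / 3 / (1 + |(n : ℝ)| + |(a : ℝ)|) * (1 + |(n : ℝ)| + |(a : ℝ)|) = δ / 3 := by
    field_simp
  generalize δ / 3 / (1 + |(n : ℝ)| + |(a : ℝ)|) = η at *
  have hη : 0 < η := lt_of_le_of_lt (abs_nonneg _) ha'
  have hle : η ≤ δ / 3 := by nlinarith
  refine ⟨n + n', a + a', p + p', q + q', r + r' + n * q' + a * p', ?_, ?_, ?_, ?_, ?_⟩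
  · push_cast at hn'
    omega
  · have e : α * ((n + n' : ℤ) : ℝ) - ((a + a' : ℤ) : ℝ) = (α * n - a) + (α * n' - a') := by
      push_cast; ring
    rw [e]
    exact (abs_add_le _ _).trans_lt (by linarith)
  · have e : β * ((n + n' : ℤ) : ℝ) - ((p + p' : ℤ) : ℝ) = (β * n - p) + (β * n' - p') := by
      push_cast; ring
    rw [e]
    exact (abs_add_le _ _).trans_lt (by linarith)
  · have e : β * ((a + a' : ℤ) : ℝ) - ((q + q' : ℤ) : ℝ) = (β * a - q) + (β * a' - q') := by
      push_cast; ring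
    rw [e]
    exact (abs_add_le _ _).trans_lt (by linarith)
  · have e : β * ((n + n' : ℤ) : ℝ) * ((a + a' : ℤ) : ℝ) - (y₁ + y₂) -
        ((r + r' + n * q' + a * p' : ℤ) : ℝ) = (β * n * a - y₁ - r) + (β * n' * a' - y₂ - r') +
        (n * (β * a' - q') + a * (β * n' - p')) := by
      push_cast; ring
    rw [e]
    have t1 : |(n : ℝ) * (β * a' - q')| ≤ |(n : ℝ)| * η := by
      rw [abs_mul]; gcongr
    have t2 : |(a : ℝ) * (β * n' - p')| ≤ |(a : ℝ)| * η := by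
      rw [abs_mul]; gcongr
    have s1 := abs_add_le ((n : ℝ) * (β * a' - q')) (a * (β * n' - p'))
    have s2 := abs_add_le (β * n * a - y₁ - r) (β * n' * a' - y₂ - r')
    refine (abs_add_le _ _).trans_lt ?_
    nlinarith

theorem lim_mul {α β y : ℝ} (h : Lim α β y) (k : ℕ) : Lim α β ((k + 1 : ℝ) * y) := by
  induction k with
  | zero => simpa using h
  | succ k ih =>
    have := lim_add ih h
    convert this using 1
    push_cast
    ring

theorem lim_zero (α β : ℝ) : Lim α β 0 := by
  obtain ⟨y, hy⟩ := exists_lim α β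
  intro δ hδ K
  obtain ⟨k, hk, s, -, -, hs, -, -⟩ := recur3 y 0 0 (δ / 2) (by positivity) 0
  obtain ⟨j, hj⟩ : ∃ j : ℕ, k = j + 1 := ⟨(k - 1).toNat, by push_cast at hk; omega⟩
  obtain ⟨n, a, p, q, r, hn, ha, hp, hq, hr⟩ := lim_mul hy j (δ / 2) (by positivity) K
  refine ⟨n, a, p, q, r + s, hn, by linarith, by linarith, by linarith, ?_⟩
  have e : β * n * a - 0 - ((r + s : ℤ) : ℝ) = (β * n * a - (j + 1 : ℝ) * y - r) + (y * k - s) := by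
    rw [hj]; push_cast; ring
  rw [e]
  exact (abs_add_le _ _).trans_lt (by linarith)

theorem not_half {x : ℝ} (hx : (∃ b : ℤ, x = (b : ℝ)) ∨ Irrational x) (k : ℤ) :
    |x * k - round (x * k)| < 1 / 2 := by
  rcases hx with ⟨b, rfl⟩ | hx
  · have : ((b : ℝ) * k) = ((b * k : ℤ) : ℝ) := by push_cast; ring
    rw [this, round_intCast]
    norm_num
  · rcases eq_or_ne k 0 with rfl | hk
    · norm_num
    · refine lt_of_le_of_ne (abs_sub_round _) ?_
      intro h
      have hi : Irrational (x * k) := hx.mul_intCast hk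
      apply hi
      rcases abs_cases (x * k - round (x * k)) with ⟨h', _⟩ | ⟨h', _⟩
      · refine ⟨round (x * k) + 1 / 2, ?_⟩
        push_cast
        linarith
      · refine ⟨round (x * k) - 1 / 2, ?_⟩
        push_cast
        linarith

theorem near_half {α : ℝ} (hα : Irrational α) (k : ℕ) :
    ∃ δ : ℝ, 0 < δ ∧ ∀ m : ℤ, 0 < m → m ≤ k → |α * m - round (α * m)| ≤ 1 / 2 - δ := by
  induction k with
  | zero => exact ⟨1, one_pos, fun m h1 h2 => by push_cast at h2; omega⟩
  | succ k ih =>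
    obtain ⟨δ, hδ, h⟩ := ih
    have hh := not_half (Or.inr hα) ((k : ℤ) + 1)
    refine ⟨min δ (1 / 2 - |α * ((k + 1 : ℤ) : ℝ) - round (α * ((k + 1 : ℤ) : ℝ))|),
      lt_min hδ (by linarith), fun m h1 h2 => ?_⟩
    push_cast at h2
    rcases eq_or_lt_of_le h2 with rfl | h2
    · linarith [min_le_right δ (1 / 2 - |α * ((k + 1 : ℤ) : ℝ) - round (α * ((k + 1 : ℤ) : ℝ))|)]
    · linarith [h m h1 (by omega),
        min_le_left δ (1 / 2 - |α * ((k + 1 : ℤ) : ℝ) - round (α * ((k + 1 : ℤ) : ℝ))|)]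

theorem dense_pos {α : ℝ} (hα : Irrational α) (t δ : ℝ) (hδ : 0 < δ) (K : ℕ) :
    ∃ n k : ℤ, (K : ℤ) < n ∧ |α * n - k - t| < δ := by
  have hd : Dense (AddSubgroup.closure {α, 1} : Set ℝ) := by
    rw [dense_addSubgroupClosure_pair_iff]
    simpa using hα
  obtain ⟨x, hx, hxt⟩ := hd.exists_dist_lt t (half_pos hδ)
  rw [SetLike.mem_coe, AddSubgroup.mem_closure_pair] at hx
  obtain ⟨n, k, rfl⟩ := hx
  obtain ⟨q, hq, p, -, -, hp, -, -⟩ := recur3 α 0 0 (δ / 2) (by positivity) (K + n.natAbs)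
  refine ⟨n + q, p - k, by omega, ?_⟩
  rw [dist_comm, Real.dist_eq] at hxt
  simp only [zsmul_eq_mul, mul_one] at hxt
  have e : α * ((n + q : ℤ) : ℝ) - ((p - k : ℤ) : ℝ) - t = (n * α + k - t) + (α * q - p) := by
    push_cast; ring
  rw [e]
  exact (abs_add_le _ _).trans_lt (by linarith)

theorem dense_round {α : ℝ} (hα : Irrational α) (t δ : ℝ) (hδ : 0 < δ) (h1 : t + δ ≤ 1 / 2)
    (h2 : -(1 / 2) ≤ t - δ) (K : ℕ) :
    ∃ n : ℤ, (K : ℤ) < n ∧ |α * n - round (α * n) - t| < δ := by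
  obtain ⟨n, k, hn, h⟩ := dense_pos hα t δ hδ K
  refine ⟨n, hn, ?_⟩
  rw [round_eq_of_abs (k := k)]
  · exact h
  · rw [abs_lt] at *
    constructor <;> linarith

theorem combin (K x y z : ℝ) (e01 e02 e12 e012 n0 m n2 : ℤ)
    (hx : |x| < 1 / 2) (hy : |y| < 1 / 2) (hz : |z| < 1 / 2)
    (h01 : |x + y - e01| < 1 / 2) (h02 : |x + z - e02| < 1 / 2) (h12 : |y + z - e12| < 1 / 2)
    (h012 : |x + y + z - e012| < 1 / 2) (hy0 : 0 < y) (hxy : 1 / 2 < x + y)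
    (hn0 : K < n0) (hn2 : K < n2) (hn0' : 0 < n0) (hm' : 0 < m) (hn2' : 0 < n2)
    (hm : K < m ∨ y ≤ x) :
    K < |(n2 : ℝ) * (e012 - e12 - e02) + m * (e012 - e01 - e12) + n0 * (e012 - e01 - e02)| := by
  rw [abs_lt] at *
  have E01 : e01 = 1 := by
    have a1 : (0 : ℝ) < e01 := by linarith
    have a2 : (e01 : ℝ) < 2 := by linarith
    norm_cast at a1 a2
    omega
  have E02 : e02 = 0 ∨ e02 = 1 := by
    have a1 : (-1 : ℝ) < e02 := by linarith
    have a2 : (e02 : ℝ) < 2 := by linarith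
    have a3 : (-1 : ℤ) < e02 := by exact_mod_cast a1
    norm_cast at a2
    omega
  have E12 : e12 = 0 ∨ e12 = 1 := by
    have a1 : (-1 : ℝ) < e12 := by linarith
    have a2 : (e12 : ℝ) < 2 := by linarith
    have a3 : (-1 : ℤ) < e12 := by exact_mod_cast a1
    norm_cast at a2
    omega
  have E012 : e012 = 0 ∨ e012 = 1 := by
    have a1 : (-1 : ℝ) < e012 := by linarith
    have a2 : (e012 : ℝ) < 2 := by linarith
    have a3 : (-1 : ℤ) < e012 := by exact_mod_cast a1
    norm_cast at a2
    omega
  have p0 : (0 : ℝ) < n0 := by exact_mod_cast hn0'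
  have p1 : (0 : ℝ) < m := by exact_mod_cast hm'
  have p2 : (0 : ℝ) < n2 := by exact_mod_cast hn2'
  subst E01
  rw [lt_abs]
  rcases E02 with rfl | rfl <;> rcases E12 with rfl | rfl <;> rcases E012 with rfl | rfl <;>
    push_cast at * <;> first
    | (left; linarith)
    | (right; linarith)
    | (exfalso; linarith)
    | (rcases hm with hm | hm
       · first | (left; linarith) | (right; linarith)
       · exfalso; linarith)

/-- The shift lemma used for the second assertion. -/
theorem shift {α β : ℝ} {g : ℤ → ℤ} (hg : ∀ n : ℤ, g n = round (β * n * round (α * n)))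
    (n a b : ℤ) (ha : |α * n - a| < 1 / 2) (hb : |β * n * a - b| < 1 / 2) :
    ∃ δ : ℝ, 0 < δ ∧ ∀ η ≤ δ, ∀ (K : ℕ) (n' a' p q r : ℤ), Rec α β 0 η K n' a' p q r →
      g (n + n') = b + r + n * q + a * p := by
  have hB : (1 : ℝ) ≤ 1 + |(n : ℝ)| + |(a : ℝ)| := by
    linarith [abs_nonneg (n : ℝ), abs_nonneg (a : ℝ)]
  have hB0 : (0 : ℝ) < 1 + |(n : ℝ)| + |(a : ℝ)| := by linarith
  refine ⟨min (1 / 2 - |α * n - a|) ((1 / 2 - |β * n * a - b|) / (1 + |(n : ℝ)| + |(a : ℝ)|)),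
    lt_min (by linarith) (div_pos (by linarith) hB0), ?_⟩
  rintro η hη K n' a' p q r ⟨-, h1, h2, h3, h4⟩
  have hη1 := hη.trans (min_le_left _ _)
  have hη2 := hη.trans (min_le_right _ _)
  rw [le_div_iff₀ hB0] at hη2
  rw [hg, round_eq_of_abs (x := α * ((n + n' : ℤ) : ℝ)) (k := a + a')]
  · apply round_eq_of_abs
    have e : β * ((n + n' : ℤ) : ℝ) * ((a + a' : ℤ) : ℝ) - ((b + r + n * q + a * p : ℤ) : ℝ) =
        (β * n * a - b) + (β * n' * a' - 0 - r) + (n * (β * a' - q) + a * (β * n' - p)) := by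
      push_cast; ring
    rw [e]
    have t1 : |(n : ℝ) * (β * a' - q)| ≤ |(n : ℝ)| * η := by
      rw [abs_mul]; gcongr
    have t2 : |(a : ℝ) * (β * n' - p)| ≤ |(a : ℝ)| * η := by
      rw [abs_mul]; gcongr
    have s1 := abs_add_le ((n : ℝ) * (β * a' - q)) (a * (β * n' - p))
    have s2 := abs_add_le (β * n * a - b) (β * n' * a' - 0 - r)
    refine (abs_add_le _ _).trans_lt ?_
    nlinarith
  · have e : α * ((n + n' : ℤ) : ℝ) - ((a + a' : ℤ) : ℝ) = (α * n - a) + (α * n' - a') := by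
      push_cast; ring
    rw [e]
    exact (abs_add_le _ _).trans_lt (by linarith)

theorem irr_of_ind {α : ℝ} (hind : LinearIndependent ℚ ![(1 : ℝ), α, α ^ 2]) : Irrational α := by
  rintro ⟨q, hq⟩
  rw [Fintype.linearIndependent_iff] at hind
  have := hind ![-q, 1, 0] (by simp [Fin.sum_univ_three, ← hq, Rat.smul_def]) 1
  simp at this

theorem part_b {α β : ℝ} (hα : Irrational α)
    (hβ' : (∃ b : ℤ, β = (b : ℝ)) ∨ Irrational β)
    (g : ℤ → ℤ) (hg : ∀ n : ℤ, g n = round (β * n * round (α * n))) (C : ℝ)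
    (N : ℤ) (hN : 0 < N) : ∃ ε : ℝ, 0 < ε ∧ ∀ m : ℤ, 0 < m →
          |α * m - round (α * m)| < ε → psi C g m N := by
  obtain ⟨ε, hε, hnear⟩ := near_half hα N.toNat
  refine ⟨ε, hε, fun m hm hmε n hn hnN => ?_⟩
  have hx := hnear n hn (by omega)
  set a0 := round (α * n) with ha0
  set a1 := round (α * m) with ha1
  have hB : ∀ k l : ℤ, |β * k * l - round (β * k * l)| < 1 / 2 := by
    intro k l
    have := not_half hβ' (k * l)
    rwa [Int.cast_mul, ← mul_assoc] at this
  have h01 : |α * ((n + m : ℤ) : ℝ) - ((a0 + a1 : ℤ) : ℝ)| < 1 / 2 := by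
    have e : α * ((n + m : ℤ) : ℝ) - ((a0 + a1 : ℤ) : ℝ) = (α * n - a0) + (α * m - a1) := by
      push_cast; ring
    rw [e]
    exact (abs_add_le _ _).trans_lt (by linarith)
  have g0 : g 0 = 0 := by rw [hg]; simp
  have gn : g n = round (β * n * a0) := hg n
  have gm : g m = round (β * m * a1) := hg m
  have gnm : g (n + m) = round (β * ((n + m : ℤ) : ℝ) * ((a0 + a1 : ℤ) : ℝ)) := by
    rw [hg, round_eq_of_abs h01]
  have hm2 : |α * m - a1| < 1 / 2 := not_half (Or.inr hα) m
  obtain ⟨d1, hd1, H1⟩ := shift hg 0 0 0 (by norm_num) (by norm_num)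
  obtain ⟨d2, hd2, H2⟩ := shift hg n a0 _ (by linarith) (hB n a0)
  obtain ⟨d3, hd3, H3⟩ := shift hg m a1 _ hm2 (hB m a1)
  obtain ⟨d4, hd4, H4⟩ := shift hg (n + m) (a0 + a1) _ h01 (hB _ _)
  obtain ⟨K, hK⟩ := exists_nat_ge (C * m)
  obtain ⟨n', a', p, q, r, hR⟩ := lim_zero α β (min (min d1 d2) (min d3 d4))
    (lt_min (lt_min hd1 hd2) (lt_min hd3 hd4)) K
  have E1 := H1 _ ((min_le_left _ _).trans (min_le_left _ _)) K n' a' p q r hR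
  have E2 := H2 _ ((min_le_left _ _).trans (min_le_right _ _)) K n' a' p q r hR
  have E3 := H3 _ ((min_le_right _ _).trans (min_le_left _ _)) K n' a' p q r hR
  have E4 := H4 _ ((min_le_right _ _).trans (min_le_right _ _)) K n' a' p q r hR
  have hKn := hR.1
  refine ⟨n', by omega, ?_, ?_⟩
  · have : (K : ℝ) < n' := by exact_mod_cast hKn
    linarith
  · simp only [zero_add] at E1
    rw [← gn] at E2
    rw [← gm] at E3
    rw [← gnm] at E4
    rw [Δ2, E4, E3, E1, add_comm n' n, E2, g0]
    ring

/-- Vanishing of the second derivative forces the main term to be small. -/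
theorem main_small {α β : ℝ} (hβ : 0 < β) (g : ℤ → ℤ)
    (hg : ∀ n : ℤ, g n = round (β * n * round (α * n))) (n0 n1 n2 : ℤ)
    (h : Δ2 g n0 n1 n2 = 0) (e01 e02 e12 e012 : ℤ)
    (h01 : round (α * ((n0 + n1 : ℤ) : ℝ)) = round (α * n0) + round (α * n1) + e01)
    (h02 : round (α * ((n2 + n0 : ℤ) : ℝ)) = round (α * n0) + round (α * n2) + e02)
    (h12 : round (α * ((n1 + n2 : ℤ) : ℝ)) = round (α * n1) + round (α * n2) + e12)
    (h012 : round (α * ((n0 + n1 + n2 : ℤ) : ℝ)) =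
      round (α * n0) + round (α * n1) + round (α * n2) + e012) :
    |(n2 : ℝ) * (e012 - e12 - e02) + n1 * (e012 - e01 - e12) + n0 * (e012 - e01 - e02)|
      ≤ 4 / β := by
  have g0 : g 0 = 0 := by rw [hg]; simp
  have hr : ∀ n : ℤ, |β * n * round (α * n) - g n| ≤ 1 / 2 := by
    intro n
    rw [hg]
    exact abs_sub_round _
  have b0 := hr n0
  have b1 := hr n1
  have b2 := hr n2
  have b01 := hr (n0 + n1)
  have b02 := hr (n2 + n0)
  have b12 := hr (n1 + n2)
  have b012 := hr (n0 + n1 + n2)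
  rw [h01] at b01
  rw [h02] at b02
  rw [h12] at b12
  rw [h012] at b012
  have hz : (g (n0 + n1 + n2) : ℝ) - g (n0 + n1) - g (n1 + n2) - g (n2 + n0)
    + g n0 + g n1 + g n2 = 0 := by
    rw [Δ2, g0] at h
    have := congrArg (Int.cast : ℤ → ℝ) h
    push_cast at this
    linarith
  rw [le_div_iff₀ hβ]
  nth_rewrite 1 [← abs_of_pos hβ]
  rw [← abs_mul]
  push_cast at *
  rw [abs_le] at *
  constructor <;> linarith

theorem irr_round_add {α : ℝ} (hα : Irrational α) (n a : ℤ) :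
    |α * n - a - ((round (α * n) - a : ℤ) : ℝ)| < 1 / 2 := by
  have := not_half (Or.inr hα) n
  push_cast
  convert this using 2
  ring

theorem part_a {α β : ℝ} (hα : Irrational α) (hβ : 0 < β)
    (g : ℤ → ℤ) (hg : ∀ n : ℤ, g n = round (β * n * round (α * n)))
    (ε : ℝ) (hε : 0 < ε) : ∃ N : ℤ, 0 < N ∧ ∀ m : ℤ, 0 < m → psi (4 / β + 1) g m N →
          |α * m - round (α * m)| < ε := by
  have hK0 : 0 < 4 / β := by positivity
  obtain ⟨k, hk⟩ := exists_nat_ge (4 / β)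
  obtain ⟨δ, hδ, hnear⟩ := near_half hα k
  have hη0 : 0 < min (min ε δ) (1 / 2) := lt_min (lt_min hε hδ) (by norm_num)
  have hη1 : min (min ε δ) (1 / 2) ≤ ε := (min_le_left _ _).trans (min_le_left _ _)
  have hη2 : min (min ε δ) (1 / 2) ≤ δ := (min_le_left _ _).trans (min_le_right _ _)
  have hη3 : min (min ε δ) (1 / 2) ≤ 1 / 2 := min_le_right _ _
  generalize min (min ε δ) (1 / 2) = η at *
  obtain ⟨n, hn, hnx⟩ := dense_round hα (1 / 2 - η / 2) (η / 2) (by positivity)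
    (by linarith) (by linarith) k
  obtain ⟨n', hn', hnx'⟩ := dense_round hα (-(1 / 2 - η / 2)) (η / 2) (by positivity)
    (by linarith) (by linarith) k
  refine ⟨max n n', lt_max_of_lt_left (by omega), fun m hm hpsi => ?_⟩
  by_contra! hge
  have hmK : 4 / β < m ∨ |α * m - round (α * m)| ≤ 1 / 2 - δ := by
    by_cases h : m ≤ k
    · exact Or.inr (hnear m hm h)
    · left
      have : (k : ℝ) < m := by exact_mod_cast not_le.mp h
      linarith
  have hm1 : (1 : ℝ) ≤ m := by exact_mod_cast hm
  have gen : ∀ n0 : ℤ, (k : ℤ) < n0 → n0 ≤ max n n' → ∃ n2 : ℤ, 4 / β < (n2 : ℝ) ∧ 0 < n2 ∧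
      4 / β < (n0 : ℝ) ∧ 0 < n0 ∧ Δ2 g n0 m n2 = 0 := by
    intro n0 h1 h2
    obtain ⟨n2, h3, h4, h5⟩ := hpsi n0 (by omega) h2
    refine ⟨n2, ?_, h3, ?_, by omega, h5⟩
    · nlinarith
    · have : (k : ℝ) < n0 := by exact_mod_cast h1
      linarith
  have half := not_half (Or.inr hα)
  have conn : ∀ n0 n2 : ℤ, Δ2 g n0 m n2 = 0 → ∃ e01 e02 e12 e012 : ℤ,
      |(n2 : ℝ) * (e012 - e12 - e02) + m * (e012 - e01 - e12) + n0 * (e012 - e01 - e02)|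
      ≤ 4 / β ∧ |(α * n0 - round (α * n0)) + (α * m - round (α * m)) - e01| < 1 / 2
      ∧ |(α * n0 - round (α * n0)) + (α * n2 - round (α * n2)) - e02| < 1 / 2
      ∧ |(α * m - round (α * m)) + (α * n2 - round (α * n2)) - e12| < 1 / 2
      ∧ |(α * n0 - round (α * n0)) + (α * m - round (α * m)) + (α * n2 - round (α * n2)) - e012|
        < 1 / 2 := by
    intro n0 n2 h
    refine ⟨_, _, _, _, main_small hβ g hg n0 m n2 h
      (round (α * ((n0 + m : ℤ) : ℝ)) - (round (α * n0) + round (α * m)))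
      (round (α * ((n2 + n0 : ℤ) : ℝ)) - (round (α * n0) + round (α * n2)))
      (round (α * ((m + n2 : ℤ) : ℝ)) - (round (α * m) + round (α * n2)))
      (round (α * ((n0 + m + n2 : ℤ) : ℝ)) - (round (α * n0) + round (α * m) + round (α * n2)))
      (by ring) (by ring) (by ring) (by ring), ?_, ?_, ?_, ?_⟩
    · convert half (n0 + m) using 2
      push_cast; ring
    · convert half (n2 + n0) using 2
      push_cast; ring
    · convert half (m + n2) using 2
      push_cast; ring
    · convert half (n0 + m + n2) using 2
      push_cast; ring
  rcases le_abs.mp hge with hy | hy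
  · obtain ⟨n2, c1, c2, c3, c4, c5⟩ := gen n hn (le_max_left _ _)
    obtain ⟨e01, e02, e12, e012, s, t1, t2, t3, t4⟩ := conn n n2 c5
    have hxx := abs_lt.mp hnx
    refine absurd s (not_le.mpr (combin (4 / β) _ _ _ e01 e02 e12 e012 n m n2 (half n) (half m)
      (half n2) t1 t2 t3 t4 (by linarith) (by linarith) c3 c1 c4 hm c2 ?_))
    rcases hmK with h | h
    · exact Or.inl h
    · exact Or.inr (by linarith [le_abs_self (α * m - round (α * m))])
  · obtain ⟨n2, c1, c2, c3, c4, c5⟩ := gen n' hn' (le_max_right _ _)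
    obtain ⟨e01, e02, e12, e012, s, t1, t2, t3, t4⟩ := conn n' n2 c5
    have hxx := abs_lt.mp hnx'
    have neg : ∀ {u v c : ℝ}, |u| < c → v = -u → |v| < c := by
      rintro u v c h rfl
      rwa [abs_neg]
    have hf := combin (4 / β) (-(α * n' - round (α * n'))) (-(α * m - round (α * m)))
      (-(α * n2 - round (α * n2))) (-e01) (-e02) (-e12) (-e012) n' m n2
      (neg (half n') rfl) (neg (half m) rfl) (neg (half n2) rfl)
      (neg t1 (by push_cast; ring)) (neg t2 (by push_cast; ring)) (neg t3 (by push_cast; ring))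
      (neg t4 (by push_cast; ring)) (by linarith) (by linarith) c3 c1 c4 hm c2 (by
        rcases hmK with h | h
        · exact Or.inl h
        · exact Or.inr (by linarith [neg_le_abs (α * m - round (α * m))]))
    refine absurd s (not_le.mpr (lt_of_lt_of_eq hf ?_))
    rw [← abs_neg]
    congr 1
    push_cast
    ring

theorem characterization (α β : ℝ) (hα : 0 < α) (hβ : 0 < β)
    (hind : LinearIndependent ℚ ![(1 : ℝ), α, α ^ 2])
    (hβ' : (∃ b : ℤ, β = (b : ℝ)) ∨ Irrational β)
    (g : ℤ → ℤ) (hg : ∀ n : ℤ, g n = round (β * n * round (α * n))) :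
    ∃ C : ℝ, 1 ≤ C ∧
      ((∀ ε : ℝ, 0 < ε → ∃ N : ℤ, 0 < N ∧ ∀ m : ℤ, 0 < m → psi C g m N →
          |α * m - round (α * m)| < ε) ∧
        (∀ N : ℤ, 0 < N → ∃ ε : ℝ, 0 < ε ∧ ∀ m : ℤ, 0 < m →
          |α * m - round (α * m)| < ε → psi C g m N)) := by
  have hirr := irr_of_ind hind
  refine ⟨4 / β + 1, by linarith [show 0 < 4 / β by positivity], ?_, ?_⟩
  · exact fun ε hε => part_a hirr hβ g hg ε hε
  · exact fun N hN => part_b hirr hβ' g hg _ N hN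

end Stmt7
end

section
/- There exists a real constant C ≥ 1 such that for all positive integers n, n' the following are equivalent: (1) δ_C(n, n') holds; (2) there exists a positive integer t such that n' = t·n and ⌊α·n'⌉ = t·⌊α·n⌉. -/
/-!
STATEMENT 11: δ_C(n, n') holds if and only if n' = t·n and ⌊α·n'⌉ = t·⌊α·n⌉ for
some positive integer t.
-/

namespace Stmt11

/-- The symmetric discrete derivative `Δ∘g(n, m) = g(n+m) − g(n) − g(m) + g(0)`. -/
def Δo (g : ℤ → ℤ) (n m : ℤ) : ℤ := g (n + m) - g n - g m + g 0

/-- The second symmetric discrete derivative. -/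
def Δ2 (g : ℤ → ℤ) (n₀ n₁ n₂ : ℤ) : ℤ :=
  g (n₀ + n₁ + n₂) - g (n₀ + n₁) - g (n₁ + n₂) - g (n₂ + n₀)
    + g n₀ + g n₁ + g n₂ - g 0

/-- `μ_C(n₀, n₁)`: there is a positive integer `n₂ ≥ C·n₁` with `Δ²g(n₀,n₁,n₂) = 0`. -/
def mu (C : ℝ) (g : ℤ → ℤ) (n₀ n₁ : ℤ) : Prop :=
  ∃ n₂ : ℤ, 0 < n₂ ∧ C * n₁ ≤ (n₂ : ℝ) ∧ Δ2 g n₀ n₁ n₂ = 0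

/-- `ψ_C(m, N)`: `μ_C(n, m)` holds for every positive integer `n ≤ N`. -/
def psi (C : ℝ) (g : ℤ → ℤ) (m N : ℤ) : Prop :=
  ∀ n : ℤ, 0 < n → n ≤ N → mu C g n m

/-- `δ_C(n, n')`. -/
def delta (C : ℝ) (g : ℤ → ℤ) (n n' : ℤ) : Prop :=
  ∃ H : ℤ, 0 < H ∧ ∀ M' : ℤ, 0 < M' → ∃ M : ℤ, 0 < M ∧
    ∀ m : ℤ, 0 < m → psi C g m M → ∃ m' : ℤ, 0 < m' ∧ psi C g m' M' ∧
      |Δo g n m' - Δo g n' m| ≤ H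


theorem round_eq_of {u : ℝ} {k : ℤ} (h : |u - k| < 1/2) : round u = k := by
  rw [round_eq, Int.floor_eq_iff]
  rw [abs_lt] at h
  constructor <;> linarith [h.1, h.2]

/-- one-dimensional Kronecker -/
theorem kron {θ : ℝ} (hθ : Irrational θ) (N : ℤ) (y ε : ℝ) (hε : 0 < ε) :
    ∃ n : ℤ, N ≤ n ∧ ∃ k : ℤ, |θ * n - k - y| < ε := by
  obtain ⟨Q, hQ⟩ := exists_nat_one_div_lt hε
  obtain ⟨j, d, hd, hdn, hjd⟩ := Real.exists_int_int_abs_mul_sub_le θ (n := Q+1) (by omega)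
  have hz : (d:ℝ) * θ - j ≠ 0 := by
    have := (hθ.intCast_mul hd.ne').sub_intCast j
    exact this.ne_zero
  set z := (d:ℝ) * θ - j with hzdef
  have hzε : |z| < ε := by
    refine lt_of_le_of_lt hjd (lt_of_le_of_lt ?_ hQ)
    push_cast
    apply one_div_le_one_div_of_le <;> linarith [(Nat.cast_nonneg Q : (0:ℝ) ≤ Q)]
  -- find integer L with (y+L)/z ≥ |N| + 1
  obtain ⟨L, hL⟩ : ∃ L : ℤ, (|N| + 1 : ℝ) ≤ (y + L) / z := by
    rcases lt_or_gt_of_ne hz with h | h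
    · refine ⟨⌊(|N| + 1 : ℝ) * z - y⌋, ?_⟩
      rw [le_div_iff_of_neg h]
      linarith [Int.floor_le ((|N| + 1 : ℝ) * z - y)]
    · refine ⟨⌈(|N| + 1 : ℝ) * z - y⌉, ?_⟩
      rw [le_div_iff₀ h]
      linarith [Int.le_ceil ((|N| + 1 : ℝ) * z - y)]
  set i := ⌊(y + L) / z⌋ with hi
  have hi1 : |N| + 1 ≤ i := by
    rw [hi, Int.le_floor]; push_cast at hL ⊢; exact hL
  refine ⟨i * d, ?_, i * j + L, ?_⟩
  · have := le_abs_self N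
    nlinarith [abs_nonneg N]
  · have h1 := Int.floor_le ((y + L) / z)
    have h2 := Int.lt_floor_add_one ((y + L) / z)
    rw [← hi] at h1 h2
    have e : θ * ((i * d : ℤ) : ℝ) - ((i * j + L : ℤ) : ℝ) - y = (i - (y+L)/z) * z := by
      push_cast
      rw [sub_mul, div_mul_cancel₀ _ hz, hzdef]; ring
    rw [e, abs_mul]
    have : |(i:ℝ) - (y+L)/z| ≤ 1 := by rw [abs_le]; constructor <;> linarith
    nlinarith [abs_nonneg z]

theorem lin {α σ ε : ℝ} (hα : Irrational α) (hε : 0 < ε)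
    (h : ∀ m q : ℤ, 0 < m → |α * m - q| < ε → ∃ p : ℤ, |σ * m - p| < 1/8) :
    ∃ c0 c1 c2 : ℤ, c2 ≠ 0 ∧ (c0:ℝ) + c1 * α + c2 * σ = 0 := by
  obtain ⟨m1, hm1, q1, h1⟩ := kron hα 1 (ε/2) (ε/2) (by linarith)
  obtain ⟨m2, hm2, q2, h2⟩ := kron hα 1 (-ε/2) (ε/2) (by linarith)
  rw [abs_lt] at h1 h2
  set x1 := α * m1 - q1 with hx1
  set x2 := α * m2 - q2 with hx2
  have p1 : 0 < x1 := by linarith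
  have p1' : x1 < ε := by linarith
  have p2 : x2 < 0 := by linarith
  have p2' : -ε < x2 := by linarith
  obtain ⟨r1, hr1⟩ := h m1 q1 (by omega) (by rw [abs_lt]; constructor <;> linarith)
  obtain ⟨r2, hr2⟩ := h m2 q2 (by omega) (by rw [abs_lt]; constructor <;> linarith)
  set f1 := σ * m1 - r1 with hf1
  set f2 := σ * m2 - r2 with hf2
  have walk : ∀ k : ℕ, ∃ i j : ℕ, i + j = k ∧ |i * x1 + j * x2| < ε ∧ |i * f1 + j * f2| < 1/8 := by
    intro k
    induction k with
    | zero => exact ⟨0, 0, rfl, by simpa using hε, by norm_num⟩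
    | succ k ih =>
      obtain ⟨i, j, hij, hx, hf⟩ := ih
      have step : ∀ i' j' : ℕ, i' + j' = k + 1 → |i' * x1 + j' * x2| < ε →
          |(i' * f1 + j' * f2) - (i * f1 + j * f2)| < 1/8 → |i' * f1 + j' * f2| < 1/8 := by
        intro i' j' hij' hx' hd
        obtain ⟨p, hp⟩ := h (i' * m1 + j' * m2) (i' * q1 + j' * q2)
          (by rcases Nat.eq_zero_or_pos i' with h0 | h0
              · have : 0 < j' := by omega
                have : (0:ℤ) < j' * m2 := by apply mul_pos <;> omega
                have : (0:ℤ) ≤ i' * m1 := by apply mul_nonneg <;> omega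
                omega
              · have : (0:ℤ) < i' * m1 := by apply mul_pos <;> omega
                have : (0:ℤ) ≤ j' * m2 := by apply mul_nonneg <;> omega
                omega)
          (by convert hx' using 2; push_cast; rw [hx1, hx2]; ring)
        have e : σ * ((i' * m1 + j' * m2 : ℤ):ℝ) - p
            = (i' * f1 + j' * f2) - ((p - i' * r1 - j' * r2 : ℤ) : ℝ) := by
          push_cast; rw [hf1, hf2]; ring
        rw [e] at hp
        have : (p - i' * r1 - j' * r2 : ℤ) = 0 := by
          rw [abs_lt] at hp hf hd
          have a1 : ((p - i' * r1 - j' * r2 : ℤ) : ℝ) < 1 := by linarith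
          have a2 : (-1:ℝ) < ((p - i' * r1 - j' * r2 : ℤ) : ℝ) := by linarith
          have a1' : (p - i' * r1 - j' * r2 : ℤ) < 1 := by exact_mod_cast a1
          have a2' : -1 < (p - i' * r1 - j' * r2 : ℤ) := by exact_mod_cast a2
          omega
        rw [this] at hp
        simpa using hp
      rw [abs_lt] at hx
      rcases le_or_gt (i * x1 + j * x2) 0 with hs | hs
      · have hx' : |((i+1:ℕ):ℝ) * x1 + j * x2| < ε := by
          push_cast; rw [abs_lt]; constructor <;> linarith
        refine ⟨i + 1, j, by omega, hx', step _ _ (by omega) hx' ?_⟩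
        convert hr1 using 2; push_cast; ring
      · have hx' : |(i:ℝ) * x1 + ((j+1:ℕ):ℝ) * x2| < ε := by
          push_cast; rw [abs_lt]; constructor <;> linarith
        refine ⟨i, j + 1, by omega, hx', step _ _ (by omega) hx' ?_⟩
        convert hr2 using 2; push_cast; ring
  have key : x1 * f2 - f1 * x2 = 0 := by
    by_contra hne
    set c := |x1| + |x2| + ε * (|f1| + |f2|) with hc
    obtain ⟨k, hk⟩ := exists_nat_gt (c / |x1 * f2 - f1 * x2|)
    rw [div_lt_iff₀ (abs_pos.mpr hne)] at hk
    obtain ⟨i, j, hij, hx, hf⟩ := walk k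
    set X := i * x1 + j * x2
    set F := i * f1 + j * f2
    have e1 : (j:ℝ) * (x1 * f2 - f1 * x2) = x1 * F - f1 * X := by simp only [X, F]; ring
    have e2 : (i:ℝ) * (x1 * f2 - f1 * x2) = f2 * X - x2 * F := by simp only [X, F]; ring
    have b1 : (j:ℝ) * |x1 * f2 - f1 * x2| ≤ |x1| * |F| + |f1| * |X| := by
      rw [← Nat.abs_cast j, ← abs_mul, e1, ← abs_mul, ← abs_mul]; exact abs_sub _ _
    have b2 : (i:ℝ) * |x1 * f2 - f1 * x2| ≤ |f2| * |X| + |x2| * |F| := by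
      rw [← Nat.abs_cast i, ← abs_mul, e2, ← abs_mul, ← abs_mul]; exact abs_sub _ _
    have hk' : (k:ℝ) = i + j := by rw [← hij]; push_cast; ring
    rw [hk', add_mul] at hk
    have := mul_le_mul_of_nonneg_left hx.le (abs_nonneg f1)
    have := mul_le_mul_of_nonneg_left hx.le (abs_nonneg f2)
    have := mul_le_mul_of_nonneg_left hf.le (abs_nonneg x1)
    have := mul_le_mul_of_nonneg_left hf.le (abs_nonneg x2)
    have := abs_nonneg x1
    have := abs_nonneg x2
    linarith
  refine ⟨q1 * r2 - r1 * q2, m2 * r1 - m1 * r2, m1 * q2 - m2 * q1, ?_, ?_⟩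
  · have : ((m1 * q2 - m2 * q1 : ℤ) : ℝ) = m2 * x1 - m1 * x2 := by
      push_cast; rw [hx1, hx2]; ring
    have hm1' : (1:ℝ) ≤ m1 := by exact_mod_cast hm1
    have hm2' : (1:ℝ) ≤ m2 := by exact_mod_cast hm2
    have : (0:ℝ) < ((m1 * q2 - m2 * q1 : ℤ) : ℝ) := by rw [this]; nlinarith
    intro h0; rw [h0] at this; simp at this
  · push_cast
    rw [hx1, hx2, hf1, hf2] at key
    linarith

/-- recurrence, through van der Waerden -/
theorem recur (α β : ℝ) (N : ℤ) (η : ℝ) (hη : 0 < η) :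
    ∃ n R S P : ℤ, 0 < n ∧ N ≤ n ∧ |α * n - round (α * n)| < η ∧ |β * n - R| < η ∧
      |β * round (α * n) - S| < η ∧ |β * n * round (α * n) - P| < η := by
  obtain ⟨Q, hQ⟩ := exists_nat_gt (max 8 (8 / η))
  have hQ8 : (8:ℝ) < Q := lt_of_le_of_lt (le_max_left _ _) hQ
  have hQη : 8 / Q < η := by
    have := lt_of_le_of_lt (le_max_right _ _) hQ
    rw [div_lt_iff₀ hη] at this
    rw [div_lt_iff₀ (by linarith)]; linarith
  have hQ0 : (0:ℝ) < Q := by linarith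
  have col : ∀ y : ℝ, ⌊Q * Int.fract y⌋ ∈ Set.Icc (0:ℤ) Q := by
    intro y
    constructor
    · exact Int.floor_nonneg.mpr (mul_nonneg hQ0.le (Int.fract_nonneg _))
    · have : ⌊Q * Int.fract y⌋ < (Q:ℤ) := by
        rw [Int.floor_lt]; push_cast; nlinarith [Int.fract_lt_one y]
      exact this.le
  let c : ℝ → Set.Icc (0:ℤ) Q := fun y => ⟨⌊Q * Int.fract y⌋, col y⟩
  have hc : ∀ y y' : ℝ, c y = c y' → |Int.fract y - Int.fract y'| < 1 / Q := by
    intro y y' h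
    have h' : ⌊Q * Int.fract y⌋ = ⌊Q * Int.fract y'⌋ := congrArg Subtype.val h
    have := Int.abs_sub_lt_one_of_floor_eq_floor h'
    rw [← mul_sub, abs_mul, abs_of_pos hQ0] at this
    rw [lt_div_iff₀ hQ0]; linarith
  have hc' : ∀ y y' : ℝ, c y = c y' → |(y - y') - ((⌊y⌋ - ⌊y'⌋ : ℤ) : ℝ)| < 1 / Q := by
    intro y y' h
    have := hc y y' h
    convert this using 2
    rw [Int.fract, Int.fract]; push_cast; ring
  let L : ℤ := |N| + 1
  let f : ℤ → ℝ := fun n => β * n * round (α * n)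
  obtain ⟨d0, hd0, b, col0, hcol⟩ := Combinatorics.exists_mono_homothetic_copy ({0, L, 2 * L} : Finset ℤ)
    (fun n : ℤ => (c (α * n + 1/2), c (β * n), c (β * round (α * n)), c (f n)))
  have k0 := hcol 0 (by simp)
  have k1 := (hcol L (by simp)).trans k0.symm
  have k2 := (hcol (2 * L) (by simp)).trans (hcol L (by simp)).symm
  clear hcol k0
  set d : ℤ := d0 * L with hd
  have hdpos : L ≤ d := by
    have : (1:ℤ) ≤ d0 := by exact_mod_cast hd0
    have : 0 < L := by positivity
    nlinarith
  have hL : N < L := by have := le_abs_self N; simp only [L]; omega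
  have hL0 : 0 < L := by positivity
  have E0 : d0 • (0:ℤ) + b = b := by simp
  have E1 : d0 • L + b = b + d := by simp [hd]; ring
  have E2 : d0 • (2 * L) + b = b + 2 * d := by simp [hd]; ring
  rw [E0, E1] at k1
  rw [E1, E2] at k2
  simp only [Prod.mk.injEq] at k1 k2
  obtain ⟨u1, v1, w1, z1⟩ := k1
  obtain ⟨u2, v2, w2, z2⟩ := k2
  replace u1 := hc' _ _ u1
  replace u2 := hc' _ _ u2
  replace v1 := hc' _ _ v1
  replace w1 := hc' _ _ w1
  replace z1 := hc' _ _ z1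
  replace z2 := hc' _ _ z2
  have hq : 1 / (Q:ℝ) < 1 / 8 := one_div_lt_one_div_of_lt (by norm_num) hQ8
  rw [← round_eq, ← round_eq] at u1 u2
  set a0 := round (α * b) with ha0
  set a1 := round (α * ((b + d : ℤ):ℝ)) with ha1
  set a2 := round (α * ((b + 2 * d : ℤ):ℝ)) with ha2
  have u1' : |α * d - ((a1 - a0 : ℤ) : ℝ)| < 1 / Q := by
    convert u1 using 2; push_cast; ring
  have u2' : |α * d - ((a2 - a1 : ℤ) : ℝ)| < 1 / Q := by
    convert u2 using 2; push_cast; ring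
  have r1 := round_eq_of (lt_trans u1' (by linarith))
  have r2 := round_eq_of (lt_trans u2' (by linarith))
  set a := round (α * d) with ha
  have r1' : a1 = a0 + a := by omega
  have r2' : a2 = a0 + 2 * a := by omega
  rw [← r1] at u1'
  have hq4 : 4 * (1 / (Q:ℝ)) < η := by
    have : 4 * (1 / (Q:ℝ)) ≤ 8 / Q := by rw [mul_one_div]; gcongr; norm_num
    linarith
  have r3 : round (α * ((2 * d : ℤ):ℝ)) = 2 * a := by
    apply round_eq_of
    have : α * ((2 * d : ℤ):ℝ) - ((2 * a : ℤ):ℝ) = 2 * (α * d - a) := by push_cast; ring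
    rw [this, abs_mul, abs_two]; linarith
  have hQ1 : 0 < 1 / (Q:ℝ) := by positivity
  refine ⟨2 * d, 2 * (⌊β * ((b + d : ℤ):ℝ)⌋ - ⌊β * (b:ℝ)⌋), 2 * (⌊β * (a1:ℝ)⌋ - ⌊β * (a0:ℝ)⌋),
    2 * ((⌊f (b + 2 * d)⌋ - ⌊f (b + d)⌋) - (⌊f (b + d)⌋ - ⌊f b⌋)), by omega, by omega, ?_, ?_, ?_, ?_⟩
  · rw [r3]
    have : α * ((2 * d : ℤ):ℝ) - ((2 * a : ℤ):ℝ) = 2 * (α * d - a) := by push_cast; ring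
    rw [this, abs_mul, abs_two]; linarith
  · rw [abs_lt] at v1 ⊢
    push_cast at v1 ⊢
    constructor <;> linarith [v1.1, v1.2]
  · rw [r3]
    rw [abs_lt] at w1 ⊢
    have e : (a1:ℝ) = a0 + a := by exact_mod_cast r1'
    push_cast at w1 ⊢
    generalize ⌊β * (a1:ℝ)⌋ = t1 at *
    rw [e] at w1
    constructor <;> linarith [w1.1, w1.2]
  · rw [r3]
    have e : f (b + 2 * d) - f (b + d) - (f (b + d) - f b) = 2 * (β * d * a) := by
      simp only [f]
      rw [← ha0, ← ha1, ← ha2, r1', r2']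
      push_cast; ring
    rw [abs_lt] at z1 z2 ⊢
    push_cast at z1 z2 ⊢
    constructor <;> linarith [z1.1, z1.2, z2.1, z2.2]

theorem xlt {α : ℝ} (hα : Irrational α) (n : ℤ) : |α * n - round (α * n)| < 1/2 := by
  refine lt_of_le_of_ne (abs_sub_round _) ?_
  intro h
  rcases eq_or_ne n 0 with rfl | hn
  · norm_num at h
  · have ir := (hα.mul_intCast hn).sub_intCast (round (α * n))
    rcases (abs_eq (by norm_num)).mp h with h | h
    · exact ir ⟨1/2, by rw [h]; norm_num⟩
    · exact ir ⟨-(1/2), by rw [h]; norm_num⟩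

theorem ylt {β : ℝ} (hβ' : (∃ b : ℤ, β = (b : ℝ)) ∨ Irrational β) (n : ℤ) :
    |β * n - round (β * n)| < 1/2 := by
  rcases hβ' with ⟨b, rfl⟩ | h
  · rw [← Int.cast_mul, round_intCast]; norm_num
  · exact xlt h n

/-- nearest-integer additivity without carry -/
theorem aadd {α : ℝ} {n m : ℤ}
    (h : |α * n - round (α * n)| + |α * m - round (α * m)| < 1/2) :
    round (α * ((n + m : ℤ) : ℝ)) = round (α * n) + round (α * m) := by
  apply round_eq_of
  refine lt_of_le_of_lt ?_ h
  refine le_trans (le_of_eq ?_) (abs_add_le _ _)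
  congr 1; push_cast; ring

theorem amul {α : ℝ} {m j : ℤ} (hj : 0 ≤ j)
    (h : j * |α * m - round (α * m)| < 1/2) :
    round (α * ((j * m : ℤ) : ℝ)) = j * round (α * m) := by
  apply round_eq_of
  have hj' : (0:ℝ) ≤ j := by exact_mod_cast hj
  have e : α * ((j * m : ℤ) : ℝ) - ((j * round (α * m) : ℤ) : ℝ) = j * (α * m - round (α * m)) := by
    push_cast; ring
  rw [e, abs_mul, abs_of_nonneg hj']
  exact h

theorem finT {α : ℝ} (hα : Irrational α) (K : ℕ) :
    ∃ T : ℝ, 0 < T ∧ T < 1/2 ∧ ∀ m : ℤ, 0 < m → m ≤ K → |α * m - round (α * m)| < T := by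
  induction K with
  | zero => exact ⟨1/4, by norm_num, by norm_num, fun m h1 h2 => by simp at h2; omega⟩
  | succ K ih =>
    obtain ⟨T, hT0, hT, h⟩ := ih
    obtain ⟨s, hs1, hs2⟩ := exists_between (max_lt hT (xlt hα ((K+1 : ℕ) : ℤ)))
    refine ⟨s, by linarith [le_max_left T (|α * ((K+1 : ℕ) : ℤ) - round (α * ((K+1 : ℕ) : ℤ))|)],
      hs2, fun m h1 h2 => ?_⟩
    rcases eq_or_ne m ((K+1 : ℕ) : ℤ) with rfl | hne
    · exact lt_of_le_of_lt (le_max_right _ _) hs1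
    · exact lt_trans (h m h1 (by push_cast at h2 hne; omega)) (lt_of_le_of_lt (le_max_left _ _) hs1)

/-- the carry table -/
theorem carry {x0 x1 x2 : ℝ} {e01 e02 e12 e : ℤ} (h0 : |x0| < 1/2) (h1 : |x1| < 1/2)
    (h2 : |x2| < 1/2) (h01 : |x0 + x1 - e01| < 1/2) (h02 : |x0 + x2 - e02| < 1/2)
    (h12 : |x1 + x2 - e12| < 1/2) (h : |x0 + x1 + x2 - e| < 1/2)
    (p0 : 0 < x0) (p1 : 0 < x1) (p : 1/2 < x0 + x1) :
    e01 = 1 ∧ ((e02 = 0 ∧ e12 = 0 ∧ e = 0) ∨ (e02 = 0 ∧ e12 = 0 ∧ e = 1) ∨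
      (e02 = 1 ∧ e12 = 0 ∧ e = 1) ∨ (e02 = 1 ∧ e12 = 1 ∧ e = 1) ∨
      (e02 = 0 ∧ e12 = 1 ∧ e = 1 ∧ x0 < x1)) := by
  rw [abs_lt] at *
  have t : ∀ (z : ℤ) (a b : ℤ), (a:ℝ) < z → (z:ℝ) < b → a < z ∧ z < b := by
    intro z a b h h'; exact ⟨by exact_mod_cast h, by exact_mod_cast h'⟩
  have a1 := t e01 0 2 (by push_cast; linarith) (by push_cast; linarith)
  have a2 := t e02 (-1) 2 (by push_cast; linarith) (by push_cast; linarith)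
  have a3 := t e12 (-1) 2 (by push_cast; linarith) (by push_cast; linarith)
  have a4 := t e (-1) 2 (by push_cast; linarith) (by push_cast; linarith)
  have b1 : e01 = 1 := by omega
  have b2 : e02 = 0 ∨ e02 = 1 := by omega
  have b3 : e12 = 0 ∨ e12 = 1 := by omega
  have b4 : e = 0 ∨ e = 1 := by omega
  clear a1 a2 a3 a4
  subst b1
  refine ⟨rfl, ?_⟩
  rcases b2 with rfl | rfl <;> rcases b3 with rfl | rfl <;> rcases b4 with rfl | rfl <;>
    push_cast at * <;> (try simp) <;> linarith

/-- combined lower bound of the third difference -/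
theorem big {x0 x1 x2 K : ℝ} {e01 e02 e12 e n0 n1 n2 : ℤ} (h0 : |x0| < 1/2) (h1 : |x1| < 1/2)
    (h2 : |x2| < 1/2) (h01 : |x0 + x1 - e01| < 1/2) (h02 : |x0 + x2 - e02| < 1/2)
    (h12 : |x1 + x2 - e12| < 1/2) (h : |x0 + x1 + x2 - e| < 1/2)
    (p0 : 0 < x0) (p1 : 0 < x1) (p : 1/2 < x0 + x1)
    (q0 : 0 < n0) (q1 : 0 < n1) (q2 : 0 < n2) (k0 : K ≤ n0) (k2 : K ≤ n2)
    (k1 : x0 < x1 → K ≤ n1) :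
    K ≤ |((n2 * (e - e12 - e02) + n1 * (e - e01 - e12) + n0 * (e - e01 - e02) : ℤ) : ℝ)| := by
  obtain ⟨rfl, h⟩ := carry h0 h1 h2 h01 h02 h12 h p0 p1 p
  have q0' : (0:ℝ) < n0 := by exact_mod_cast q0
  have q1' : (0:ℝ) < n1 := by exact_mod_cast q1
  have q2' : (0:ℝ) < n2 := by exact_mod_cast q2
  rcases h with ⟨rfl, rfl, rfl⟩ | ⟨rfl, rfl, rfl⟩ | ⟨rfl, rfl, rfl⟩ | ⟨rfl, rfl, rfl⟩ |
    ⟨rfl, rfl, rfl, hx⟩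
  · rw [le_abs]; right; push_cast; linarith
  · rw [le_abs]; left; push_cast; linarith
  · rw [le_abs]; right; push_cast; linarith
  · rw [le_abs]; right; push_cast; linarith
  · have := k1 hx
    rw [le_abs]; right; push_cast; linarith


theorem notmu {α β : ℝ} (hα : Irrational α) (hβ : 0 < β)
    (g : ℤ → ℤ) (hg : ∀ n : ℤ, g n = round (β * n * round (α * n))) {n0 n1 : ℤ}
    (q0 : 0 < n0) (q1 : 0 < n1) (k0 : 4 / β ≤ n0)
    (hs : (0 < α * n0 - round (α * n0) ∧ 0 < α * n1 - round (α * n1) ∧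
        1/2 < (α * n0 - round (α * n0)) + (α * n1 - round (α * n1))) ∨
      (α * n0 - round (α * n0) < 0 ∧ α * n1 - round (α * n1) < 0 ∧
        (α * n0 - round (α * n0)) + (α * n1 - round (α * n1)) < -(1/2)))
    (k1 : (n1 : ℝ) < 4 / β → |α * n1 - round (α * n1)| ≤ |α * n0 - round (α * n0)|) :
    ¬ mu (1 + 4 / β) g n0 n1 := by
  rintro ⟨n2, q2, hC, h0⟩
  have hb : 0 < 4 / β := by positivity
  have q1' : (1:ℝ) ≤ n1 := by exact_mod_cast q1
  have k2 : 4 / β ≤ n2 := by nlinarith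
  have G : ∀ n : ℤ, |β * ((n * round (α * n) : ℤ) : ℝ) - g n| ≤ 1/2 := by
    intro n; rw [hg]; push_cast; rw [← mul_assoc]; exact abs_sub_round _
  have g0 : g 0 = 0 := by rw [hg]; simp
  set a0 := round (α * n0) with ha0
  set a1 := round (α * n1) with ha1
  set a2 := round (α * n2) with ha2
  set e01 := round (α * ((n0 + n1 : ℤ):ℝ)) - a0 - a1 with he01
  set e12 := round (α * ((n1 + n2 : ℤ):ℝ)) - a1 - a2 with he12
  set e02 := round (α * ((n2 + n0 : ℤ):ℝ)) - a0 - a2 with he02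
  set e := round (α * ((n0 + n1 + n2 : ℤ):ℝ)) - a0 - a1 - a2 with he
  have f01 : round (α * ((n0 + n1 : ℤ):ℝ)) = a0 + a1 + e01 := by omega
  have f12 : round (α * ((n1 + n2 : ℤ):ℝ)) = a1 + a2 + e12 := by omega
  have f02 : round (α * ((n2 + n0 : ℤ):ℝ)) = a0 + a2 + e02 := by omega
  have f : round (α * ((n0 + n1 + n2 : ℤ):ℝ)) = a0 + a1 + a2 + e := by omega
  have X0 := xlt hα n0
  have X1 := xlt hα n1
  have X2 := xlt hα n2
  have X01 := xlt hα (n0 + n1)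
  have X12 := xlt hα (n1 + n2)
  have X02 := xlt hα (n2 + n0)
  have X := xlt hα (n0 + n1 + n2)
  have G0 := G n0
  have G1 := G n1
  have G2 := G n2
  have G01 := G (n0 + n1)
  have G12 := G (n1 + n2)
  have G02 := G (n2 + n0)
  have G012 := G (n0 + n1 + n2)
  rw [f01] at X01 G01
  rw [f12] at X12 G12
  rw [f02] at X02 G02
  rw [f] at X G012
  rw [← ha0] at X0 G0
  rw [← ha1] at X1 G1
  rw [← ha2] at X2 G2
  clear_value a0 a1 a2 e01 e12 e02 e
  have up : |β * ((n2 * (e - e12 - e02) + n1 * (e - e01 - e12) + n0 * (e - e01 - e02) : ℤ) : ℝ)|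
      ≤ 7/2 := by
    unfold Δ2 at h0
    rw [g0] at h0
    have h0' : (g (n0 + n1 + n2) : ℝ) - g (n0 + n1) - g (n1 + n2) - g (n2 + n0) + g n0 + g n1 + g n2
        = 0 := by exact_mod_cast (by linarith : g (n0 + n1 + n2) - g (n0 + n1) - g (n1 + n2) - g (n2 + n0) + g n0 + g n1 + g n2
        = 0)
    have e : β * ((n2 * (e - e12 - e02) + n1 * (e - e01 - e12) + n0 * (e - e01 - e02) : ℤ) : ℝ)
      = β * (((n0 + n1 + n2) * (a0 + a1 + a2 + e) : ℤ) : ℝ) - β * (((n0 + n1) * (a0 + a1 + e01) : ℤ) : ℝ)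
       - β * (((n1 + n2) * (a1 + a2 + e12) : ℤ) : ℝ) - β * (((n2 + n0) * (a0 + a2 + e02) : ℤ) : ℝ)
       + β * ((n0 * a0 : ℤ):ℝ) + β * ((n1 * a1 : ℤ):ℝ) + β * ((n2 * a2 : ℤ):ℝ) := by
      push_cast; ring
    rw [e]
    rw [abs_le] at *
    constructor <;> linarith
  rw [abs_mul, abs_of_pos hβ] at up
  have lo : 4 / β ≤ |((n2 * (e - e12 - e02) + n1 * (e - e01 - e12) + n0 * (e - e01 - e02) : ℤ) : ℝ)| := by
    rcases hs with ⟨s0, s1, s2⟩ | ⟨s0, s1, s2⟩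
    · refine big X0 X1 X2 (e01 := e01) (e02 := e02) (e12 := e12) (e := e) ?_ ?_ ?_ ?_ s0 s1 s2 q0 q1 q2 k0 k2 ?_
      · convert X01 using 2; push_cast; ring
      · convert X02 using 2; push_cast; ring
      · convert X12 using 2; push_cast; ring
      · convert X using 2; push_cast; ring
      · intro hx
        by_contra hlt
        have := k1 (not_le.mp hlt)
        rw [abs_of_pos s0, abs_of_pos s1] at this
        linarith
    · have hh := big (x0 := -(α * n0 - a0)) (x1 := -(α * n1 - a1)) (x2 := -(α * n2 - a2)) (K := 4 / β)
        (e01 := -e01) (e02 := -e02) (e12 := -e12) (e := -e) (n0 := n0) (n1 := n1) (n2 := n2)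
        (by rwa [abs_neg]) (by rwa [abs_neg]) (by rwa [abs_neg])
        (by rw [← abs_neg]; convert X01 using 2; push_cast; ring)
        (by rw [← abs_neg]; convert X02 using 2; push_cast; ring)
        (by rw [← abs_neg]; convert X12 using 2; push_cast; ring)
        (by rw [← abs_neg]; convert X using 2; push_cast; ring)
        (by linarith) (by linarith) (by linarith) q0 q1 q2 k0 k2
        (by intro hx
            by_contra hlt
            have := k1 (not_le.mp hlt)
            rw [abs_of_neg s0, abs_of_neg s1] at this
            linarith)
      rw [← abs_neg]
      convert hh using 2
      push_cast; ring
  rw [div_le_iff₀ hβ] at lo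
  linarith

theorem P1 {α β : ℝ} (hα : Irrational α) (hβ : 0 < β)
    (g : ℤ → ℤ) (hg : ∀ n : ℤ, g n = round (β * n * round (α * n))) (ε : ℝ) (hε : 0 < ε) :
    ∃ M : ℤ, 0 < M ∧ ∀ m : ℤ, 0 < m → psi (1 + 4 / β) g m M → |α * m - round (α * m)| < ε := by
  have hb : 0 < 4 / β := by positivity
  set K := ⌈4 / β⌉₊ with hK
  have hKb : 4 / β ≤ K := Nat.le_ceil _
  obtain ⟨T, hT0, hT, hTm⟩ := finT hα K
  set w := max T (1/2 - ε) with hw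
  have hw2 : w < 1/2 := max_lt hT (by linarith)
  have hwT : T ≤ w := le_max_left _ _
  have hwε : 1/2 - ε ≤ w := le_max_right _ _
  obtain ⟨n, hn, k, hk⟩ := kron hα (K + 1) ((w + 1/2)/2) ((1/2 - w)/2) (by linarith)
  obtain ⟨n', hn', k', hk'⟩ := kron hα (K + 1) (-((w + 1/2)/2)) ((1/2 - w)/2) (by linarith)
  rw [abs_lt] at hk hk'
  have r : round (α * n) = k := round_eq_of (by rw [abs_lt]; constructor <;> linarith)
  have r' : round (α * n') = k' := round_eq_of (by rw [abs_lt]; constructor <;> linarith)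
  have c : (K:ℝ) + 1 ≤ n := by exact_mod_cast hn
  have c' : (K:ℝ) + 1 ≤ n' := by exact_mod_cast hn'
  refine ⟨max n n', lt_max_of_lt_left (by omega), fun m hm hpsi => ?_⟩
  by_contra hge
  rw [not_lt] at hge
  have small : (m:ℝ) < 4 / β → |α * m - round (α * m)| < T := by
    intro h
    apply hTm m hm
    have : (m:ℝ) ≤ K := by linarith
    exact_mod_cast this
  rcases le_or_gt 0 (α * m - round (α * m)) with hs | hs
  · rw [abs_of_nonneg hs] at hge
    refine notmu hα hβ g hg (n0 := n) (by omega) hm (by linarith) (Or.inl ⟨?_, ?_, ?_⟩) ?_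
      (hpsi n (by omega) (le_max_left _ _))
    · rw [r]; linarith
    · linarith
    · rw [r]; linarith
    · intro h
      have := small h
      rw [r]; exact le_trans (by linarith) (le_abs_self _)
  · rw [abs_of_neg hs] at hge
    refine notmu hα hβ g hg (n0 := n') (by omega) hm (by linarith) (Or.inr ⟨?_, ?_, ?_⟩) ?_
      (hpsi n' (by omega) (le_max_right _ _))
    · rw [r']; linarith
    · linarith
    · rw [r']; linarith
    · intro h
      have := small h
      rw [r']; exact le_trans (by linarith) (neg_le_abs _)

/-- shift by a good return time -/
theorem shift {α β : ℝ} (hα : Irrational α) (hβ' : (∃ b : ℤ, β = (b : ℝ)) ∨ Irrational β)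
    (g : ℤ → ℤ) (hg : ∀ n : ℤ, g n = round (β * n * round (α * n))) (n : ℤ) :
    ∃ η : ℝ, 0 < η ∧ ∀ s R S P : ℤ, |α * s - round (α * s)| < η → |β * s - R| < η →
      |β * round (α * s) - S| < η → |β * s * round (α * s) - P| < η →
      g (n + s) = g n + P + n * S + round (α * n) * R := by
  have hx := xlt hα n
  have hy := ylt hβ' (n * round (α * n))
  set a := round (α * n) with ha
  have hgn : g n = round (β * ((n * a : ℤ) : ℝ)) := by rw [hg]; push_cast; rw [mul_assoc]
  rw [← hgn] at hy
  set y := |β * ((n * a : ℤ) : ℝ) - g n| with hydef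
  set D : ℝ := 1 + |(n:ℝ)| + |(a:ℝ)| with hD
  have hD0 : 0 < D := by positivity
  refine ⟨min (1/2 - |α * n - a|) ((1/2 - y) / D),
    lt_min (by linarith) (by apply div_pos <;> linarith), ?_⟩
  intro s R S P h1 h2 h3 h4
  have h1' := lt_of_lt_of_le h1 (min_le_left _ _)
  set η := min (1/2 - |α * n - a|) ((1/2 - y) / D)
  have hη : η ≤ (1/2 - y) / D := min_le_right _ _
  rw [le_div_iff₀ hD0] at hη
  have A : round (α * ((n + s : ℤ):ℝ)) = a + round (α * s) := aadd (by rw [← ha]; linarith)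
  rw [hg (n + s), A]
  set b := round (α * s)
  apply round_eq_of
  have e : β * ((n + s : ℤ):ℝ) * ((a + b : ℤ):ℝ) - ((g n + P + n * S + a * R : ℤ):ℝ)
      = (β * ((n * a : ℤ) : ℝ) - g n) + ((β * s * b - P) + n * (β * b - S) + a * (β * s - R)) := by
    push_cast; ring
  rw [e]
  have t1 : |(β * ((n * a : ℤ) : ℝ) - g n) + ((β * s * b - P) + n * (β * b - S) + a * (β * s - R))|
     ≤ y + (|β * s * b - P| + |(n:ℝ)| * |β * b - S| + |(a:ℝ)| * |β * s - R|) := by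
    rw [← abs_mul, ← abs_mul]
    refine (abs_add_le _ _).trans ?_
    gcongr
    exact abs_add_three _ _ _
  have t2 := mul_le_mul_of_nonneg_left h3.le (abs_nonneg (n:ℝ))
  have t3 := mul_le_mul_of_nonneg_left h2.le (abs_nonneg (a:ℝ))
  rw [hD] at hη
  linarith

theorem mu_of {α β : ℝ} (hα : Irrational α) (hβ' : (∃ b : ℤ, β = (b : ℝ)) ∨ Irrational β)
    (g : ℤ → ℤ) (hg : ∀ n : ℤ, g n = round (β * n * round (α * n))) (C : ℝ) (n m : ℤ)
    (h : |α * n - round (α * n)| + |α * m - round (α * m)| < 1/2) : mu C g n m := by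
  obtain ⟨η0, p0, h0⟩ := shift hα hβ' g hg 0
  obtain ⟨η1, p1, h1⟩ := shift hα hβ' g hg n
  obtain ⟨η2, p2, h2⟩ := shift hα hβ' g hg m
  obtain ⟨η3, p3, h3⟩ := shift hα hβ' g hg (n + m)
  obtain ⟨s, R, S, P, hs, hN, g1, g2, g3, g4⟩ := recur α β ⌈C * m⌉ (min (min η0 η1) (min η2 η3))
    (lt_min (lt_min p0 p1) (lt_min p2 p3))
  refine ⟨s, hs, (Int.le_ceil _).trans (by exact_mod_cast hN), ?_⟩
  simp only [lt_min_iff] at g1 g2 g3 g4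
  have E0 := h0 s R S P g1.1.1 g2.1.1 g3.1.1 g4.1.1
  have E1 := h1 s R S P g1.1.2 g2.1.2 g3.1.2 g4.1.2
  have E2 := h2 s R S P g1.2.1 g2.2.1 g3.2.1 g4.2.1
  have E3 := h3 s R S P g1.2.2 g2.2.2 g3.2.2 g4.2.2
  rw [aadd h] at E3
  have z : round (α * ((0:ℤ):ℝ)) = 0 := by simp
  rw [z, zero_add] at E0
  unfold Δ2
  rw [E3, E2, E0, add_comm s n, E1]
  ring

theorem P2 {α β : ℝ} (hα : Irrational α) (hβ' : (∃ b : ℤ, β = (b : ℝ)) ∨ Irrational β)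
    (g : ℤ → ℤ) (hg : ∀ n : ℤ, g n = round (β * n * round (α * n))) (C : ℝ) (M : ℤ) :
    ∃ ε : ℝ, 0 < ε ∧ ∀ m : ℤ, |α * m - round (α * m)| < ε → psi C g m M := by
  obtain ⟨T, hT0, hT, hTm⟩ := finT hα M.toNat
  refine ⟨1/2 - T, by linarith, fun m hm n hn hnM => mu_of hα hβ' g hg C n m ?_⟩
  have := hTm n hn (by omega)
  linarith

/-- first difference without carry -/
theorem dog {α β : ℝ}
    (g : ℤ → ℤ) (hg : ∀ n : ℤ, g n = round (β * n * round (α * n))) (n m : ℤ)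
    (h : |α * n - round (α * n)| + |α * m - round (α * m)| < 1/2) :
    |(Δo g n m : ℝ) - β * ((n * round (α * m) + m * round (α * n) : ℤ) : ℝ)| ≤ 3/2 := by
  have G : ∀ n : ℤ, |β * ((n * round (α * n) : ℤ) : ℝ) - g n| ≤ 1/2 := by
    intro n; rw [hg]; push_cast; rw [← mul_assoc]; exact abs_sub_round _
  have g0 : g 0 = 0 := by rw [hg]; simp
  have G1 := G n
  have G2 := G m
  have G3 := G (n + m)
  rw [aadd h] at G3
  unfold Δo
  rw [g0]
  push_cast at *
  rw [abs_le] at *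
  constructor <;> linarith

theorem dir2 {α β : ℝ} (hα : Irrational α) (hβ : 0 < β)
    (hβ' : (∃ b : ℤ, β = (b : ℝ)) ∨ Irrational β)
    (g : ℤ → ℤ) (hg : ∀ n : ℤ, g n = round (β * n * round (α * n))) (n t : ℤ) (ht : 0 < t)
    (hr : round (α * ((t * n : ℤ) : ℝ)) = t * round (α * n)) :
    delta (1 + 4 / β) g n (t * n) := by
  refine ⟨3, by norm_num, fun M' hM' => ?_⟩
  obtain ⟨ε', hε', h2⟩ := P2 hα hβ' g hg (1 + 4 / β) M'
  have ht' : (1:ℝ) ≤ t := by exact_mod_cast ht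
  set η := min ε' (min (1/2 - |α * n - round (α * n)|) (1/2 - |α * ((t * n : ℤ):ℝ) - round (α * ((t * n : ℤ):ℝ))|)) with hη
  have hη0 : 0 < η := lt_min hε' (lt_min (by linarith [xlt hα n]) (by linarith [xlt hα (t * n)]))
  have e1 : η ≤ ε' := min_le_left _ _
  have e2 : η ≤ 1/2 - |α * n - round (α * n)| := (min_le_right _ _).trans (min_le_left _ _)
  have e3 : η ≤ 1/2 - |α * ((t * n : ℤ):ℝ) - round (α * ((t * n : ℤ):ℝ))| :=
    (min_le_right _ _).trans (min_le_right _ _)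
  obtain ⟨M, hM, h1⟩ := P1 hα hβ g hg (η / t) (by positivity)
  refine ⟨M, hM, fun m hm hpsi => ?_⟩
  have hx := h1 m hm hpsi
  rw [lt_div_iff₀ (by linarith)] at hx
  have hxm : |α * m - round (α * m)| < η := by nlinarith [abs_nonneg (α * m - round (α * m))]
  have A : round (α * ((t * m : ℤ):ℝ)) = t * round (α * m) :=
    amul ht.le (by linarith [abs_nonneg (α * n - round (α * n))])
  have hX : |α * ((t * m : ℤ):ℝ) - round (α * ((t * m : ℤ):ℝ))| < η := by
    rw [A]
    have : α * ((t * m : ℤ):ℝ) - ((t * round (α * m) : ℤ):ℝ) = (α * m - round (α * m)) * t := by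
      push_cast; ring
    rw [this, abs_mul, abs_of_pos (by linarith : (0:ℝ) < t)]; exact hx
  refine ⟨t * m, by positivity, h2 _ (by linarith), ?_⟩
  have d1 := dog g hg n (t * m) (by linarith)
  have d2 := dog g hg (t * n) m (by linarith)
  rw [A] at d1
  rw [hr] at d2
  have : |((Δo g n (t * m) - Δo g (t * n) m : ℤ) : ℝ)| ≤ 3 := by
    push_cast at *
    rw [abs_le] at *
    constructor <;> linarith
  exact_mod_cast this

theorem dir1a {α β : ℝ} (hα : Irrational α) (hβ : 0 < β)
    (hβ' : (∃ b : ℤ, β = (b : ℝ)) ∨ Irrational β)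
    (g : ℤ → ℤ) (hg : ∀ n : ℤ, g n = round (β * n * round (α * n))) (n n' : ℤ)
    (hq : 0 < α * n + round (α * n))
    (h : delta (1 + 4 / β) g n n') :
    ∃ B : ℕ, ∀ ε' : ℝ, 0 < ε' → ∃ ε : ℝ, 0 < ε ∧ ∀ m : ℤ, 0 < m →
      |α * m - round (α * m)| < ε → ∃ k m' : ℤ, |k| ≤ B ∧
      |(α * n' + round (α * n')) / (α * n + round (α * n)) * m
        + k / (α * n + round (α * n)) - m'| < ε' := by
  obtain ⟨H, hH, h⟩ := h
  refine ⟨⌈((H:ℝ) + 3) / β⌉₊, fun ε' hε' => ?_⟩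
  set a := round (α * n) with ha
  set a' := round (α * n') with ha'
  set q := α * n + a with hqd
  have X := xlt hα n
  have X' := xlt hα n'
  rw [← ha] at X
  rw [← ha'] at X'
  set D : ℝ := 1 + |(n:ℝ)| + |(n':ℝ)| with hD
  have hD0 : 0 < D := by positivity
  set η := min (ε' * q / D) (min (1/2 - |α * n - a|) (1/2 - |α * n' - a'|)) with hη
  have hη0 : 0 < η := lt_min (by positivity) (lt_min (by linarith) (by linarith))
  have e1 : η ≤ ε' * q / D := min_le_left _ _
  have e2 : η ≤ 1/2 - |α * n - a| := (min_le_right _ _).trans (min_le_left _ _)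
  have e3 : η ≤ 1/2 - |α * n' - a'| := (min_le_right _ _).trans (min_le_right _ _)
  obtain ⟨M', hM', h1⟩ := P1 hα hβ g hg η hη0
  obtain ⟨M, hM, h⟩ := h M' hM'
  obtain ⟨ε, hε, h2⟩ := P2 hα hβ' g hg (1 + 4 / β) M
  refine ⟨min ε η, lt_min hε hη0, fun m hm hx => ?_⟩
  have hx1 := lt_of_lt_of_le hx (min_le_right _ _)
  obtain ⟨m', hm', hpsi', hd⟩ := h m hm (h2 m (lt_of_lt_of_le hx (min_le_left _ _)))
  have hx' := h1 m' hm' hpsi'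
  have d1 := dog g hg n m' (by rw [← ha]; linarith)
  have d2 := dog g hg n' m (by rw [← ha']; linarith)
  rw [← ha] at d1
  rw [← ha'] at d2
  set b := round (α * m)
  set b' := round (α * m')
  have hd' : |((Δo g n m' - Δo g n' m : ℤ) : ℝ)| ≤ H := by exact_mod_cast hd
  refine ⟨(n * b' + m' * a) - (n' * b + m * a'), m', ?_, ?_⟩
  · have : β * |(((n * b' + m' * a) - (n' * b + m * a') : ℤ):ℝ)| ≤ H + 3 := by
      rw [← abs_of_pos hβ, ← abs_mul]
      push_cast at *
      rw [abs_le] at *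
      constructor <;> linarith
    have h3 : |(((n * b' + m' * a) - (n' * b + m * a') : ℤ):ℝ)| ≤ (H + 3) / β := by
      rw [le_div_iff₀ hβ]; linarith
    have h4 := h3.trans (Nat.le_ceil _)
    exact_mod_cast h4
  · have e : (α * n' + a') / q * m + (((n * b' + m' * a) - (n' * b + m * a') : ℤ):ℝ) / q - m'
        = (n' * (α * m - b) - n * (α * m' - b')) / q := by
      rw [eq_div_iff hq.ne']
      have : ((α * n' + a') / q * m + (((n * b' + m' * a) - (n' * b + m * a') : ℤ):ℝ) / q - m') * q
        = (α * n' + a') * m + (((n * b' + m' * a) - (n' * b + m * a') : ℤ):ℝ) - m' * q := by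
        field_simp
      rw [this, hqd]; push_cast; ring
    rw [e, abs_div, abs_of_pos hq, div_lt_iff₀ hq]
    rw [le_div_iff₀ hD0] at e1
    have t : |n' * (α * m - b) - n * (α * m' - b')| ≤ |(n':ℝ)| * |α * m - b| + |(n:ℝ)| * |α * m' - b'| := by
      rw [← abs_mul, ← abs_mul]; exact abs_sub _ _
    have t2 := mul_le_mul_of_nonneg_left hx1.le (abs_nonneg (n':ℝ))
    have t3 := mul_le_mul_of_nonneg_left hx'.le (abs_nonneg (n:ℝ))
    rw [hD] at e1
    linarith

theorem lin3 {α : ℝ} (hind : LinearIndependent ℚ ![(1 : ℝ), α, α ^ 2]) (u v w : ℤ)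
    (h : (u:ℝ) + v * α + w * α ^ 2 = 0) : u = 0 ∧ v = 0 ∧ w = 0 := by
  rw [Fintype.linearIndependent_iff] at hind
  have := hind ![(u:ℚ), (v:ℚ), (w:ℚ)] (by
    simp [Fin.sum_univ_three, Rat.smul_def]
    linarith)
  have h0 := this 0
  have h1 := this 1
  have h2 := this 2
  simp at h0 h1 h2
  exact ⟨h0, h1, h2⟩

theorem irr_of {α : ℝ} (hind : LinearIndependent ℚ ![(1 : ℝ), α, α ^ 2]) : Irrational α := by
  rintro ⟨r, hr⟩
  have hd : (r.den : ℝ) ≠ 0 := by exact_mod_cast r.den_ne_zero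
  have := lin3 hind (-r.num) r.den 0 (by
    rw [← hr, Rat.cast_def]; push_cast; field_simp; ring)
  have := this.2.1
  exact r.den_ne_zero (by exact_mod_cast this)

theorem pigeon {α ρ q : ℝ} (B : ℕ)
    (h : ∀ ε' : ℝ, 0 < ε' → ∃ ε : ℝ, 0 < ε ∧ ∀ m : ℤ, 0 < m →
      |α * m - round (α * m)| < ε → ∃ k m' : ℤ, |k| ≤ B ∧ |ρ * m + k / q - m'| < ε') :
    ∃ (J : ℕ) (ε : ℝ), 0 < J ∧ 0 < ε ∧ ∀ m s : ℤ, 0 < m → |α * m - s| < ε →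
      ∃ p : ℤ, |(J * ρ) * m - p| < 1/8 := by
  set J := (2 * B + 1).factorial with hJ
  have hJ0 : 0 < J := Nat.factorial_pos _
  have hJ0' : (0:ℝ) < J := by exact_mod_cast hJ0
  obtain ⟨ε, hε, h⟩ := h (1 / (16 * J)) (by positivity)
  set W : ℝ := 2 * B + 2 with hW
  have hW0 : 0 < W := by positivity
  refine ⟨J, min ε (1/2) / W, hJ0, by positivity, fun m s hm hs => ?_⟩
  rw [lt_div_iff₀ hW0] at hs
  have hj : ∀ j : ℤ, 0 < j → j ≤ 2 * B + 2 → ∃ k m' : ℤ, |k| ≤ B ∧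
      |ρ * ((j * m : ℤ):ℝ) + k / q - m'| < 1 / (16 * J) := by
    intro j hj1 hj2
    have hj1' : (0:ℝ) < j := by exact_mod_cast hj1
    have hj2' : (j:ℝ) ≤ W := by rw [hW]; exact_mod_cast hj2
    have e : |α * ((j * m : ℤ) : ℝ) - ((j * s : ℤ):ℝ)| < min ε (1/2) := by
      have e : α * ((j * m : ℤ) : ℝ) - ((j * s : ℤ) : ℝ) = (α * m - s) * j := by
        push_cast; ring
      rw [e, abs_mul, abs_of_pos hj1']
      exact lt_of_le_of_lt (mul_le_mul_of_nonneg_left hj2' (abs_nonneg _)) hs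
    have r := round_eq_of (lt_of_lt_of_le e (min_le_right _ _))
    apply h (j * m) (by positivity)
    rw [r]
    exact lt_of_lt_of_le e (min_le_left _ _)
  choose! k m' hk hkm using hj
  obtain ⟨i, hi, j, hj, hij, hkk⟩ := Finset.exists_ne_map_eq_of_card_lt_of_maps_to
    (s := Finset.Icc (1:ℤ) (2 * B + 2)) (t := Finset.Icc (-(B:ℤ)) B) (f := k)
    (by simp only [Int.card_Icc]; omega)
    (by intro i hi
        simp only [Finset.coe_Icc, Set.mem_Icc] at hi ⊢
        exact abs_le.mp (hk i (by omega) hi.2))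
  have main : ∀ i j : ℤ, i ∈ Finset.Icc (1:ℤ) (2 * B + 2) → j ∈ Finset.Icc (1:ℤ) (2 * B + 2) →
      i < j → k i = k j → ∃ p : ℤ, |(J * ρ) * m - p| < 1/8 := by
    intro i j hi hj hij hkk
    rw [Finset.mem_Icc] at hi hj
    have Hi := hkm i (by omega) hi.2
    have Hj := hkm j (by omega) hj.2
    rw [← hkk] at Hj
    obtain ⟨d, hd⟩ : ∃ d : ℕ, j - i = d := ⟨(j - i).toNat, by omega⟩
    have dvd : d ∣ J := Nat.dvd_factorial (by omega) (by omega)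
    obtain ⟨c, hc⟩ := dvd
    refine ⟨c * (m' j - m' i), ?_⟩
    have hdR : (j:ℝ) - i = d := by exact_mod_cast hd
    have hcR : (J:ℝ) = d * c := by exact_mod_cast hc
    have e : (J * ρ) * m - ((c * (m' j - m' i) : ℤ):ℝ)
      = c * ((ρ * ((j * m : ℤ):ℝ) + k i / q - m' j) - (ρ * ((i * m : ℤ):ℝ) + k i / q - m' i)) := by
      rw [hcR, ← hdR]; push_cast; ring
    have hcJ : (c:ℝ) ≤ J := by
      exact_mod_cast Nat.le_of_dvd hJ0 ⟨d, by rw [hc]; ring⟩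
    have hlt : |(ρ * ((j * m : ℤ):ℝ) + k i / q - m' j) - (ρ * ((i * m : ℤ):ℝ) + k i / q - m' i)|
        < 2 * (1 / (16 * J)) := lt_of_le_of_lt (abs_sub _ _) (by linarith)
    rw [e, abs_mul, Nat.abs_cast]
    calc _ ≤ J * |(ρ * ((j * m : ℤ):ℝ) + k i / q - m' j) - (ρ * ((i * m : ℤ):ℝ) + k i / q - m' i)| :=
          mul_le_mul_of_nonneg_right hcJ (abs_nonneg _)
      _ < J * (2 * (1 / (16 * J))) := mul_lt_mul_of_pos_left hlt hJ0'
      _ = 1/8 := by field_simp; norm_num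
  rcases lt_or_gt_of_ne hij with hlt | hlt
  · exact main i j hi hj hlt hkk
  · exact main j i hj hi hlt hkk.symm

/-- nonzero bounded multiples of an irrational stay away from the integers -/
theorem away {θ : ℝ} (hθ : Irrational θ) (B : ℕ) : ∃ η : ℝ, 0 < η ∧ η ≤ 1 ∧
    ∀ k i : ℤ, |k| ≤ B → |θ * k - i| < η → k = 0 := by
  induction B with
  | zero =>
    refine ⟨1, one_pos, le_rfl, fun k i hk _ => ?_⟩
    simpa using hk
  | succ B ih =>
    obtain ⟨η, h0, h1, h⟩ := ih
    have hne : ∀ k : ℤ, k ≠ 0 → 0 < |θ * k - round (θ * k)| := fun k hk =>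
      abs_pos.mpr (((hθ.mul_intCast hk).sub_intCast _).ne_zero)
    have p1 := hne (B + 1) (by omega)
    have p2 := hne (-(B + 1)) (by omega)
    refine ⟨min η (min |θ * ((B + 1 : ℤ):ℝ) - round (θ * ((B + 1 : ℤ):ℝ))|
      |θ * ((-(B + 1) : ℤ):ℝ) - round (θ * ((-(B + 1) : ℤ):ℝ))|), lt_min h0 (lt_min p1 p2),
      (min_le_left _ _).trans h1, fun k i hk hki => ?_⟩
    simp only [lt_min_iff] at hki
    by_cases hB : |k| ≤ B
    · exact h k i hB hki.1
    · exfalso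
      have : k = B + 1 ∨ k = -(B + 1) := by
        push_cast at hk
        rcases abs_cases k with ⟨h, _⟩ | ⟨h, _⟩ <;> omega
      rcases this with rfl | rfl
      · exact absurd (round_le (θ * ((B + 1 : ℤ):ℝ)) i) (not_le.mpr hki.2.1)
      · exact absurd (round_le (θ * ((-(B + 1) : ℤ):ℝ)) i) (not_le.mpr hki.2.2)

theorem dir1 {α β : ℝ} (hα0 : 0 < α) (hind : LinearIndependent ℚ ![(1 : ℝ), α, α ^ 2]) (hβ : 0 < β)
    (hβ' : (∃ b : ℤ, β = (b : ℝ)) ∨ Irrational β)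
    (g : ℤ → ℤ) (hg : ∀ n : ℤ, g n = round (β * n * round (α * n))) (n n' : ℤ)
    (hn : 0 < n) (hn' : 0 < n') (h : delta (1 + 4 / β) g n n') :
    ∃ t : ℤ, 0 < t ∧ n' = t * n ∧ round (α * n') = t * round (α * n) := by
  have hα := irr_of hind
  have nn : ∀ n : ℤ, 0 < n → (0:ℝ) < α * n + round (α * n) := by
    intro n hn
    have hnR : (0:ℝ) < n := by exact_mod_cast hn
    have : 0 ≤ round (α * n) := by
      rw [round_eq]; exact Int.floor_nonneg.mpr (by positivity)
    have : (0:ℝ) ≤ round (α * n) := by exact_mod_cast this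
    have := mul_pos hα0 hnR
    linarith
  have hq := nn n hn
  have hq' := nn n' hn'
  obtain ⟨B, hB⟩ := dir1a hα hβ hβ' g hg n n' hq h
  set a := round (α * n) with ha
  set a' := round (α * n') with ha'
  set q := α * n + a with hqd
  set q' := α * n' + a' with hqd'
  set ρ := q' / q with hρ
  have hρq : ρ * q = q' := div_mul_cancel₀ _ hq.ne'
  have hρ0 : 0 < ρ := div_pos hq' hq
  by_cases hir : Irrational ρ
  · exfalso
    obtain ⟨J, ε, hJ, hε, hp⟩ := pigeon B hB
    obtain ⟨c0, c1, c2, hc2, hc⟩ := lin hα hε hp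
    have hc' : ((c0:ℝ) + c1 * α) * q + c2 * J * q' = 0 := by
      rw [← hρq]
      linear_combination q * hc
    rw [hqd, hqd'] at hc'
    have := lin3 hind (c0 * a + c2 * J * a') (c0 * n + c1 * a + c2 * J * n') (c1 * n) (by
      push_cast; linear_combination hc')
    have hc1 : c1 = 0 := by
      rcases mul_eq_zero.mp this.2.2 with h | h
      · exact h
      · omega
    rw [hc1] at hc
    have hne : ((c2:ℝ) * J) ≠ 0 := by
      apply mul_ne_zero
      · exact_mod_cast hc2
      · exact_mod_cast hJ.ne'
    have : ρ = -c0 / (c2 * J) := by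
      rw [eq_div_iff hne]; push_cast at hc; linarith
    exact hir ⟨-c0 / (c2 * J), by rw [this]; push_cast; ring⟩
  · rw [Irrational, not_not] at hir
    obtain ⟨r, hr⟩ := hir
    have hden : (0:ℝ) < r.den := by exact_mod_cast r.den_pos
    have hnd : (r.den : ℝ) * ρ = r.num := by
      rw [← hr, Rat.cast_def]; field_simp
    have hnum : 0 < r.num := by
      have : (0:ℝ) < r.num := by rw [← hnd]; positivity
      exact_mod_cast this
    have hrel : (r.num:ℝ) * q = r.den * q' := by rw [← hnd, ← hρq]; ring
    have l := lin3 hind (r.num * a - r.den * a') (r.num * n - r.den * n') 0 (by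
      rw [hqd, hqd'] at hrel
      push_cast; linear_combination hrel)
    suffices hd1 : r.den = 1 by
      refine ⟨r.num, hnum, ?_, ?_⟩
      · have := l.2.1; rw [hd1] at this; push_cast at this; linarith
      · have := l.1; rw [hd1] at this; push_cast at this; linarith
    -- denominators
    have hqi : Irrational (r.den / q) := by
      have h1 : Irrational q := (hα.mul_intCast hn.ne').add_intCast a
      have := h1.natCast_div (m := r.den) r.den_ne_zero
      exact this
    obtain ⟨η, hη0, hη1, hη⟩ := away hqi B
    obtain ⟨ε, hε, hm⟩ := hB (η / r.den) (by positivity)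
    -- m ≡ 1 mod den
    obtain ⟨j, hj, s, hs⟩ := kron (hα.mul_natCast r.den_ne_zero) 0 (-α) (min ε (1/2)) (by positivity)
    have hs' : |α * ((j * r.den + 1 : ℤ):ℝ) - s| < min ε (1/2) := by
      convert hs using 2; push_cast; ring
    have rs := round_eq_of (lt_of_lt_of_le hs' (min_le_right _ _))
    obtain ⟨k, m', hk, hkm⟩ := hm (j * r.den + 1) (by positivity)
      (by rw [rs]; exact lt_of_lt_of_le hs' (min_le_left _ _))
    set m := j * r.den + 1 with hmdef
    have key : |(r.den / q) * k - ((r.den * m' - r.num * m : ℤ):ℝ)| < η := by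
      rw [lt_div_iff₀ hden, ← abs_of_pos hden, ← abs_mul] at hkm
      have e : (r.den / q) * k - ((r.den * m' - r.num * m : ℤ):ℝ)
          = (ρ * m + k / q - m') * r.den := by
        push_cast
        rw [← hnd]; ring
      rw [e]
      exact hkm
    have k0 := hη k _ hk key
    rw [k0] at key
    have z : (r.den * m' - r.num * m : ℤ) = 0 := by
      have : |((r.den * m' - r.num * m : ℤ):ℝ)| < 1 := by
        rw [Int.cast_zero, mul_zero, zero_sub, abs_neg] at key
        exact lt_of_lt_of_le key hη1
      exact Int.abs_lt_one_iff.mp (by exact_mod_cast this)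
    have dv : (r.den:ℤ) ∣ r.num * m := ⟨m', by linarith⟩
    have cop : IsCoprime (r.den:ℤ) r.num := by
      rw [Int.isCoprime_iff_gcd_eq_one, Int.gcd_comm]
      exact r.reduced
    have dm : (r.den:ℤ) ∣ m := cop.dvd_of_dvd_mul_left dv
    have d1 : (r.den:ℤ) ∣ 1 := by
      rw [hmdef] at dm
      exact (Int.dvd_add_right (Dvd.intro_left j rfl)).mp dm
    have := Int.eq_one_of_dvd_one (by positivity) d1
    exact_mod_cast this

theorem characterization (α β : ℝ) (hα : 0 < α) (hβ : 0 < β)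
    (hind : LinearIndependent ℚ ![(1 : ℝ), α, α ^ 2])
    (hβ' : (∃ b : ℤ, β = (b : ℝ)) ∨ Irrational β)
    (g : ℤ → ℤ) (hg : ∀ n : ℤ, g n = round (β * n * round (α * n))) :
    ∃ C : ℝ, 1 ≤ C ∧ ∀ n n' : ℤ, 0 < n → 0 < n' →
      (delta C g n n' ↔
        ∃ t : ℤ, 0 < t ∧ n' = t * n ∧ round (α * n') = t * round (α * n)) := by
  have hb : 0 < 4 / β := by positivity
  refine ⟨1 + 4 / β, by linarith, fun n n' hn hn' => ⟨dir1 hα hind hβ hβ' g hg n n' hn hn', ?_⟩⟩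
  rintro ⟨t, ht, rfl, hr⟩
  exact dir2 (irr_of hind) hβ hβ' g hg n t ht hr


end Stmt11
end

section
/- The following two assertions hold: (a) for every ε > 0 there exists a positive integer N such that for every positive integer m, if μ(m, N) holds then ‖2·α·m‖ < ε and ‖α·m²‖ < ε; (b) for every positive integer N there exists ε > 0 such that for every positive integer m, if ‖2·α·m‖ < ε and ‖α·m²‖ < ε then μ(m, N) holds. -/
/-!
STATEMENT 14: μ(m, N) characterises smallness of ‖2·α·m‖ and ‖α·m²‖.
-/

namespace Stmt14

/-- `μ(m, N)`: `g(n + m) = g(n)` for every positive integer `n ≤ N`. -/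
def mu (g : ℤ → ℤ) (m N : ℤ) : Prop :=
  ∀ n : ℤ, 0 < n → n ≤ N → g (n + m) = g n

/-- `λ(m, N)`: there is a positive integer `n` with `μ(n, N)` and `μ(n + m, N)`. -/
def lam (g : ℤ → ℤ) (m N : ℤ) : Prop :=
  ∃ n : ℤ, 0 < n ∧ mu g n N ∧ mu g (n + m) N

/-- `κ(m, N)`. -/
def kap (g : ℤ → ℤ) (m N : ℤ) : Prop :=
  ∃ M : ℤ, 0 < M ∧ ∀ h : ℤ, 0 < h → g h = 1 → lam g h M →
    ∀ L : ℤ, 0 < L → ∃ n : ℤ, 0 < n ∧ lam g n L ∧ mu g n N ∧ g (h + m + n) = 1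

/-- `ν(m, m̃, N)`. -/
def nu (g : ℤ → ℤ) (m mt N : ℤ) : Prop :=
  ∃ L : ℤ, 0 < L ∧ ∀ n : ℤ, 0 < n → lam g n L → kap g (m + n) L → kap g (mt + n) N

/-- `δ(m, m̃)`. -/
def del (g : ℤ → ℤ) (m mt : ℤ) : Prop :=
  ∀ N : ℤ, 0 < N → ∃ L : ℤ, 0 < L ∧ ∀ n : ℤ, 0 < n →
    nu g (m + n) m L → kap g n L → nu g (mt + n) mt N

/-- Distance to the nearest integer. -/
noncomputable def nrm (r : ℝ) : ℝ := |r - round r|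

theorem nrm_le (r : ℝ) (p : ℤ) : nrm r ≤ |r - p| := round_le r p

theorem nrm_lip (u v : ℝ) : nrm u ≤ nrm v + |u - v| := by
  refine (nrm_le u (round v)).trans ?_
  have h := abs_add_le (v - round v) (u - v)
  have e : v - (round v : ℝ) + (u - v) = u - round v := by ring
  rw [e] at h
  exact h

theorem nrm_int (u : ℝ) (p : ℤ) : nrm (u + p) = nrm u := by
  unfold nrm
  rw [round_add_intCast]
  push_cast
  congr 1
  ring

/-- Simultaneous linear recurrence. -/
theorem rec2 (u v δ : ℝ) (hδ : 0 < δ) :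
    ∃ k : ℕ, 1 ≤ k ∧ ∃ p q : ℤ, |u * k - p| < δ ∧ |v * k - q| < δ := by
  have hc : IsCompact ((Set.Icc (0:ℝ) 1) ×ˢ (Set.Icc (0:ℝ) 1)) := isCompact_Icc.prod isCompact_Icc
  obtain ⟨a, -, φ, hφ, hlim⟩ := hc.tendsto_subseq
    (x := fun n : ℕ => (Int.fract (u * n), Int.fract (v * n)))
    (fun n => ⟨⟨Int.fract_nonneg _, (Int.fract_lt_one _).le⟩,
      ⟨Int.fract_nonneg _, (Int.fract_lt_one _).le⟩⟩)
  have hC := hlim.cauchySeq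
  rw [Metric.cauchySeq_iff'] at hC
  obtain ⟨N, hN⟩ := hC δ hδ
  have h1 := hN (N + 1) (by omega)
  have hlt : φ N < φ (N + 1) := hφ (by omega)
  rw [Prod.dist_eq, max_lt_iff] at h1
  simp only [Function.comp, Real.dist_eq] at h1
  refine ⟨φ (N + 1) - φ N, by omega, ⌊u * φ (N + 1)⌋ - ⌊u * φ N⌋,
    ⌊v * φ (N + 1)⌋ - ⌊v * φ N⌋, ?_, ?_⟩
  · have h := h1.1
    unfold Int.fract at h
    rw [Nat.cast_sub hlt.le]
    push_cast
    rw [abs_lt] at h ⊢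
    constructor <;> linarith [h.1, h.2]
  · have h := h1.2
    unfold Int.fract at h
    rw [Nat.cast_sub hlt.le]
    push_cast
    rw [abs_lt] at h ⊢
    constructor <;> linarith [h.1, h.2]

/-- Limit values of `α k ^ 2` along `k` with `2 α k` and `x k` close to integers. -/
def Cl (α x c : ℝ) : Prop :=
  ∀ δ : ℝ, 0 < δ → ∃ k : ℕ, 1 ≤ k ∧ ∃ p q r : ℤ,
    |2 * α * k - p| < δ ∧ |x * k - q| < δ ∧ |α * k ^ 2 - r - c| < δ

theorem Cl_nonempty (α x : ℝ) : ∃ c, Cl α x c := by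
  have h := fun i : ℕ => rec2 (2 * α) x (1 / ((i : ℝ) + 1)) (by positivity)
  choose k hk p q hp hq using h
  obtain ⟨c, -, φ, hφ, hlim⟩ := (isCompact_Icc (a := (0:ℝ)) (b := 1)).tendsto_subseq
    (x := fun n : ℕ => Int.fract (α * (k n) ^ 2))
    (fun n => ⟨Int.fract_nonneg _, (Int.fract_lt_one _).le⟩)
  refine ⟨c, fun δ hδ => ?_⟩
  have h0 : ∀ᶠ n in Filter.atTop, 1 / (((φ n : ℕ) : ℝ) + 1) < δ :=
    ((tendsto_one_div_add_atTop_nhds_zero_nat (𝕜 := ℝ)).comp hφ.tendsto_atTop).eventually_lt_const hδ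
  have h1 := (Metric.tendsto_nhds.1 hlim) δ hδ
  obtain ⟨n, hn0, hn1⟩ := (h0.and h1).exists
  refine ⟨k (φ n), hk _, p (φ n), q (φ n), ⌊α * (k (φ n)) ^ 2⌋, (hp _).trans hn0, (hq _).trans hn0, ?_⟩
  simpa only [Function.comp, Real.dist_eq, Int.fract] using hn1

theorem Cl_add (α x c d : ℝ) (hc : Cl α x c) (hd : Cl α x d) : Cl α x (c + d) := by
  intro δ hδ
  obtain ⟨k, hk, p, q, r, h1, h2, h3⟩ := hc (δ / 3) (by positivity)
  have hk0 : (1:ℝ) ≤ k := by exact_mod_cast hk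
  obtain ⟨l, hl, p', q', r', h1', h2', h3'⟩ := hd (δ / 3 / k) (by positivity)
  have hle : δ / 3 / k ≤ δ / 3 := div_le_self (by positivity) hk0
  have h4 : |2 * α * l - p'| * k < δ / 3 := by
    rw [lt_div_iff₀ (by positivity)] at h1'; exact h1'
  rw [← abs_of_pos (show (0:ℝ) < k by positivity), ← abs_mul] at h4
  refine ⟨k + l, by omega, p + p', q + q', r + r' + p' * k, ?_, ?_, ?_⟩
  · push_cast
    rw [abs_lt] at *
    constructor <;> linarith [h1.1, h1.2, h1'.1, h1'.2]
  · push_cast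
    rw [abs_lt] at *
    constructor <;> linarith [h2.1, h2.2, h2'.1, h2'.2]
  · push_cast
    rw [abs_lt] at *
    constructor <;> nlinarith [h3.1, h3.2, h3'.1, h3'.2, h4.1, h4.2]

theorem Cl_mul (α x c : ℝ) (hc : Cl α x c) (M : ℕ) : Cl α x (c * ((M : ℝ) + 1)) := by
  induction M with
  | zero => simpa using hc
  | succ M ih =>
    have h := Cl_add α x _ _ ih hc
    push_cast
    convert h using 1
    ring

theorem rec3 (α x δ : ℝ) (hδ : 0 < δ) : ∃ k : ℕ, 1 ≤ k ∧ ∃ p q r : ℤ,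
    |2 * α * k - p| < δ ∧ |x * k - q| < δ ∧ |α * k ^ 2 - r| < δ := by
  obtain ⟨c, hc⟩ := Cl_nonempty α x
  obtain ⟨M, hM, s, -, hs, -⟩ := rec2 c 0 (δ / 2) (by positivity)
  obtain ⟨M, rfl⟩ : ∃ M', M = M' + 1 := ⟨M - 1, by omega⟩
  obtain ⟨k, hk, p, q, r, h1, h2, h3⟩ := Cl_mul α x c hc M (δ / 2) (by positivity)
  refine ⟨k, hk, p, q, r + s, by linarith, by linarith, ?_⟩
  push_cast at *
  rw [abs_lt] at *
  constructor <;> linarith [h3.1, h3.2, hs.1, hs.2]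

theorem step (u s : ℝ) (hs : s ≠ 0) :
    ∃ i : ℕ, (i : ℝ) * |s| ≤ 1 ∧ ∃ p : ℤ, |u + i * s - p| ≤ |s| := by
  have hs' : 0 < |s| := abs_pos.2 hs
  have key : ∀ d : ℝ, 0 ≤ d → d < 1 → ∃ i : ℕ, (i : ℝ) * |s| ≤ d ∧ d < i * |s| + |s| := by
    intro d hd _
    refine ⟨⌊d / |s|⌋₊, ?_, ?_⟩
    · have := Nat.floor_le (show 0 ≤ d / |s| by positivity)
      rwa [le_div_iff₀ hs'] at this
    · have := Nat.lt_floor_add_one (d / |s|)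
      rw [div_lt_iff₀ hs'] at this
      linarith
  rcases lt_or_gt_of_ne hs with h | h
  · obtain ⟨i, h1, h2⟩ := key (Int.fract u) (Int.fract_nonneg _) (Int.fract_lt_one _)
    refine ⟨i, h1.trans (Int.fract_lt_one _).le, ⌊u⌋, ?_⟩
    have := Int.self_sub_floor u
    rw [abs_of_neg h] at *
    rw [abs_le]
    constructor <;> linarith
  · obtain ⟨i, h1, h2⟩ := key (Int.fract (-u)) (Int.fract_nonneg _) (Int.fract_lt_one _)
    refine ⟨i, h1.trans (Int.fract_lt_one _).le, -⌊-u⌋, ?_⟩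
    have := Int.self_sub_floor (-u)
    rw [abs_of_pos h] at *
    push_cast
    rw [abs_le]
    constructor <;> linarith

/-- From a progression with small errors, deduce that `a x + y` is nearly an integer. -/
theorem near (α ρ x y : ℝ) (hρ4 : ρ < 1 / 4)
    (H : ∀ n : ℕ, 1 ≤ n → nrm (α * n ^ 2) < ρ → nrm (α * n ^ 2 + n * x + y) ≤ ρ)
    (η : ℝ) (hη : 0 < η) (hηρ : 6 * η < ρ) (δ : ℝ) (hδ : 4 * δ ≤ η ^ 3)
    (k : ℕ) (p q r : ℤ) (h1 : |2 * α * k - p| < δ) (h2 : |x * k - q| < δ)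
    (h3 : |α * k ^ 2 - r| < δ) (a : ℕ) (ha : 1 ≤ a)
    (hs1 : η / 2 ≤ |a * (2 * α * k - p)|) (hs2 : |a * (2 * α * k - p)| ≤ η) :
    nrm (a * x + y) ≤ 6 * η := by
  set s : ℝ := a * (2 * α * k - p) with hs
  have hδ0 : 0 < δ := (abs_nonneg _).trans_lt h1
  have hs0 : s ≠ 0 := by
    intro h
    rw [h, abs_zero] at hs1
    linarith
  -- find a point of the progression close to any target
  have fnd : ∀ t : ℝ, ∃ i : ℕ, ∃ P Q : ℤ, |α * ((a + i * k : ℕ) : ℝ) ^ 2 - P - t| ≤ 2 * η ∧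
      |((a + i * k : ℕ) : ℝ) * x - Q - a * x| ≤ η := by
    intro t
    obtain ⟨i, hi, P, hP⟩ := step (α * a ^ 2 - t) s hs0
    have hi1 : (i : ℝ) * η ≤ 2 := by
      have : (i : ℝ) * (η / 2) ≤ i * |s| := by gcongr
      linarith
    have hi0 : (0 : ℝ) ≤ i := Nat.cast_nonneg i
    have hi2 : (i : ℝ) ^ 2 * η ^ 2 ≤ 4 := by
      have : (i * η) ^ 2 ≤ 2 ^ 2 := by gcongr
      nlinarith
    have hη1 : η < 1 := by linarith
    have e1 : (i : ℝ) ^ 2 * δ ≤ η := by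
      have : (i : ℝ) ^ 2 * (4 * δ) ≤ i ^ 2 * η ^ 3 := by gcongr
      nlinarith
    have e2 : (i : ℝ) * δ ≤ η := by
      have h5 : (i : ℝ) * (4 * δ) ≤ i * η ^ 3 := by gcongr
      have h6 : (i : ℝ) * η ^ 3 ≤ 2 * η ^ 2 := by nlinarith [sq_nonneg η]
      nlinarith
    have f1 : |(i : ℝ) ^ 2 * (α * k ^ 2 - r)| ≤ η := by
      rw [abs_mul, abs_of_nonneg (sq_nonneg _)]
      exact (mul_le_mul_of_nonneg_left h3.le (sq_nonneg _)).trans e1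
    have f2 : |(i : ℝ) * (x * k - q)| ≤ η := by
      rw [abs_mul, abs_of_nonneg hi0]
      exact (mul_le_mul_of_nonneg_left h2.le hi0).trans e2
    refine ⟨i, P + a * i * p + i ^ 2 * r, i * q, ?_, ?_⟩
    · have h7 := abs_add_le (α * a ^ 2 - t + i * s - P) ((i : ℝ) ^ 2 * (α * k ^ 2 - r))
      push_cast
      have e : α * (a + i * k : ℝ) ^ 2 - (P + a * i * p + i ^ 2 * r) - t
        = (α * a ^ 2 - t + i * s - P) + ((i : ℝ) ^ 2 * (α * k ^ 2 - r)) := by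
        rw [hs]; ring
      rw [e]
      linarith
    · push_cast
      have e : (a + i * k : ℝ) * x - i * q - a * x = i * (x * k - q) := by ring
      rw [e]
      exact f2
  set w : ℝ := a * x + y with hw
  have hz := abs_sub_round w
  set z : ℝ := w - round w with hzdef
  have hnw : nrm w = |z| := rfl
  rw [hnw]
  rw [abs_le] at hz
  -- apply H
  have app : ∀ t : ℝ, |t| + 2 * η < ρ → ∃ v : ℝ, |v - t| ≤ 3 * η ∧ nrm (v + z) ≤ ρ := by
    intro t ht
    obtain ⟨i, P, Q, g1, g2⟩ := fnd t
    have hh := H (a + i * k) (by omega) (by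
      refine (nrm_le _ P).trans_lt ?_
      have := abs_add_le (α * ((a + i * k : ℕ) : ℝ) ^ 2 - P - t) t
      rw [sub_add_cancel] at this
      linarith)
    refine ⟨(α * ((a + i * k : ℕ) : ℝ) ^ 2 - P) + (((a + i * k : ℕ) : ℝ) * x - Q - a * x), ?_, ?_⟩
    · rw [abs_le] at *
      constructor <;> linarith [g1.1, g1.2, g2.1, g2.2]
    · rw [← nrm_int _ (P + Q + round w)]
      convert hh using 2
      push_cast
      rw [hzdef, hw]
      ring
  have int_case : ∀ v : ℝ, nrm v ≤ ρ → |v| < 3 / 4 → |v| ≤ ρ := by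
    intro v hv hv2
    unfold nrm at hv
    have h0 : round v = 0 := by
      rw [abs_le] at hv
      rw [abs_lt] at hv2
      have l1 : ((round v : ℤ) : ℝ) < 1 := by linarith
      have l2 : (-1 : ℝ) < ((round v : ℤ) : ℝ) := by linarith
      have l1' : round v < 1 := by exact_mod_cast l1
      have l2' : -1 < round v := by exact_mod_cast l2
      omega
    rw [h0] at hv
    simpa using hv
  rcases le_total 0 z with h | h
  · obtain ⟨v, hv, hv2⟩ := app (ρ - 3 * η) (by rw [abs_of_pos (by linarith)]; linarith)
    rw [abs_le] at hv
    have := int_case _ hv2 (by rw [abs_lt]; constructor <;> linarith)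
    rw [abs_le] at this
    rw [abs_of_nonneg h]
    linarith
  · obtain ⟨v, hv, hv2⟩ := app (-(ρ - 3 * η)) (by
      rw [abs_neg, abs_of_pos (by linarith)]; linarith)
    rw [abs_le] at hv
    have := int_case _ hv2 (by rw [abs_lt]; constructor <;> linarith)
    rw [abs_le] at this
    rw [abs_of_nonpos h]
    linarith

theorem core (α ρ x y : ℝ) (hα : Irrational α) (hρ0 : 0 < ρ) (hρ4 : ρ < 1 / 4)
    (H : ∀ n : ℕ, 1 ≤ n → nrm (α * n ^ 2) < ρ → nrm (α * n ^ 2 + n * x + y) ≤ ρ) :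
    nrm x = 0 ∧ nrm y = 0 := by
  have main : ∀ η : ℝ, 0 < η → 6 * η < ρ → ∃ a : ℕ, nrm (a * x + y) ≤ 6 * η ∧
      nrm ((a + 1 : ℕ) * x + y) ≤ 6 * η := by
    intro η hη hηρ
    have hη1 : η < 1 := by linarith
    have hδ : 0 < η ^ 3 / 4 := by positivity
    obtain ⟨k, hk, p, q, r, h1, h2, h3⟩ := rec3 α x (η ^ 3 / 4) hδ
    set b : ℝ := 2 * α * k - p with hb
    have hb0 : 0 < |b| := by
      rw [abs_pos]
      have hi : Irrational (2 * α * k - p) := by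
        have h := (hα.natCast_mul (m := 2 * k) (by omega)).sub_intCast p
        push_cast at h
        convert h using 1
        ring
      exact hi.ne_zero
    have hb4 : |b| < η / 4 := by
      have : η ^ 3 ≤ η := by nlinarith [sq_nonneg η, mul_pos hη hη]
      linarith
    have hc0 : 0 < (η / 2) / |b| := by positivity
    have hc1 := Nat.le_ceil ((η / 2) / |b|)
    have hc2 := Nat.ceil_lt_add_one hc0.le
    have hc3 := Nat.ceil_pos.2 hc0
    set a := ⌈(η / 2) / |b|⌉₊ with ha
    rw [div_le_iff₀ hb0] at hc1
    have hc4 : (a : ℝ) * |b| < η / 2 + |b| := by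
      have := mul_lt_mul_of_pos_right hc2 hb0
      rw [add_mul, div_mul_cancel₀ _ hb0.ne'] at this
      linarith
    have e : ∀ n : ℕ, |(n : ℝ) * b| = n * |b| := fun n => by
      rw [abs_mul, Nat.abs_cast]
    refine ⟨a, near α ρ x y hρ4 H η hη hηρ (η ^ 3 / 4) (by linarith) k p q r h1 h2 h3 a hc3 ?_ ?_,
      near α ρ x y hρ4 H η hη hηρ (η ^ 3 / 4) (by linarith) k p q r h1 h2 h3 (a + 1) (by omega) ?_ ?_⟩
    all_goals
      rw [← hb, e]
      push_cast
      linarith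
  have hx : nrm x = 0 := by
    refine le_antisymm (le_of_forall_pos_le_add fun ε hε => ?_) (abs_nonneg _)
    have hη : 0 < min (ε / 12) (ρ / 12) := by positivity
    have hη1 := min_le_left (ε / 12) (ρ / 12)
    have hη2 := min_le_right (ε / 12) (ρ / 12)
    obtain ⟨a, h1, h2⟩ := main _ hη (by linarith)
    have h3 := nrm_le x (round (((a + 1 : ℕ) : ℝ) * x + y) - round ((a : ℝ) * x + y))
    unfold nrm at h1 h2
    rw [abs_le] at h1 h2
    refine h3.trans ?_
    push_cast at *
    rw [abs_le]
    constructor <;> linarith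
  refine ⟨hx, ?_⟩
  refine le_antisymm (le_of_forall_pos_le_add fun ε hε => ?_) (abs_nonneg _)
  have hη : 0 < min (ε / 12) (ρ / 12) := by positivity
  have hη1 := min_le_left (ε / 12) (ρ / 12)
  have hη2 := min_le_right (ε / 12) (ρ / 12)
  obtain ⟨a, h1, -⟩ := main _ hη (by linarith)
  have hx' : x = round x := by
    have := abs_eq_zero.1 hx
    linarith
  have e : (a : ℝ) * x + y = y + ((a * round x : ℤ) : ℝ) := by
    push_cast
    rw [← hx']
    ring
  rw [e, nrm_int] at h1
  linarith

open scoped Classical in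
theorem statement (α ρ : ℝ) (hρ0 : 0 < ρ) (hρ4 : ρ < 1 / 4)
    (hα : ¬ ∃ q r : ℚ, α = (q : ℝ) + (r : ℝ) * ρ)
    (g : ℤ → ℤ)
    (hg : ∀ n : ℤ, g n = if |α * n ^ 2 - round (α * n ^ 2)| < ρ then 1 else 0) :
    (∀ ε : ℝ, 0 < ε → ∃ N : ℤ, 0 < N ∧ ∀ m : ℤ, 0 < m → mu g m N →
        |2 * α * m - round (2 * α * m)| < ε ∧ |α * m ^ 2 - round (α * m ^ 2)| < ε) ∧
      (∀ N : ℤ, 0 < N → ∃ ε : ℝ, 0 < ε ∧ ∀ m : ℤ, 0 < m →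
        |2 * α * m - round (2 * α * m)| < ε → |α * m ^ 2 - round (α * m ^ 2)| < ε →
          mu g m N) := by
  have hirr : Irrational α := by
    rintro ⟨q, hq⟩
    exact hα ⟨q, 0, by simp [hq]⟩
  have hg' : ∀ n : ℤ, g n = if nrm (α * n ^ 2) < ρ then 1 else 0 := hg
  constructor
  · intro ε hε
    by_contra hcon
    push Not at hcon
    choose m hm hmu hbad using fun j : ℕ => hcon ((j : ℤ) + 1) (by omega)
    have hc : IsCompact ((Set.Icc (0:ℝ) 1) ×ˢ (Set.Icc (0:ℝ) 1)) :=
      isCompact_Icc.prod isCompact_Icc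
    obtain ⟨⟨x, y⟩, -, φ, hφ, hlim⟩ := hc.tendsto_subseq
      (x := fun j : ℕ => (Int.fract (2 * α * m j), Int.fract (α * (m j) ^ 2)))
      (fun n => ⟨⟨Int.fract_nonneg _, (Int.fract_lt_one _).le⟩,
        ⟨Int.fract_nonneg _, (Int.fract_lt_one _).le⟩⟩)
    have hev : ∀ δ : ℝ, 0 < δ → ∀ᶠ j in Filter.atTop,
        |2 * α * m (φ j) - ⌊2 * α * m (φ j)⌋ - x| < δ ∧
        |α * (m (φ j)) ^ 2 - ⌊α * (m (φ j)) ^ 2⌋ - y| < δ := by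
      intro δ hδ
      filter_upwards [(Metric.tendsto_nhds.1 hlim) δ hδ] with j hj
      rw [Prod.dist_eq, max_lt_iff] at hj
      simpa only [Function.comp, Real.dist_eq, Int.fract] using hj
    obtain ⟨hx, hy⟩ := core α ρ x y hirr hρ0 hρ4 (by
      intro n hn hnρ
      refine le_of_forall_pos_le_add fun δ hδ => ?_
      have hd : 0 < δ / (n + 1) := by positivity
      obtain ⟨j, ⟨hj1, hj2⟩, hjn⟩ := ((hev _ hd).and (Filter.eventually_ge_atTop n)).exists
      have hφj : j ≤ φ j := hφ.id_le j
      have h1 := hmu (φ j) n (by omega) (by omega)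
      rw [hg' n, if_pos (by simpa using hnρ), hg'] at h1
      have h2 : nrm (α * ((n + m (φ j) : ℤ) : ℝ) ^ 2) < ρ := by
        by_contra h
        rw [if_neg h] at h1
        exact absurd h1 (by norm_num)
      set A := ⌊2 * α * m (φ j)⌋
      set B := ⌊α * (m (φ j)) ^ 2⌋
      rw [← nrm_int _ (-(n * A + B))] at h2
      refine (nrm_lip _ _).trans (add_le_add h2.le ?_)
      have e : α * (n : ℝ) ^ 2 + n * x + y - (α * ((n + m (φ j) : ℤ) : ℝ) ^ 2 + ((-(n * A + B) : ℤ) : ℝ))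
        = -((n : ℝ) * (2 * α * m (φ j) - A - x) + (α * (m (φ j)) ^ 2 - B - y)) := by
        push_cast; ring
      rw [e, abs_neg]
      refine (abs_add_le _ _).trans ?_
      rw [abs_mul, Nat.abs_cast]
      have : (n : ℝ) * |2 * α * m (φ j) - A - x| ≤ n * (δ / (n + 1)) := by gcongr
      have e2 : (n : ℝ) * (δ / (n + 1)) + δ / (n + 1) = δ := by field_simp
      linarith)
    obtain ⟨j, hj1, hj2⟩ := (hev ε hε).exists
    have b1 : nrm (2 * α * m (φ j)) < ε := by
      have h := nrm_lip (2 * α * m (φ j) - ⌊2 * α * m (φ j)⌋) x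
      rw [hx, sub_eq_add_neg, ← Int.cast_neg, nrm_int] at h
      push_cast at h
      rw [← sub_eq_add_neg] at h
      linarith
    have b2 : nrm (α * (m (φ j)) ^ 2) < ε := by
      have h := nrm_lip (α * (m (φ j)) ^ 2 - ⌊α * (m (φ j)) ^ 2⌋) y
      rw [hy, sub_eq_add_neg, ← Int.cast_neg, nrm_int] at h
      push_cast at h
      rw [← sub_eq_add_neg] at h
      linarith
    exact absurd (hbad (φ j) b1) (not_le.2 b2)
  · intro N hN
    have hne : ∀ n : ℤ, 0 < n → nrm (α * n ^ 2) ≠ ρ := by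
      intro n hn h
      apply hα
      have hn' : (n : ℝ) ≠ 0 := by exact_mod_cast hn.ne'
      unfold nrm at h
      rcases abs_choice (α * n ^ 2 - round (α * n ^ 2)) with h' | h'
      · rw [h'] at h
        refine ⟨(round (α * n ^ 2) : ℚ) / n ^ 2, 1 / n ^ 2, ?_⟩
        push_cast
        field_simp
        linarith
      · rw [h'] at h
        refine ⟨(round (α * n ^ 2) : ℚ) / n ^ 2, -1 / n ^ 2, ?_⟩
        push_cast
        field_simp
        linarith
    have hgap : ∃ d : ℝ, 0 < d ∧ ∀ n : ℤ, 0 < n → n ≤ N → d ≤ |nrm (α * n ^ 2) - ρ| := by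
      have hne' : (Finset.Icc 1 N).Nonempty := ⟨1, by simp; omega⟩
      obtain ⟨n0, hn0, hmin⟩ := Finset.exists_min_image (Finset.Icc 1 N)
        (fun n : ℤ => |nrm (α * n ^ 2) - ρ|) hne'
      rw [Finset.mem_Icc] at hn0
      refine ⟨_, abs_pos.2 (sub_ne_zero.2 (hne n0 (by omega))), fun n h1 h2 => ?_⟩
      exact hmin n (Finset.mem_Icc.2 ⟨by omega, h2⟩)
    obtain ⟨d, hd, hgap⟩ := hgap
    have hNr : (0 : ℝ) < N := by exact_mod_cast hN
    refine ⟨d / (N + 1), by positivity, fun m _ h1 h2 n hn hnN => ?_⟩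
    have hd' := hgap n hn hnN
    set A := round (2 * α * m)
    set B := round (α * (m : ℝ) ^ 2)
    have hnr : (0 : ℝ) < n := by exact_mod_cast hn
    have hnNr : (n : ℝ) ≤ N := by exact_mod_cast hnN
    have herr : |(α * ((n + m : ℤ) : ℝ) ^ 2 + ((-(n * A + B) : ℤ) : ℝ)) - α * (n : ℝ) ^ 2| < d := by
      have e : (α * ((n + m : ℤ) : ℝ) ^ 2 + ((-(n * A + B) : ℤ) : ℝ)) - α * (n : ℝ) ^ 2
        = (n : ℝ) * (2 * α * m - A) + (α * (m : ℝ) ^ 2 - B) := by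
        push_cast; ring
      rw [e]
      refine (abs_add_le _ _).trans_lt ?_
      rw [abs_mul, abs_of_pos hnr]
      have : (n : ℝ) * |2 * α * m - A| ≤ N * (d / (N + 1)) := by gcongr
      have e2 : (N : ℝ) * (d / (N + 1)) + d / (N + 1) = d := by field_simp
      linarith
    have l1 := nrm_lip (α * ((n + m : ℤ) : ℝ) ^ 2 + ((-(n * A + B) : ℤ) : ℝ)) (α * (n : ℝ) ^ 2)
    have l2 := nrm_lip (α * (n : ℝ) ^ 2) (α * ((n + m : ℤ) : ℝ) ^ 2 + ((-(n * A + B) : ℤ) : ℝ))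
    rw [abs_sub_comm] at l2
    rw [nrm_int] at l1 l2
    rw [hg', hg']
    have hiff : nrm (α * ((n + m : ℤ) : ℝ) ^ 2) < ρ ↔ nrm (α * (n : ℝ) ^ 2) < ρ := by
      rcases abs_cases (nrm (α * (n : ℝ) ^ 2) - ρ) with ⟨h, h'⟩ | ⟨h, h'⟩
      · constructor <;> intro _ <;> linarith
      · constructor <;> intro _ <;> linarith
    simp only [hiff]

end Stmt14
end

section
/- The following two assertions hold: (a) for every ε > 0 there exists a positive integer N such that for every positive integer m, if λ(m, N) holds then ‖2·α·m‖ < ε; (b) for every positive integer N there exists ε > 0 such that for every positive integer m, if ‖2·α·m‖ < ε then λ(m, N) holds. -/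
/-!
STATEMENT 15: λ(m, N) characterises smallness of ‖2·α·m‖.
-/

namespace Stmt15

/-- `μ(m, N)`: `g(n + m) = g(n)` for every positive integer `n ≤ N`. -/
def mu (g : ℤ → ℤ) (m N : ℤ) : Prop :=
  ∀ n : ℤ, 0 < n → n ≤ N → g (n + m) = g n

/-- `λ(m, N)`: there is a positive integer `n` with `μ(n, N)` and `μ(n + m, N)`. -/
def lam (g : ℤ → ℤ) (m N : ℤ) : Prop :=
  ∃ n : ℤ, 0 < n ∧ mu g n N ∧ mu g (n + m) N

/-- `κ(m, N)`. -/
def kap (g : ℤ → ℤ) (m N : ℤ) : Prop :=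
  ∃ M : ℤ, 0 < M ∧ ∀ h : ℤ, 0 < h → g h = 1 → lam g h M →
    ∀ L : ℤ, 0 < L → ∃ n : ℤ, 0 < n ∧ lam g n L ∧ mu g n N ∧ g (h + m + n) = 1

/-- `ν(m, m̃, N)`. -/
def nu (g : ℤ → ℤ) (m mt N : ℤ) : Prop :=
  ∃ L : ℤ, 0 < L ∧ ∀ n : ℤ, 0 < n → lam g n L → kap g (m + n) L → kap g (mt + n) N

/-- `δ(m, m̃)`. -/
def del (g : ℤ → ℤ) (m mt : ℤ) : Prop :=
  ∀ N : ℤ, 0 < N → ∃ L : ℤ, 0 < L ∧ ∀ n : ℤ, 0 < n →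
    nu g (m + n) m L → kap g n L → nu g (mt + n) mt N

section Helpers
open Filter Topology

/-- Distance to the nearest integer. -/
noncomputable def nd (r : ℝ) : ℝ := ‖(r : UnitAddCircle)‖

theorem nd_eq (r : ℝ) : nd r = |r - round r| := UnitAddCircle.norm_eq

theorem nd_nonneg (r : ℝ) : 0 ≤ nd r := norm_nonneg _

theorem nd_add (a b : ℝ) : nd (a + b) ≤ nd a + nd b := by
  unfold nd
  rw [AddCircle.coe_add]
  exact norm_add_le _ _

theorem nd_neg (a : ℝ) : nd (-a) = nd a := by
  unfold nd
  rw [AddCircle.coe_neg, norm_neg]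

theorem nd_sub (a b : ℝ) : nd (a - b) ≤ nd a + nd b := by
  rw [sub_eq_add_neg, ← nd_neg b]
  exact nd_add _ _

theorem nd_int (k : ℤ) : nd k = 0 := by
  rw [nd_eq]; simp

theorem nd_add_int (a : ℝ) (k : ℤ) : nd (a + k) = nd a := by
  rw [nd_eq, nd_eq, round_add_intCast]
  push_cast
  congr 1
  ring

theorem nd_sub_int (a : ℝ) (k : ℤ) : nd (a - k) = nd a := by
  have := nd_add_int a (-k)
  push_cast at this
  rwa [← sub_eq_add_neg] at this

theorem nd_int_mul (k : ℤ) (a : ℝ) : nd (k * a) ≤ |(k : ℝ)| * nd a := by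
  unfold nd
  have : ((k * a : ℝ) : UnitAddCircle) = k • (a : UnitAddCircle) := by
    rw [← AddCircle.coe_zsmul, zsmul_eq_mul]
  rw [this]
  have := norm_zsmul_le k (a : UnitAddCircle)
  rwa [Int.norm_eq_abs] at this

theorem nd_le_abs (a : ℝ) : nd a ≤ |a| := by
  rw [nd_eq]
  simpa using round_le a 0

theorem nd_abs_le (a : ℝ) : nd a ≤ 1 / 2 := by
  rw [nd_eq]; exact abs_sub_round a

theorem nd_of_mem (a b : ℝ) (h1 : b ≤ a) (h2 : a ≤ 1 - b) : b ≤ nd a := by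
  rw [nd_eq]
  rcases le_or_gt (round a) 0 with h | h
  · have : (round a : ℝ) ≤ 0 := by exact_mod_cast h
    exact le_trans (by linarith) (le_abs_self _)
  · have : (1 : ℝ) ≤ round a := by exact_mod_cast h
    exact le_trans (by linarith) (neg_le_abs _)

theorem exists_idem : ∃ p : Ultrafilter ℕ+, ∀ P : ℕ+ → Prop,
    (∀ᶠ n in p, P n) → ∀ᶠ m in p, ∀ᶠ n in p, P (m + n) := by
  letI : AddSemigroup (Ultrafilter ℕ+) := Ultrafilter.addSemigroup
  obtain ⟨p, hp⟩ := exists_idempotent_of_compact_t2_of_continuous_add_left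
    (M := Ultrafilter ℕ+) (Ultrafilter.continuous_add_left)
  refine ⟨p, fun P hP => ?_⟩
  rw [← hp] at hP
  exact (Ultrafilter.eventually_add p p P).1 hP

theorem idem_lim (p : Ultrafilter ℕ+) (hp : ∀ P : ℕ+ → Prop,
    (∀ᶠ n in p, P n) → ∀ᶠ m in p, ∀ᶠ n in p, P (m + n)) (f : ℕ+ → UnitAddCircle)
    (hf : ∀ m c, Tendsto f p (𝓝 c) → Tendsto (fun n => f (m + n)) p (𝓝 (f m + c))) :
    Tendsto f p (𝓝 0) := by
  obtain ⟨c, hc⟩ : ∃ c, Tendsto f p (𝓝 c) := by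
    obtain ⟨c, -, hc⟩ := (isCompact_univ (X := UnitAddCircle)).ultrafilter_le_nhds (p.map f)
      (by simp)
    exact ⟨c, hc⟩
  rw [Metric.tendsto_nhds]
  intro ε hε
  have h1 := hp _ ((Metric.tendsto_nhds.1 hc) (ε / 2) (by positivity))
  filter_upwards [h1] with m hm
  have h2 := hf m c hc
  have h3 : dist (f m + c) c ≤ ε / 2 :=
    le_of_tendsto (h2.dist tendsto_const_nhds) (hm.mono fun n hn => hn.le)
  rw [dist_eq_norm] at h3
  rw [dist_zero_right]
  simp only [add_sub_cancel_right] at h3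
  linarith

theorem exists_rec : ∃ p : Ultrafilter ℕ+, (∀ b ε : ℝ, 0 < ε → ∀ᶠ n : ℕ+ in p, nd (b * (n : ℕ)) < ε) ∧
    (∀ b ε : ℝ, 0 < ε → ∀ᶠ n : ℕ+ in p, nd (b * ((n : ℕ) : ℝ) ^ 2) < ε) := by
  obtain ⟨p, hp⟩ := exists_idem
  have key1 : ∀ b : ℝ, Tendsto (fun n : ℕ+ => ((b * (n : ℕ) : ℝ) : UnitAddCircle)) p (𝓝 0) := by
    intro b
    apply idem_lim p hp
    intro m c h
    have := h.const_add ((b * (m : ℕ) : ℝ) : UnitAddCircle)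
    refine this.congr fun n => ?_
    rw [← AddCircle.coe_add]
    congr 1
    push_cast
    ring
  have key2 : ∀ b : ℝ, Tendsto (fun n : ℕ+ => ((b * ((n : ℕ) : ℝ) ^ 2 : ℝ) : UnitAddCircle))
      p (𝓝 0) := by
    intro b
    apply idem_lim p hp
    intro m c h
    have := (h.const_add ((b * ((m : ℕ) : ℝ) ^ 2 : ℝ) : UnitAddCircle)).add
      (key1 (2 * b * (m : ℕ)))
    rw [add_zero] at this
    refine this.congr fun n => ?_
    rw [← AddCircle.coe_add, ← AddCircle.coe_add]
    congr 1
    push_cast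
    ring
  refine ⟨p, fun b ε hε => ?_, fun b ε hε => ?_⟩
  · filter_upwards [(Metric.tendsto_nhds.1 (key1 b)) ε hε] with n hn
    simpa [nd] using hn
  · filter_upwards [(Metric.tendsto_nhds.1 (key2 b)) ε hε] with n hn
    simpa [nd] using hn

/-- Simultaneous recurrence. -/
theorem rec4 (a b c d ε : ℝ) (hε : 0 < ε) : ∃ u : ℤ, 0 < u ∧ nd (a * u) < ε ∧ nd (b * u) < ε ∧
    nd (c * u) < ε ∧ nd (d * (u : ℝ) ^ 2) < ε := by
  obtain ⟨p, h1, h2⟩ := exists_rec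
  obtain ⟨n, ha, hb, hc, hd⟩ := ((h1 a ε hε).and ((h1 b ε hε).and ((h1 c ε hε).and
    (h2 d ε hε)))).exists
  refine ⟨((n : ℕ) : ℤ), by exact_mod_cast n.pos, ?_⟩
  simp only [Int.cast_natCast]
  exact ⟨ha, hb, hc, hd⟩

theorem syndetic (b c ε : ℝ) (hε : 0 < ε) : ∃ L : ℕ, ∀ n : ℤ, ∃ r : ℤ, |(r : ℝ)| ≤ L ∧
    nd (b * (n - r)) < ε ∧ nd (c * (n - r)) < ε := by
  let f : ℤ → UnitAddCircle × UnitAddCircle :=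
    fun n => (((b * n : ℝ) : UnitAddCircle), ((c * n : ℝ) : UnitAddCircle))
  have hT : TotallyBounded (Set.range f) :=
    (isCompact_univ.totallyBounded).subset (Set.subset_univ _)
  obtain ⟨t, hts, htf, hcov⟩ := Metric.finite_approx_of_totallyBounded hT ε hε
  have : ∀ y : t, ∃ r, f r = y := fun y => hts y.2
  choose R hR using this
  have : Fintype t := htf.fintype
  refine ⟨∑ y : t, (R y).natAbs, fun n => ?_⟩
  have hn : f n ∈ ⋃ y ∈ t, Metric.ball y ε := hcov ⟨n, rfl⟩
  simp only [Set.mem_iUnion] at hn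
  obtain ⟨y, hy, hd⟩ := hn
  refine ⟨R ⟨y, hy⟩, ?_, ?_⟩
  · have h1 : (R ⟨y, hy⟩).natAbs ≤ ∑ y : t, (R y).natAbs :=
      Finset.single_le_sum (f := fun y : t => (R y).natAbs) (fun _ _ => Nat.zero_le _)
        (Finset.mem_univ _)
    rw [← Int.cast_abs, Int.abs_eq_natAbs, Int.cast_natCast]
    exact_mod_cast h1
  · have h2 := hR ⟨y, hy⟩
    simp only at h2
    rw [← h2, Metric.mem_ball, Prod.dist_eq, max_lt_iff, dist_eq_norm, dist_eq_norm] at hd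
    simp only [f, ← AddCircle.coe_sub, ← mul_sub] at hd
    exact hd

theorem irr_ne {α : ℝ} (h : Irrational α) (u : ℤ) (hu : u ≠ 0) :
    2 * α * u - round (2 * α * u) ≠ 0 := by
  intro h0
  have : Irrational (2 * α * u) := by
    have := (h.mul_intCast hu).mul_intCast (m := 2) (by norm_num)
    convert this using 1
    push_cast
    ring
  exact this.ne_int _ (sub_eq_zero.1 h0)

theorem L0 (α : ℝ) (h : Irrational α) (b c x δ : ℝ) (hδ : 0 < δ) : ∃ j : ℤ,
    nd (b * j) < δ ∧ nd (c * j) < δ ∧ nd (α * (j : ℝ) ^ 2 - x) < δ := by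
  obtain ⟨e, he, hed⟩ : ∃ e : ℝ, 0 < e ∧ δ = 4 * e := ⟨δ / 4, by positivity, by ring⟩
  obtain ⟨L, hL⟩ := syndetic b c e he
  obtain ⟨V, hV⟩ := exists_nat_gt (1 / e)
  have hV0 : (0 : ℝ) < V := lt_trans (by positivity) hV
  have hVe : 1 / (V : ℝ) < e := by
    rw [div_lt_iff₀ he] at hV
    rw [div_lt_iff₀ hV0]; linarith
  have hV1 : (1 : ℝ) ≤ V := by
    have : 0 < V := by exact_mod_cast hV0
    exact_mod_cast this
  have hLn : (0 : ℝ) ≤ L := Nat.cast_nonneg L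
  obtain ⟨u, hu0, hub, huc, hua, huq⟩ := rec4 b c (2 * α) α (e / (V ^ 2 * (L + 1)))
    (by positivity)
  have hsm : e / (V ^ 2 * (L + 1)) * V ^ 2 ≤ e := by
    have : e / (V ^ 2 * (L + 1)) * V ^ 2 = e / (L + 1) := by field_simp
    rw [this]
    exact div_le_self he.le (by linarith)
  have hsm1 : e / (V ^ 2 * (L + 1)) * V ≤ e := by
    refine le_trans ?_ hsm
    gcongr
    nlinarith
  have hsm2 : e / (V ^ 2 * (L + 1)) * (L + 1) * V ≤ e := by
    have : e / (V ^ 2 * (L + 1)) * (L + 1) * V = e / V := by field_simp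
    rw [this]
    exact div_le_self he.le hV1
  set κ := e / (V ^ 2 * (L + 1)) with hκ
  have hκ0 : 0 < κ := by positivity
  set τ := 2 * α * u - round (2 * α * u) with hτ
  have hτ0 : τ ≠ 0 := irr_ne h u hu0.ne'
  rw [nd_eq, ← hτ] at hua
  set n := round (1 / (V : ℝ) / τ) with hn
  have hnτ : |n * τ - 1 / V| ≤ |τ| := by
    have h1 := abs_sub_round (1 / (V : ℝ) / τ)
    have h2 : n * τ - 1 / V = -((1 / (V : ℝ) / τ - n) * τ) := by field_simp; ring
    rw [h2, abs_neg, abs_mul]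
    have := abs_nonneg τ
    nlinarith
  obtain ⟨r, hr, hb, hc⟩ := hL n
  set s : ℤ := n - r with hs
  have hsr : (s : ℝ) = n - r := by push_cast [hs]; ring
  rw [← hsr] at hb hc
  have hθ : nd (2 * α * u * s - 1 / V) ≤ κ * (L + 1) := by
    have h1 : 2 * α * u * s - 1 / V = (n * τ - 1 / V - r * τ) + (round (2 * α * u) * s : ℤ) := by
      push_cast
      rw [hsr, hτ]; ring
    rw [h1, nd_add_int]
    refine (nd_le_abs _).trans ((abs_sub _ _).trans ?_)
    rw [abs_mul]
    have := abs_nonneg τ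
    have : |(r : ℝ)| * |τ| ≤ L * κ := mul_le_mul hr hua.le this hLn
    linarith
  set y := Int.fract (x - α * s ^ 2) with hy
  set v : ℤ := ⌊y * V⌋ with hv
  have hy0 : 0 ≤ y := Int.fract_nonneg _
  have hy1 : y < 1 := Int.fract_lt_one _
  have hv0 : (0 : ℝ) ≤ v := by
    have : 0 ≤ v := Int.floor_nonneg.2 (by positivity)
    exact_mod_cast this
  have hvy : (v : ℝ) ≤ y * V := Int.floor_le _
  have hvy2 : y * V < v + 1 := Int.lt_floor_add_one _
  have hvV : (v : ℝ) ≤ V := by nlinarith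
  have hlin : ∀ b : ℝ, nd (b * u) < κ → nd (b * s) < e → nd (b * (s + u * v : ℤ)) < δ := by
    intro b h1 h2
    have h3 : b * (s + u * v : ℤ) = b * s + v * (b * u) := by push_cast; ring
    rw [h3]
    have h4 := nd_add (b * s) (v * (b * u))
    have h5 := nd_int_mul v (b * u)
    rw [abs_of_nonneg hv0] at h5
    have h6 : v * nd (b * u) ≤ V * κ := mul_le_mul hvV h1.le (nd_nonneg _) hV0.le
    linarith
  refine ⟨s + u * v, hlin b hub hb, hlin c huc hc, ?_⟩
  have e1 : α * ((s + u * v : ℤ) : ℝ) ^ 2 - x =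
      (v * (1 / V) - y) + (v * (2 * α * u * s - 1 / V)) + ((v ^ 2 : ℤ) * (α * u ^ 2))
        - (⌊x - α * s ^ 2⌋ : ℤ) := by
    rw [hy, Int.fract]
    push_cast
    ring
  rw [e1, nd_sub_int]
  have h1 := nd_add (v * (1 / V) - y + (v * (2 * α * u * s - 1 / V))) ((v ^ 2 : ℤ) * (α * u ^ 2))
  have h2 := nd_add (v * (1 / V) - y) (v * (2 * α * u * s - 1 / V))
  have h3 : nd (v * (1 / V) - y) ≤ e := by
    refine (nd_le_abs _).trans ?_
    have : v * (1 / (V : ℝ)) - y = (v - y * V) * (1 / V) := by field_simp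
    rw [this, abs_mul, abs_of_nonneg (by positivity : 0 ≤ 1 / (V : ℝ))]
    have h4 : |v - y * V| ≤ 1 := by rw [abs_le]; constructor <;> linarith
    have : 0 ≤ 1 / (V : ℝ) := by positivity
    nlinarith
  have h4 := nd_int_mul v (2 * α * u * s - 1 / V)
  rw [abs_of_nonneg hv0] at h4
  have h5 : v * nd (2 * α * u * s - 1 / V) ≤ V * (κ * (L + 1)) :=
    mul_le_mul hvV hθ (nd_nonneg _) hV0.le
  have h6 := nd_int_mul (v ^ 2) (α * u ^ 2)
  have h7 : |((v ^ 2 : ℤ) : ℝ)| ≤ V ^ 2 := by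
    push_cast
    rw [abs_of_nonneg (by positivity)]
    gcongr
  have h8 : |((v ^ 2 : ℤ) : ℝ)| * nd (α * u ^ 2) ≤ V ^ 2 * κ :=
    mul_le_mul h7 huq.le (nd_nonneg _) (by positivity)
  linarith

theorem L1 (α : ℝ) (h : Irrational α) (b : ℝ) (k0 : ℤ) (x δ : ℝ) (hδ : 0 < δ) : ∃ k : ℤ,
    0 < k ∧ nd (b * (k - k0)) < δ ∧ nd (α * (k : ℝ) ^ 2 - x) < δ := by
  obtain ⟨j, hb, hc, ha⟩ := L0 α h b (2 * α * k0) (x - α * k0 ^ 2) (δ / 4) (by positivity)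
  set k1 : ℤ := k0 + j with hk1
  set K : ℤ := |k1| + 1 with hK
  obtain ⟨w, hw, h1, h2, -, h3⟩ := rec4 (b * K) (2 * α * k1 * K) 0 (α * K ^ 2) (δ / 4)
    (by positivity)
  refine ⟨k1 + K * w, ?_, ?_, ?_⟩
  · have := neg_abs_le k1
    have := abs_nonneg k1
    nlinarith
  · have e1 : b * (((k1 + K * w : ℤ) : ℝ) - k0) = b * j + b * K * w := by
      push_cast [hk1]; ring
    rw [e1]
    linarith [nd_add (b * j) (b * K * w)]
  · have e1 : α * ((k1 + K * w : ℤ) : ℝ) ^ 2 - x = ((α * j ^ 2 - (x - α * k0 ^ 2)) +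
        2 * α * k0 * j) + 2 * α * k1 * K * w + α * K ^ 2 * w ^ 2 := by
      push_cast [hk1]; ring
    rw [e1]
    have i1 := nd_add (((α * j ^ 2 - (x - α * k0 ^ 2)) +
        2 * α * k0 * j) + 2 * α * k1 * K * w) (α * K ^ 2 * w ^ 2)
    have i2 := nd_add ((α * j ^ 2 - (x - α * k0 ^ 2)) +
        2 * α * k0 * j) (2 * α * k1 * K * w)
    have i3 := nd_add (α * j ^ 2 - (x - α * k0 ^ 2)) (2 * α * k0 * j)
    linarith

theorem rot (α : ℝ) (h : Irrational α) (θ δ : ℝ) (hδ : 0 < δ) : ∃ k : ℤ,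
    nd (2 * α * k - θ) < δ := by
  obtain ⟨u, hu0, hu, -⟩ := rec4 (2 * α) 0 0 0 δ hδ
  set τ := 2 * α * u - round (2 * α * u) with hτ
  have hτ0 : τ ≠ 0 := irr_ne h u hu0.ne'
  rw [nd_eq, ← hτ] at hu
  refine ⟨u * round (θ / τ), ?_⟩
  have h1 := abs_sub_round (θ / τ)
  have h2 : 2 * α * (u * round (θ / τ) : ℤ) - θ = -((θ / τ - round (θ / τ)) * τ) +
      (round (2 * α * u) * round (θ / τ) : ℤ) := by
    have : θ / τ * τ = θ := by field_simp
    push_cast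
    rw [sub_mul, this, hτ]
    ring
  rw [h2, nd_add_int]
  refine (nd_le_abs _).trans_lt ?_
  rw [abs_neg, abs_mul]
  have := abs_nonneg τ
  nlinarith

theorem shift_bad (α : ℝ) (h : Irrational α) (ρ : ℝ) (hρ0 : 0 < ρ) (hρ4 : ρ < 1 / 4)
    (t f : ℝ) (ht : 0 < nd t) : ∃ k : ℤ, 0 < k ∧ nd (α * (k : ℝ) ^ 2) < ρ ∧
      ρ < nd (α * (k : ℝ) ^ 2 + k * t + f) := by
  obtain ⟨k0, hk0⟩ : ∃ k0 : ℤ, 0 < nd (f + k0 * t) := by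
    by_cases hf : 0 < nd f
    · exact ⟨0, by simpa using hf⟩
    · refine ⟨1, ?_⟩
      have h1 := nd_sub (f + t) f
      rw [add_sub_cancel_left] at h1
      push_cast
      rw [one_mul]
      linarith
  set s := f + k0 * t with hs
  set σ := s - round s with hσ
  have hσa : 0 < |σ| := by rwa [nd_eq] at hk0
  have hσh : |σ| ≤ 1 / 2 := abs_sub_round s
  obtain ⟨d, hd0, hd1, hd2⟩ : ∃ d : ℝ, 0 < d ∧ d ≤ |σ| / 2 ∧ d ≤ ρ :=
    ⟨min (|σ| / 2) ρ, lt_min (by linarith) hρ0, min_le_left _ _, min_le_right _ _⟩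
  obtain ⟨x, hx1, hx2⟩ : ∃ x : ℝ, |x| ≤ ρ - d ∧ ρ + d ≤ nd (x + σ) := by
    rcases lt_or_gt_of_ne (abs_pos.1 hσa) with hn | hp
    · rw [abs_of_neg hn] at *
      refine ⟨-(ρ - d), ?_, ?_⟩
      · rw [abs_neg, abs_of_nonneg (by linarith)]
      · rw [← nd_neg]
        apply nd_of_mem <;> linarith
    · rw [abs_of_pos hp] at *
      refine ⟨ρ - d, ?_, ?_⟩
      · rw [abs_of_nonneg (by linarith)]
      · apply nd_of_mem <;> linarith
  obtain ⟨k, hk, h1, h2⟩ := L1 α h t k0 x (d / 3) (by positivity)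
  refine ⟨k, hk, ?_, ?_⟩
  · have i1 := nd_add (α * (k : ℝ) ^ 2 - x) x
    rw [sub_add_cancel] at i1
    have i2 := nd_le_abs x
    linarith
  · have e1 : x + σ = (α * (k : ℝ) ^ 2 + k * t + f) - (α * (k : ℝ) ^ 2 - x) - t * (k - k0)
        - (round s : ℤ) := by
      rw [hσ, hs]; ring
    rw [e1, nd_sub_int] at hx2
    have i1 := nd_sub ((α * (k : ℝ) ^ 2 + k * t + f) - (α * (k : ℝ) ^ 2 - x)) (t * (k - k0))
    have i2 := nd_sub (α * (k : ℝ) ^ 2 + k * t + f) (α * (k : ℝ) ^ 2 - x)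
    linarith

theorem unif_bad (α : ℝ) (h : Irrational α) (ρ : ℝ) (hρ0 : 0 < ρ) (hρ4 : ρ < 1 / 4)
    (ε : ℝ) (hε : 0 < ε) : ∃ N : ℕ, ∀ t f : ℝ, ε ≤ nd t → ∃ k : ℤ, 0 < k ∧ k ≤ N ∧
      nd (α * (k : ℝ) ^ 2) < ρ ∧ ρ < nd (α * (k : ℝ) ^ 2 + k * t + f) := by
  let U : ℕ → Set (UnitAddCircle × UnitAddCircle) := fun N => {z | ∃ k : ℤ, 0 < k ∧ k ≤ N ∧
      nd (α * (k : ℝ) ^ 2) < ρ ∧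
      ρ < ‖((α * (k : ℝ) ^ 2 : ℝ) : UnitAddCircle) + k • z.1 + z.2‖}
  let S : Set (UnitAddCircle × UnitAddCircle) := {z | ε ≤ ‖z.1‖}
  have hcoe : ∀ (k : ℤ) (t f : ℝ), ‖((α * (k : ℝ) ^ 2 : ℝ) : UnitAddCircle) +
      k • (t : UnitAddCircle) + (f : UnitAddCircle)‖ = nd (α * (k : ℝ) ^ 2 + k * t + f) := by
    intro k t f
    unfold nd
    rw [← AddCircle.coe_zsmul, zsmul_eq_mul, ← AddCircle.coe_add, ← AddCircle.coe_add]
  have hS : IsCompact S := by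
    apply IsClosed.isCompact
    exact isClosed_le continuous_const (by fun_prop)
  have hU : ∀ N, IsOpen (U N) := by
    intro N
    have : U N = ⋃ k : ℤ, {z | (0 < k ∧ k ≤ N ∧ nd (α * (k : ℝ) ^ 2) < ρ) ∧
        ρ < ‖((α * (k : ℝ) ^ 2 : ℝ) : UnitAddCircle) + k • z.1 + z.2‖} := by
      ext z
      simp only [U, Set.mem_ofPred_eq, Set.mem_iUnion, and_assoc]
    rw [this]
    refine isOpen_iUnion fun k => ?_
    rw [Set.ofPred_and]
    exact isOpen_const.inter (isOpen_lt continuous_const (by fun_prop))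
  have hcov : S ⊆ ⋃ N, U N := by
    rintro ⟨z, w⟩ hz
    induction z using QuotientAddGroup.induction_on with | _ t
    induction w using QuotientAddGroup.induction_on with | _ f
    obtain ⟨k, hk, h1, h2⟩ := shift_bad α h ρ hρ0 hρ4 t f (lt_of_lt_of_le hε hz)
    rw [Set.mem_iUnion]
    exact ⟨k.toNat, k, hk, Int.self_le_toNat k, h1, (hcoe k t f).symm ▸ h2⟩
  have hdir : Directed (· ⊆ ·) U := by
    apply Monotone.directed_le
    rintro a b hab z ⟨k, hk, hka, hz⟩
    exact ⟨k, hk, hka.trans (by exact_mod_cast hab), hz⟩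
  obtain ⟨N, hN⟩ := hS.elim_directed_cover U hU hcov hdir
  refine ⟨N, fun t f ht => ?_⟩
  have hm : ((t : UnitAddCircle), (f : UnitAddCircle)) ∈ S := ht
  obtain ⟨k, hk, hkN, h1, h2⟩ := hN hm
  exact ⟨k, hk, hkN, h1, hcoe k t f ▸ h2⟩

theorem fin_pos (F : ℤ → ℝ) (M : ℕ) (hF : ∀ k : ℤ, 0 < k → k ≤ M → 0 < F k) :
    ∃ η : ℝ, 0 < η ∧ ∀ k : ℤ, 0 < k → k ≤ M → η ≤ F k := by
  induction M with
  | zero => exact ⟨1, one_pos, fun k h1 h2 => by push_cast at h2; omega⟩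
  | succ M ih =>
    obtain ⟨η, hη, h⟩ := ih fun k h1 h2 => hF k h1 (by push_cast; omega)
    refine ⟨min η (F (M + 1)), lt_min hη (hF _ (by omega) (by push_cast; omega)), fun k h1 h2 => ?_⟩
    rcases eq_or_ne k (M + 1) with rfl | hne
    · exact min_le_right _ _
    · exact (min_le_left _ _).trans (h k h1 (by push_cast at h2; omega))

theorem part_a (α : ℝ) (h : Irrational α) (ρ : ℝ) (hρ0 : 0 < ρ) (hρ4 : ρ < 1 / 4) (g : ℤ → ℤ)
    (hg1 : ∀ n : ℤ, nd (α * (n : ℝ) ^ 2) < ρ → g n = 1)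
    (hg0 : ∀ n : ℤ, ρ ≤ nd (α * (n : ℝ) ^ 2) → g n = 0) (ε : ℝ) (hε : 0 < ε) :
    ∃ N : ℤ, 0 < N ∧ ∀ m : ℤ, 0 < m → lam g m N → nd (2 * α * m) < ε := by
  obtain ⟨N, hN⟩ := unif_bad α h ρ hρ0 hρ4 (ε / 2) (by positivity)
  have key : ∀ n : ℤ, mu g n (N + 1) → nd (2 * α * n) < ε / 2 := by
    intro n hn
    by_contra hc
    obtain ⟨k, hk, hkN, h1, h2⟩ := hN (2 * α * n) (α * (n : ℝ) ^ 2) (not_lt.1 hc)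
    have h3 := hn k hk (by omega)
    rw [hg1 k h1, hg0 (k + n)] at h3
    · exact absurd h3 (by norm_num)
    · have : α * ((k + n : ℤ) : ℝ) ^ 2 = α * (k : ℝ) ^ 2 + k * (2 * α * n) + α * (n : ℝ) ^ 2 := by
        push_cast; ring
      rw [this]
      exact h2.le
  refine ⟨N + 1, by omega, ?_⟩
  rintro m - ⟨n, -, h1, h2⟩
  have i1 := key _ h1
  have i2 := key _ h2
  have i3 := nd_sub (2 * α * (n + m : ℤ)) (2 * α * n)
  have e1 : 2 * α * (n + m : ℤ) - 2 * α * n = 2 * α * m := by push_cast; ring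
  rw [e1] at i3
  linarith

theorem part_b (α : ℝ) (h : Irrational α) (ρ : ℝ) (g : ℤ → ℤ)
    (hb : ∀ k : ℤ, 0 < k → nd (α * (k : ℝ) ^ 2) ≠ ρ)
    (hg1 : ∀ n : ℤ, nd (α * (n : ℝ) ^ 2) < ρ → g n = 1)
    (hg0 : ∀ n : ℤ, ρ ≤ nd (α * (n : ℝ) ^ 2) → g n = 0) (N : ℤ) (hN : 0 < N) :
    ∃ ε : ℝ, 0 < ε ∧ ∀ m : ℤ, 0 < m → nd (2 * α * m) < ε → lam g m N := by
  obtain ⟨η, hη, hηb⟩ := fin_pos (fun k => |nd (α * (k : ℝ) ^ 2) - ρ|) N.toNat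
    (fun k hk _ => abs_pos.2 (sub_ne_zero.2 (hb k hk)))
  have hNr : (0 : ℝ) < N := by exact_mod_cast hN
  obtain ⟨e, he, hee⟩ : ∃ e : ℝ, 0 < e ∧ e * (N + 1) = η / 2 :=
    ⟨η / 2 / (N + 1), by positivity, by field_simp⟩
  have hmu : ∀ n : ℤ, nd (2 * α * n) < e → nd (α * (n : ℝ) ^ 2) < e → mu g n N := by
    intro n h1 h2 k hk hkN
    have hkr : (k : ℝ) ≤ N := by exact_mod_cast hkN
    have hk0 : (0 : ℝ) < k := by exact_mod_cast hk
    have hd : nd (k * (2 * α * n) + α * (n : ℝ) ^ 2) < η := by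
      have i1 := nd_add (k * (2 * α * n)) (α * (n : ℝ) ^ 2)
      have i2 := nd_int_mul k (2 * α * n)
      rw [abs_of_pos hk0] at i2
      have i3 : k * nd (2 * α * n) ≤ N * e := mul_le_mul hkr h1.le (nd_nonneg _) hNr.le
      linarith
    have e1 : α * ((k + n : ℤ) : ℝ) ^ 2 = α * (k : ℝ) ^ 2 +
        (k * (2 * α * n) + α * (n : ℝ) ^ 2) := by
      push_cast; ring
    have hk1 := hηb k hk (by rw [Int.toNat_of_nonneg hN.le]; exact hkN)
    have i1 := nd_add (α * (k : ℝ) ^ 2) (k * (2 * α * n) + α * (n : ℝ) ^ 2)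
    have i2 := nd_sub (α * ((k + n : ℤ) : ℝ) ^ 2) (k * (2 * α * n) + α * (n : ℝ) ^ 2)
    rw [← e1] at i1
    rw [e1, add_sub_cancel_right, ← e1] at i2
    rcases lt_or_ge (nd (α * (k : ℝ) ^ 2)) ρ with hlt | hge
    · rw [abs_of_neg (by linarith)] at hk1
      rw [hg1 k hlt, hg1 (k + n) (by linarith)]
    · rw [abs_of_nonneg (by linarith)] at hk1
      rw [hg0 k hge, hg0 (k + n) (by linarith)]
  obtain ⟨M, hM⟩ := exists_nat_gt (2 / e)
  obtain ⟨ε', hε', hεM⟩ := fin_pos (fun k => nd (2 * α * k)) M (fun k hk _ => by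
    simp only [nd_eq]
    exact abs_pos.2 (irr_ne h k hk.ne'))
  refine ⟨min ε' (e / 2), lt_min hε' (by positivity), fun m hm hms => ?_⟩
  obtain ⟨hm1, hm2⟩ := lt_min_iff.1 hms
  have hmM : (M : ℤ) < m := by
    by_contra hc
    exact absurd (hεM m hm (not_lt.1 hc)) (not_le.2 hm1)
  have hmMr : (M : ℝ) < m := by exact_mod_cast hmM
  have hm0 : (0 : ℝ) < m := by exact_mod_cast hm
  have hme : 1 / (m : ℝ) < e / 2 := by
    have : 2 / e < m := hM.trans hmMr
    rw [div_lt_iff₀ he] at this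
    rw [div_lt_iff₀ hm0]
    linarith
  set q := α * (m : ℝ) ^ 2 - round (α * (m : ℝ) ^ 2) with hq
  have hq1 : |q| ≤ 1 / 2 := abs_sub_round _
  set θ := -q / m with hθ
  have hmθ : m * θ = -q := by rw [hθ]; field_simp
  have hθ1 : |θ| ≤ 1 / 2 * (1 / m) := by
    rw [hθ, abs_div, abs_neg, abs_of_pos hm0, div_eq_mul_one_div]
    gcongr
  obtain ⟨δ, hδ, hδm⟩ : ∃ δ : ℝ, 0 < δ ∧ δ * m = e / 8 := ⟨e / 8 / m, by positivity, by field_simp⟩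
  have hm1' : (1 : ℝ) ≤ m := by exact_mod_cast hm
  have hδe : δ ≤ e / 8 := by nlinarith
  obtain ⟨k0, hk0⟩ := rot α h θ δ hδ
  obtain ⟨n, hn, hn1, hn2⟩ := L1 α h (2 * α) k0 0 δ hδ
  rw [sub_zero] at hn2
  have hnθ : nd (2 * α * n - θ) < 2 * δ := by
    have i1 := nd_add (2 * α * (n - k0)) (2 * α * k0 - θ)
    have e1 : 2 * α * (n - k0) + (2 * α * k0 - θ) = 2 * α * n - θ := by ring
    rw [e1] at i1
    linarith
  have hn3 : nd (2 * α * n) < e / 2 := by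
    have i1 := nd_add (2 * α * n - θ) θ
    rw [sub_add_cancel] at i1
    have i2 := nd_le_abs θ
    linarith
  refine ⟨n, hn, hmu n (by linarith) (by linarith), hmu (n + m) ?_ ?_⟩
  · have i1 := nd_add (2 * α * n) (2 * α * m)
    have e1 : 2 * α * n + 2 * α * m = 2 * α * (n + m : ℤ) := by push_cast; ring
    rw [e1] at i1
    linarith
  · have e1 : α * ((n + m : ℤ) : ℝ) ^ 2 = α * (n : ℝ) ^ 2 + m * (2 * α * n - θ)
        + (round (α * (m : ℝ) ^ 2) : ℤ) := by
      rw [mul_sub, hmθ, hq]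
      push_cast; ring
    rw [e1, nd_add_int]
    have i1 := nd_add (α * (n : ℝ) ^ 2) (m * (2 * α * n - θ))
    have i2 := nd_int_mul m (2 * α * n - θ)
    rw [abs_of_pos hm0] at i2
    have i3 : m * nd (2 * α * n - θ) ≤ m * (2 * δ) := by gcongr
    linarith

end Helpers

open scoped Classical in
theorem statement (α ρ : ℝ) (hρ0 : 0 < ρ) (hρ4 : ρ < 1 / 4)
    (hα : ¬ ∃ q r : ℚ, α = (q : ℝ) + (r : ℝ) * ρ)
    (g : ℤ → ℤ)
    (hg : ∀ n : ℤ, g n = if |α * n ^ 2 - round (α * n ^ 2)| < ρ then 1 else 0) :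
    (∀ ε : ℝ, 0 < ε → ∃ N : ℤ, 0 < N ∧ ∀ m : ℤ, 0 < m → lam g m N →
        |2 * α * m - round (2 * α * m)| < ε) ∧
      (∀ N : ℤ, 0 < N → ∃ ε : ℝ, 0 < ε ∧ ∀ m : ℤ, 0 < m →
        |2 * α * m - round (2 * α * m)| < ε → lam g m N) := by
  have hirr : Irrational α := by
    rintro ⟨q, hq⟩
    exact hα ⟨q, 0, by simp [hq]⟩
  have hb : ∀ k : ℤ, 0 < k → nd (α * (k : ℝ) ^ 2) ≠ ρ := by
    intro k hk h
    have hk0 : (k : ℝ) ≠ 0 := by exact_mod_cast hk.ne'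
    rw [nd_eq] at h
    rcases abs_choice (α * (k : ℝ) ^ 2 - round (α * (k : ℝ) ^ 2)) with h1 | h1
    · rw [h1] at h
      refine hα ⟨(round (α * (k : ℝ) ^ 2) : ℚ) / k ^ 2, 1 / k ^ 2, ?_⟩
      rw [← h]
      push_cast
      field_simp
      ring
    · rw [h1] at h
      refine hα ⟨(round (α * (k : ℝ) ^ 2) : ℚ) / k ^ 2, -1 / k ^ 2, ?_⟩
      rw [← h]
      push_cast
      field_simp
      ring
  have hg1 : ∀ n : ℤ, nd (α * (n : ℝ) ^ 2) < ρ → g n = 1 := by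
    intro n hn
    rw [nd_eq] at hn
    rw [hg, if_pos hn]
  have hg0 : ∀ n : ℤ, ρ ≤ nd (α * (n : ℝ) ^ 2) → g n = 0 := by
    intro n hn
    rw [nd_eq] at hn
    rw [hg, if_neg (not_lt.2 hn)]
  refine ⟨fun ε hε => ?_, fun N hN => ?_⟩
  · simpa only [nd_eq] using part_a α hirr ρ hρ0 hρ4 g hg1 hg0 ε hε
  · simpa only [nd_eq] using part_b α hirr ρ g hb hg1 hg0 N hN

end Stmt15
end

section
/- The following two assertions hold: (a) for every ε > 0 there exists a positive integer N such that for every positive integer m, if κ(m, N) holds then ‖α·m²‖ < ε; (b) for every positive integer N there exists ε > 0 such that for every positive integer m, if ‖α·m²‖ < ε then κ(m, N) holds. -/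
/-!
STATEMENT 16: κ(m, N) characterises smallness of ‖α·m²‖.
-/

namespace Stmt16

/-- `μ(m, N)`: `g(n + m) = g(n)` for every positive integer `n ≤ N`. -/
def mu (g : ℤ → ℤ) (m N : ℤ) : Prop :=
  ∀ n : ℤ, 0 < n → n ≤ N → g (n + m) = g n

/-- `λ(m, N)`: there is a positive integer `n` with `μ(n, N)` and `μ(n + m, N)`. -/
def lam (g : ℤ → ℤ) (m N : ℤ) : Prop :=
  ∃ n : ℤ, 0 < n ∧ mu g n N ∧ mu g (n + m) N

/-- `κ(m, N)`. -/
def kap (g : ℤ → ℤ) (m N : ℤ) : Prop :=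
  ∃ M : ℤ, 0 < M ∧ ∀ h : ℤ, 0 < h → g h = 1 → lam g h M →
    ∀ L : ℤ, 0 < L → ∃ n : ℤ, 0 < n ∧ lam g n L ∧ mu g n N ∧ g (h + m + n) = 1

/-- `ν(m, m̃, N)`. -/
def nu (g : ℤ → ℤ) (m mt N : ℤ) : Prop :=
  ∃ L : ℤ, 0 < L ∧ ∀ n : ℤ, 0 < n → lam g n L → kap g (m + n) L → kap g (mt + n) N

/-- `δ(m, m̃)`. -/
def del (g : ℤ → ℤ) (m mt : ℤ) : Prop :=
  ∀ N : ℤ, 0 < N → ∃ L : ℤ, 0 < L ∧ ∀ n : ℤ, 0 < n →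
    nu g (m + n) m L → kap g n L → nu g (mt + n) mt N


/-! ### Basic facts on the circle -/

lemma norm_coe_le_abs (x : ℝ) : ‖(x : UnitAddCircle)‖ ≤ |x| := by
  rw [UnitAddCircle.norm_eq]
  simpa using round_le x 0

lemma exists_rep (z : UnitAddCircle) :
    ∃ c : ℝ, (c : UnitAddCircle) = z ∧ ‖z‖ = |c| ∧ |c| ≤ 1 / 2 := by
  obtain ⟨x, rfl⟩ := QuotientAddGroup.mk_surjective z
  refine ⟨x - round x, ?_, ?_, abs_sub_round x⟩
  · have : ((x - round x : ℝ) : UnitAddCircle) = (x : UnitAddCircle) - ((round x : ℝ) : UnitAddCircle) := by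
      push_cast; rfl
    rw [this]
    have h0 : ((round x : ℝ) : UnitAddCircle) = 0 := by
      rw [AddCircle.coe_eq_zero_iff]
      exact ⟨round x, by simp⟩
    rw [h0, sub_zero]
  · exact UnitAddCircle.norm_eq

lemma coe_int_zero (p : ℤ) : ((p : ℝ) : UnitAddCircle) = 0 := by
  rw [AddCircle.coe_eq_zero_iff]
  exact ⟨p, by simp⟩

lemma norm_zsmul_le' (n : ℤ) (z : UnitAddCircle) : ‖n • z‖ ≤ |(n : ℝ)| * ‖z‖ := by
  simpa [Int.norm_eq_abs] using norm_zsmul_le n z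

/-- Syndeticity of Bohr sets. -/
lemma syndetic {E : Type*} [SeminormedAddCommGroup E] [CompactSpace E] (e : E) (η : ℝ)
    (hη : 0 < η) : ∃ G : ℕ, ∀ t : ℤ, ∃ v : ℤ, t ≤ v ∧ v ≤ t + G ∧ ‖v • e‖ < η := by
  have hc : IsCompact (closure (Set.range fun n : ℤ => n • e)) := isClosed_closure.isCompact
  obtain ⟨J, hJ⟩ := hc.elim_finite_subcover (fun j : ℤ => {z : E | ‖z + j • e‖ < η})
    (fun j => isOpen_lt (by fun_prop) continuous_const) (by
      intro z hz
      obtain ⟨_, ⟨n, rfl⟩, hn⟩ := Metric.mem_closure_iff.1 hz η hη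
      refine Set.mem_iUnion.2 ⟨-n, ?_⟩
      simp only [Set.mem_ofPred_eq, neg_smul]
      rwa [dist_eq_norm, sub_eq_add_neg] at hn)
  obtain ⟨A, hA⟩ : ∃ A : ℕ, ∀ j ∈ J, |j| ≤ A := by
    refine ⟨∑ j ∈ J, j.natAbs, fun j hj => ?_⟩
    have := Finset.single_le_sum (f := fun j : ℤ => j.natAbs) (fun _ _ => Nat.zero_le _) hj
    rw [Int.abs_eq_natAbs]
    exact_mod_cast this
  refine ⟨2 * A, fun t => ?_⟩
  have := hJ (subset_closure ⟨t + A, rfl⟩)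
  simp only [Set.mem_iUnion] at this
  obtain ⟨j, hj, h⟩ := this
  have h1 := abs_le.1 (hA j hj)
  refine ⟨t + A + j, by omega, by push_cast; omega, ?_⟩
  simp only [Set.mem_ofPred_eq] at h
  rwa [← add_smul] at h

/-! ### The quadratic phase -/

/-- The point `α n²` of the circle. -/
noncomputable def Q (α : ℝ) (n : ℤ) : UnitAddCircle := ((α * n ^ 2 : ℝ) : UnitAddCircle)

/-- The point `2 α` of the circle. -/
noncomputable def A2 (α : ℝ) : UnitAddCircle := ((2 * α : ℝ) : UnitAddCircle)

lemma zsmul_A2 (α : ℝ) (n : ℤ) : n • A2 α = ((2 * α * n : ℝ) : UnitAddCircle) := by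
  rw [A2, ← AddCircle.coe_zsmul]
  congr 1
  simp; ring

lemma Q_add (α : ℝ) (n m : ℤ) : Q α (n + m) = Q α n + (n * m) • A2 α + Q α m := by
  rw [zsmul_A2, Q, Q, Q, ← AddCircle.coe_add, ← AddCircle.coe_add]
  congr 1
  push_cast; ring

lemma zsmul_A2_ne (α : ℝ) (hα : Irrational α) (n : ℤ) (hn : n ≠ 0) : n • A2 α ≠ 0 := by
  rw [zsmul_A2]
  intro h
  rw [AddCircle.coe_eq_zero_iff] at h
  obtain ⟨p, hp⟩ := h
  have h1 : Irrational (2 * α * n) := by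
    have := (hα.mul_intCast hn).intCast_mul (m := 2) (by norm_num)
    push_cast at this
    rwa [← mul_assoc] at this
  apply h1
  exact ⟨p, by simp at hp; simp [hp]⟩

/-- `u, v` Bohr small with `2 α u v` near a prescribed point. -/
lemma bilinear {E : Type*} [SeminormedAddCommGroup E] [CompactSpace E] (e : E) (α : ℝ)
    (hα : Irrational α) (he : ∀ k : ℤ, ‖k • A2 α‖ ≤ ‖k • e‖) (c : UnitAddCircle) (η : ℝ)
    (hη : 0 < η) (K : ℤ) :
    ∃ u v : ℤ, K < u ∧ K < v ∧ ‖u • e‖ < η ∧ ‖v • e‖ < η ∧ ‖(u * v) • A2 α - c‖ < η := by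
  obtain ⟨G, hG⟩ := syndetic e η hη
  have hG1 : (0 : ℝ) < G + 1 := by positivity
  obtain ⟨G', hG'⟩ := syndetic e (min η (η / (G + 1))) (by positivity)
  obtain ⟨u, hu, -, hue⟩ := hG' (max (K + 1) 1)
  have hu1 : K + 1 ≤ u := le_trans (le_max_left _ _) hu
  have hu2 : 1 ≤ u := le_trans (le_max_right _ _) hu
  obtain ⟨δ, hδ, hδn, -⟩ := exists_rep (u • A2 α)
  have hδ0 : δ ≠ 0 := by
    rintro rfl
    exact zsmul_A2_ne α hα u (by omega) (by rw [← hδ]; simp)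
  have hδs : |δ| * (G + 1) < η := by
    rw [← lt_div_iff₀ hG1, ← hδn]
    exact lt_of_le_of_lt (he u) (lt_of_lt_of_le hue (min_le_right _ _))
  obtain ⟨c0, hc0, -, -⟩ := exists_rep c
  obtain ⟨p, hp⟩ : ∃ p : ℤ, (K + 1 : ℝ) ≤ (c0 + p) / δ := by
    rcases lt_or_gt_of_ne hδ0 with h | h
    · obtain ⟨p, hp⟩ := exists_int_lt ((K + 1) * δ - c0)
      exact ⟨p, by rw [le_div_iff_of_neg h]; linarith⟩
    · obtain ⟨p, hp⟩ := exists_int_gt ((K + 1) * δ - c0)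
      exact ⟨p, by rw [le_div_iff₀ h]; linarith⟩
  obtain ⟨v, hv1, hv2, hve⟩ := hG ⌈(c0 + p) / δ⌉
  have hv1' : (c0 + p) / δ ≤ v := Int.ceil_le.1 hv1
  have hv2' : (v : ℝ) < (c0 + p) / δ + 1 + G := by
    have h1 : (v : ℝ) ≤ ⌈(c0 + p) / δ⌉ + G := by exact_mod_cast hv2
    have := Int.ceil_lt_add_one ((c0 + p) / δ)
    linarith
  refine ⟨u, v, by omega, ?_, lt_of_lt_of_le hue (min_le_left _ _), hve, ?_⟩
  · have : (K + 1 : ℝ) ≤ v := by linarith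
    have : K + 1 ≤ v := by exact_mod_cast this
    omega
  · have h1 : (u * v) • A2 α - c = ((v * δ - (c0 + p) : ℝ) : UnitAddCircle) := by
      rw [mul_comm, mul_smul, ← hδ, ← hc0, ← AddCircle.coe_zsmul]
      rw [AddCircle.coe_sub, AddCircle.coe_add, coe_int_zero]
      simp
    rw [h1]
    refine lt_of_le_of_lt (norm_coe_le_abs _) (lt_of_le_of_lt ?_ hδs)
    have h2 : (v * δ - (c0 + p) : ℝ) = δ * (v - (c0 + p) / δ) := by
      field_simp
    rw [h2, abs_mul]
    apply mul_le_mul_of_nonneg_left _ (abs_nonneg _)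
    rw [abs_le]; constructor <;> linarith

/-- Limit values of `α k²` along Bohr-small `k`. -/
def limS {E : Type*} [SeminormedAddCommGroup E] (e : E) (α : ℝ) : Set UnitAddCircle :=
  {β | ∀ η : ℝ, 0 < η → ∀ K : ℤ, ∃ k : ℤ, K < k ∧ ‖k • e‖ < η ∧ ‖Q α k - β‖ < η}

lemma limS_add {E : Type*} [SeminormedAddCommGroup E] (e : E) (α : ℝ)
    (he : ∀ k : ℤ, ‖k • A2 α‖ ≤ ‖k • e‖) {a b : UnitAddCircle} (ha : a ∈ limS e α)
    (hb : b ∈ limS e α) : a + b ∈ limS e α := by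
  intro η hη K
  obtain ⟨k, hk, hke, hkQ⟩ := ha (η / 3) (by positivity) (max K 0)
  have hk1 : K < k := lt_of_le_of_lt (le_max_left _ _) hk
  have hk2 : 0 < k := lt_of_le_of_lt (le_max_right _ _) hk
  have hkR : (1 : ℝ) ≤ k := by exact_mod_cast hk2
  obtain ⟨l, hl, hle, hlQ⟩ := hb (η / 3 / k) (by positivity) 0
  have h3 : η / 3 / k ≤ η / 3 := div_le_self (by positivity) hkR
  refine ⟨k + l, by omega, ?_, ?_⟩
  · rw [add_smul]
    have := norm_add_le (k • e) (l • e)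
    linarith
  · have h1 : Q α (k + l) - (a + b) = (Q α k - a) + (Q α l - b) + k • (l • A2 α) := by
      rw [Q_add, mul_smul]; abel
    rw [h1]
    have h4 : ‖k • (l • A2 α)‖ < η / 3 := by
      refine lt_of_le_of_lt (norm_zsmul_le' _ _) ?_
      rw [abs_of_pos (by linarith), mul_comm, ← lt_div_iff₀ (by linarith)]
      exact lt_of_le_of_lt (he l) hle
    have := norm_add₃_le (a := Q α k - a) (b := Q α l - b) (c := k • (l • A2 α))
    linarith

lemma limS_closed {E : Type*} [SeminormedAddCommGroup E] (e : E) (α : ℝ) {a : UnitAddCircle}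
    (ha : ∀ η : ℝ, 0 < η → ∃ b ∈ limS e α, ‖b - a‖ < η) : a ∈ limS e α := by
  intro η hη K
  obtain ⟨b, hb, hba⟩ := ha (η / 2) (by positivity)
  obtain ⟨k, hk, hke, hkQ⟩ := hb (η / 2) (by positivity) K
  refine ⟨k, hk, by linarith, ?_⟩
  have := norm_add_le (Q α k - b) (b - a)
  rw [sub_add_sub_cancel] at this
  linarith

lemma limS_neg {E : Type*} [SeminormedAddCommGroup E] (e : E) (α : ℝ)
    (he : ∀ k : ℤ, ‖k • A2 α‖ ≤ ‖k • e‖) {a : UnitAddCircle} (ha : a ∈ limS e α) :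
    -a ∈ limS e α := by
  have hmul : ∀ j : ℕ, ((j + 1 : ℕ) : ℤ) • a ∈ limS e α := by
    intro j
    induction j with
    | zero => simpa using ha
    | succ j ih =>
      have := limS_add e α he ih ha
      rw [show ((j + 1 + 1 : ℕ) : ℤ) = ((j + 1 : ℕ) : ℤ) + 1 by push_cast; ring, add_smul, one_smul]
      exact this
  apply limS_closed
  intro η hη
  obtain ⟨G, hG⟩ := syndetic a η hη
  obtain ⟨v, hv, -, hva⟩ := hG 2
  refine ⟨((v - 2).toNat + 1 : ℕ) • a, by rw [← natCast_zsmul]; exact hmul (v - 2).toNat, ?_⟩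
  have h1 : ((v - 2).toNat + 1 : ℕ) • a - -a = v • a := by
    have : v = (((v - 2).toNat + 1 : ℕ) : ℤ) + 1 := by
      push_cast; rw [Int.toNat_of_nonneg (by omega)]; ring
    conv_rhs => rw [this, add_smul, one_smul]
    rw [sub_neg_eq_add, natCast_zsmul]
  rwa [h1]

lemma limS_univ {E : Type*} [SeminormedAddCommGroup E] [CompactSpace E] (e : E) (α : ℝ)
    (hα : Irrational α) (he : ∀ k : ℤ, ‖k • A2 α‖ ≤ ‖k • e‖) (c : UnitAddCircle) :
    c ∈ limS e α := by
  have hpos : ∀ n : ℕ, (0 : ℝ) < 1 / ((n : ℝ) + 1) := fun n => by positivity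
  choose u v hu hv hue hve huv using fun n : ℕ => bilinear e α hα he c (1 / ((n : ℝ) + 1)) (hpos n) n
  obtain ⟨⟨a, b⟩, φ, hφ, hlim⟩ := CompactSpace.tendsto_subseq (fun n => (Q α (u n), Q α (v n)))
  have hla : Filter.Tendsto (fun n => Q α (u (φ n))) Filter.atTop (nhds a) :=
    (continuous_fst.tendsto _).comp hlim
  have hlb : Filter.Tendsto (fun n => Q α (v (φ n))) Filter.atTop (nhds b) :=
    (continuous_snd.tendsto _).comp hlim
  have key : ∀ η : ℝ, 0 < η → ∀ K : ℤ, ∃ n : ℕ, K < u n ∧ K < v n ∧ 0 < u n ∧ 0 < v n ∧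
      ‖u n • e‖ < η ∧ ‖v n • e‖ < η ∧
      ‖(u n * v n) • A2 α - c‖ < η ∧ ‖Q α (u n) - a‖ < η ∧ ‖Q α (v n) - b‖ < η := by
    intro η hη K
    have e1 := Metric.tendsto_nhds.1 hla η hη
    have e2 := Metric.tendsto_nhds.1 hlb η hη
    have e3 := (tendsto_one_div_add_atTop_nhds_zero_nat (𝕜 := ℝ)).eventually (gt_mem_nhds hη)
    have e3' := hφ.tendsto_atTop.eventually e3
    have e4 := hφ.tendsto_atTop.eventually (Filter.eventually_ge_atTop K.toNat)
    obtain ⟨n, h1, h2, h3, h4⟩ := (e1.and (e2.and (e3'.and e4))).exists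
    have h5 := hu (φ n)
    have h6 := hv (φ n)
    have h7 := Int.self_le_toNat K
    refine ⟨φ n, by omega, by omega, by omega, by omega, (hue _).trans h3, (hve _).trans h3,
      (huv _).trans h3, ?_, ?_⟩
    · rwa [dist_eq_norm] at h1
    · rwa [dist_eq_norm] at h2
  have ha : a ∈ limS e α := by
    intro η hη K
    obtain ⟨n, h1, h2, h3, h4, h5, h6, h7, h8, h9⟩ := key η hη K
    exact ⟨u n, h1, h5, h8⟩
  have hb : b ∈ limS e α := by
    intro η hη K
    obtain ⟨n, h1, h2, h3, h4, h5, h6, h7, h8, h9⟩ := key η hη K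
    exact ⟨v n, h2, h6, h9⟩
  have hab : a + c + b ∈ limS e α := by
    intro η hη K
    obtain ⟨n, h1, h2, h3, h4, h5, h6, h7, h8, h9⟩ := key (η / 3) (by positivity) K
    refine ⟨u n + v n, by omega, ?_, ?_⟩
    · rw [add_smul]
      have := norm_add_le (u n • e) (v n • e)
      linarith
    · have h10 : Q α (u n + v n) - (a + c + b) =
          (Q α (u n) - a) + ((u n * v n) • A2 α - c) + (Q α (v n) - b) := by
        rw [Q_add]; abel
      rw [h10]
      have := norm_add₃_le (a := Q α (u n) - a) (b := (u n * v n) • A2 α - c) (c := Q α (v n) - b)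
      linarith
  have := limS_add e α he (limS_add e α he hab (limS_neg e α he ha)) (limS_neg e α he hb)
  have h : a + c + b + -a + -b = c := by abel
  rwa [h] at this

/-- Key density lemma. -/
lemma key_density (α : ℝ) (hα : Irrational α) (x : UnitAddCircle) (r : ℤ) (β : UnitAddCircle)
    (τ : ℝ) (hτ : 0 < τ) : ∃ n : ℤ, 0 < n ∧ ‖(n - r) • x‖ < τ ∧ ‖Q α n - β‖ < τ := by
  obtain ⟨k, hk, hke, hkQ⟩ := limS_univ ((x, r • A2 α, A2 α) :
    UnitAddCircle × UnitAddCircle × UnitAddCircle) α hα (by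
      intro k
      simp [Prod.norm_def]) (β - Q α r) (τ / 2) (by positivity) |r|
  simp only [Prod.smul_mk, Prod.norm_def, max_lt_iff] at hke
  obtain ⟨h1, h2, h3⟩ := hke
  refine ⟨r + k, by have := neg_abs_le r; omega, ?_, ?_⟩
  · rw [add_sub_cancel_left]; linarith
  · have h4 : Q α (r + k) - β = k • (r • A2 α) + (Q α k - (β - Q α r)) := by
      rw [Q_add, mul_comm, mul_smul]; abel
    rw [h4]
    have := norm_add_le (k • (r • A2 α)) (Q α k - (β - Q α r))
    linarith

/-- Joint density of `(2 α n, α n²)`. -/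
lemma joint_density (α : ℝ) (hα : Irrational α) (a β : UnitAddCircle)
    (τ : ℝ) (hτ : 0 < τ) : ∃ n : ℤ, 0 < n ∧ ‖n • A2 α - a‖ < τ ∧ ‖Q α n - β‖ < τ := by
  have hd : DenseRange (· • A2 α : ℤ → UnitAddCircle) := by
    rw [A2, AddCircle.denseRange_zsmul_coe_iff]
    have := hα.intCast_mul (m := 2) (by norm_num)
    simpa using this
  obtain ⟨r, hr⟩ := hd.exists_dist_lt a (half_pos hτ)
  obtain ⟨n, hn, h1, h2⟩ := key_density α hα (A2 α) r β (τ / 2) (by positivity)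
  refine ⟨n, hn, ?_, by linarith⟩
  have h3 : n • A2 α - a = (n - r) • A2 α + (r • A2 α - a) := by
    rw [sub_smul]; abel
  rw [h3]
  rw [dist_comm, dist_eq_norm] at hr
  have := norm_add_le ((n - r) • A2 α) (r • A2 α - a)
  linarith

/-- Pushing a point over the boundary of the arc. -/
lemma push_out (ρ : ℝ) (c : UnitAddCircle) (d τ : ℝ) (hτ : 0 < τ) (hτρ : τ ≤ ρ)
    (hd : d ≤ ‖c‖) (hd2 : d ≤ 1 / 2 - 2 * ρ) :
    ∃ b : UnitAddCircle, ‖b‖ ≤ ρ - τ ∧ ρ - τ + d ≤ ‖b + c‖ := by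
  obtain ⟨c, rfl, hn, hc⟩ := exists_rep c
  rw [hn] at hd
  have main : ∀ s : ℝ, 0 ≤ s → d ≤ s → s ≤ 1 / 2 → ρ - τ + d ≤ ‖((ρ - τ + s : ℝ) : UnitAddCircle)‖ := by
    intro s hs hds hs2
    rw [UnitAddCircle.norm_eq]
    rcases le_or_gt (round (ρ - τ + s)) 0 with h | h
    · have : (round (ρ - τ + s) : ℝ) ≤ 0 := by exact_mod_cast h
      exact le_trans (by linarith) (le_abs_self _)
    · have : (1 : ℝ) ≤ (round (ρ - τ + s) : ℝ) := by exact_mod_cast h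
      exact le_trans (by linarith) (neg_le_abs _)
  rcases le_total 0 c with h | h
  · rw [abs_of_nonneg h] at hd hc
    refine ⟨((ρ - τ : ℝ) : UnitAddCircle), ?_, ?_⟩
    · refine (norm_coe_le_abs _).trans ?_
      rw [abs_of_nonneg (by linarith)]
    · rw [← AddCircle.coe_add]; exact main c h hd hc
  · rw [abs_of_nonpos h] at hd hc
    refine ⟨((-(ρ - τ) : ℝ) : UnitAddCircle), ?_, ?_⟩
    · refine (norm_coe_le_abs _).trans ?_
      rw [abs_neg, abs_of_nonneg (by linarith)]
    · have := main (-c) (by linarith) hd hc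
      rw [← AddCircle.coe_add, ← norm_neg, ← AddCircle.coe_neg]
      rwa [show -(-(ρ - τ) + c) = ρ - τ + -c by ring]

/-! ### Characterisation of `mu` and `lam` -/

/-- `g` is the indicator of the quadratic Bohr set. -/
def IsInd (α ρ : ℝ) (g : ℤ → ℤ) : Prop :=
  (∀ n, ‖Q α n‖ < ρ → g n = 1) ∧ (∀ n, g n = 1 → ‖Q α n‖ < ρ) ∧ ∀ n, ¬ ‖Q α n‖ < ρ → g n = 0

lemma separate (α ρ : ℝ) (hα : Irrational α) (hρ0 : 0 < ρ) (hρ4 : ρ < 1 / 4)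
    (x y : UnitAddCircle) (hxy : x ≠ 0 ∨ y ≠ 0) :
    ∃ n : ℤ, 0 < n ∧ ‖Q α n‖ < ρ ∧ ρ < ‖Q α n + n • x + y‖ := by
  obtain ⟨r, hr⟩ : ∃ r : ℤ, r • x + y ≠ 0 := by
    by_contra! h
    have h0 := h 0
    have h1 := h 1
    simp only [zero_smul, zero_add, one_smul] at h0 h1
    rw [h0, add_zero] at h1
    rcases hxy with h | h <;> contradiction
  set c := r • x + y with hcdef
  have hc : 0 < ‖c‖ := norm_pos_iff.2 hr
  set d := min ‖c‖ (1 / 2 - 2 * ρ)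
  have hd : 0 < d := lt_min hc (by linarith)
  set τ := min ρ (d / 4) with hτdef
  have hτ : 0 < τ := lt_min hρ0 (by linarith)
  have hτ1 : τ ≤ ρ := min_le_left _ _
  have hτ2 : τ ≤ d / 4 := min_le_right _ _
  obtain ⟨b, hb1, hb2⟩ := push_out ρ c d τ hτ hτ1 (min_le_left _ _) (min_le_right _ _)
  obtain ⟨n, hn, h1, h2⟩ := key_density α hα x r b τ hτ
  refine ⟨n, hn, ?_, ?_⟩
  · have := norm_add_le (Q α n - b) b
    rw [sub_add_cancel] at this
    linarith
  · have h3 : b + c = (Q α n + n • x + y) - (Q α n - b) - (n - r) • x := by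
      rw [hcdef, sub_smul]; abel
    have h4 := norm_sub_le ((Q α n + n • x + y) - (Q α n - b)) ((n - r) • x)
    have h5 := norm_sub_le (Q α n + n • x + y) (Q α n - b)
    rw [← h3] at h4
    linarith

lemma mu_nec (α ρ : ℝ) (hα : Irrational α) (hρ0 : 0 < ρ) (hρ4 : ρ < 1 / 4) (g : ℤ → ℤ)
    (hg : IsInd α ρ g) (δ : ℝ) (hδ : 0 < δ) :
    ∃ N : ℤ, 0 < N ∧ ∀ m : ℤ, mu g m N → ‖m • A2 α‖ < δ ∧ ‖Q α m‖ < δ := by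
  have hcl : IsClosed {p : UnitAddCircle × UnitAddCircle | δ ≤ ‖p.1‖ ∨ δ ≤ ‖p.2‖} := by
    exact (isClosed_le continuous_const continuous_fst.norm).union
      (isClosed_le continuous_const continuous_snd.norm)
  obtain ⟨J, hJ⟩ := hcl.isCompact.elim_finite_subcover
    (fun n : {n : ℤ // 0 < n ∧ ‖Q α n‖ < ρ} =>
      {p : UnitAddCircle × UnitAddCircle | ρ < ‖Q α n + (n : ℤ) • p.1 + p.2‖})
    (fun n => isOpen_lt continuous_const (by fun_prop)) (by
      rintro ⟨x, y⟩ hxy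
      have hne : x ≠ 0 ∨ y ≠ 0 := by
        rcases hxy with h | h
        · left; rintro rfl; simp at h; linarith
        · right; rintro rfl; simp at h; linarith
      obtain ⟨n, hn, h1, h2⟩ := separate α ρ hα hρ0 hρ4 x y hne
      exact Set.mem_iUnion.2 ⟨⟨n, hn, h1⟩, h2⟩)
  refine ⟨1 + ∑ j ∈ J, (j : ℤ), ?_, ?_⟩
  · have := Finset.sum_nonneg (s := J) (f := fun j : {n : ℤ // 0 < n ∧ ‖Q α n‖ < ρ} => (j : ℤ)) (fun j _ => j.2.1.le)
    omega
  · intro m hm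
    by_contra hcon
    have hmem : ((m • A2 α, Q α m) : UnitAddCircle × UnitAddCircle) ∈
        {p : UnitAddCircle × UnitAddCircle | δ ≤ ‖p.1‖ ∨ δ ≤ ‖p.2‖} := by
      simp only [Set.mem_ofPred_eq]
      by_contra! h
      exact hcon h
    have := hJ hmem
    simp only [Set.mem_iUnion] at this
    obtain ⟨n, hn, h⟩ := this
    simp only [Set.mem_ofPred_eq] at h
    have hle := Finset.single_le_sum (s := J) (f := fun j : {n : ℤ // 0 < n ∧ ‖Q α n‖ < ρ} => (j : ℤ)) (fun j _ => j.2.1.le) hn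
    have h1 := hm n n.2.1 (by omega)
    rw [hg.1 _ n.2.2] at h1
    have h2 := hg.2.1 _ h1
    rw [Q_add, mul_smul] at h2
    linarith

lemma mu_suff (α ρ : ℝ) (g : ℤ → ℤ) (hne : ∀ n : ℤ, 0 < n → ‖Q α n‖ ≠ ρ)
    (hg : IsInd α ρ g) (N : ℤ) (hN : 0 < N) :
    ∃ η : ℝ, 0 < η ∧ ∀ m : ℤ, ‖m • A2 α‖ < η → ‖Q α m‖ < η → mu g m N := by
  obtain ⟨n0, hn0, hmin⟩ := Finset.exists_min_image (Finset.Icc 1 N)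
    (fun n => |‖Q α n‖ - ρ|) ⟨1, by simp; omega⟩
  simp only [Finset.mem_Icc] at hn0 hmin
  have hd : 0 < |‖Q α n0‖ - ρ| := abs_pos.2 (sub_ne_zero.2 (hne n0 (by omega)))
  set d := |‖Q α n0‖ - ρ|
  have hNR : (0 : ℝ) < N := by exact_mod_cast hN
  refine ⟨d / (N + 1), by positivity, ?_⟩
  intro m h1 h2 n hn hnN
  have hnR : (0 : ℝ) < n := by exact_mod_cast hn
  have hnNR : (n : ℝ) ≤ N := by exact_mod_cast hnN
  have hdn := hmin n ⟨by omega, hnN⟩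
  have h3 : |‖Q α (n + m)‖ - ‖Q α n‖| < d := by
    refine lt_of_le_of_lt (abs_norm_sub_norm_le _ _) ?_
    have h4 : Q α (n + m) - Q α n = n • (m • A2 α) + Q α m := by
      rw [Q_add, mul_smul]; abel
    rw [h4]
    have h5 := norm_add_le (n • (m • A2 α)) (Q α m)
    have h6 := norm_zsmul_le' n (m • A2 α)
    rw [abs_of_pos hnR] at h6
    have h7 : (n : ℝ) * ‖m • A2 α‖ ≤ N * (d / (N + 1)) :=
      mul_le_mul hnNR h1.le (norm_nonneg _) hNR.le
    have h8 : N * (d / (N + 1)) + d / (N + 1) = d := by field_simp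
    linarith
  rw [abs_lt] at h3
  by_cases hc : ‖Q α n‖ < ρ
  · rw [hg.1 n hc, hg.1]
    rw [abs_of_neg (by linarith)] at hdn
    linarith
  · rw [hg.2.2 n hc, hg.2.2]
    rw [abs_of_nonneg (by linarith)] at hdn
    linarith

lemma lam_nec (α ρ : ℝ) (hα : Irrational α) (hρ0 : 0 < ρ) (hρ4 : ρ < 1 / 4) (g : ℤ → ℤ)
    (hg : IsInd α ρ g) (δ : ℝ) (hδ : 0 < δ) :
    ∃ N : ℤ, 0 < N ∧ ∀ m : ℤ, lam g m N → ‖m • A2 α‖ < δ := by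
  obtain ⟨N, hN, h⟩ := mu_nec α ρ hα hρ0 hρ4 g hg (δ / 2) (by positivity)
  refine ⟨N, hN, ?_⟩
  rintro m ⟨n, -, h1, h2⟩
  have h3 := (h _ h1).1
  have h4 := (h _ h2).1
  have h5 : m • A2 α = (n + m) • A2 α - n • A2 α := by rw [add_smul]; abel
  rw [h5]
  have := norm_sub_le ((n + m) • A2 α) (n • A2 α)
  linarith

lemma lam_suff (α ρ : ℝ) (hα : Irrational α) (g : ℤ → ℤ)
    (hne : ∀ n : ℤ, 0 < n → ‖Q α n‖ ≠ ρ) (hg : IsInd α ρ g) (L : ℤ) (hL : 0 < L) :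
    ∃ η : ℝ, 0 < η ∧ ∀ m : ℤ, 0 < m → ‖m • A2 α‖ < η → lam g m L := by
  obtain ⟨η0, hη0, hmu⟩ := mu_suff α ρ g hne hg L hL
  obtain ⟨B, hB⟩ := exists_int_gt (4 / η0)
  have hB0 : 0 < B := by
    have : (0 : ℝ) < B := lt_trans (by positivity) hB
    exact_mod_cast this
  obtain ⟨n0, hn0, hmin⟩ := Finset.exists_min_image (Finset.Icc 1 B)
    (fun n => ‖n • A2 α‖) ⟨1, by simp; omega⟩
  simp only [Finset.mem_Icc] at hn0 hmin
  have hd : 0 < ‖n0 • A2 α‖ := norm_pos_iff.2 (zsmul_A2_ne α hα n0 (by omega))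
  refine ⟨min ‖n0 • A2 α‖ (η0 / 4), lt_min hd (by positivity), ?_⟩
  intro m hm hmA
  obtain ⟨hmA1, hmA2⟩ := lt_min_iff.1 hmA
  have hmB : B < m := by
    by_contra! hc
    have := hmin m ⟨by omega, hc⟩
    linarith
  have hmR : (4 / η0 : ℝ) < m := by
    have : (B : ℝ) < m := by exact_mod_cast hmB
    linarith
  have hm1 : (1 : ℝ) ≤ m := by exact_mod_cast hm
  have hm0 : (0 : ℝ) < m := by linarith
  obtain ⟨s, hs, -, hs2⟩ := exists_rep (Q α m)
  have hτ : 0 < η0 / 4 / m := by positivity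
  have hτ2 : η0 / 4 / m ≤ η0 / 4 := div_le_self (by positivity) hm1
  obtain ⟨n, hn, h1, h2⟩ := joint_density α hα ((-s / m : ℝ) : UnitAddCircle) 0 (η0 / 4 / m) hτ
  rw [sub_zero] at h2
  have h3 : ‖((-s / m : ℝ) : UnitAddCircle)‖ ≤ η0 / 4 := by
    refine (norm_coe_le_abs _).trans ?_
    rw [abs_div, abs_neg, abs_of_pos hm0, div_le_iff₀ hm0]
    rw [div_lt_iff₀ hη0] at hmR
    linarith
  have h4 : ‖n • A2 α‖ < η0 / 2 := by
    have := norm_add_le (n • A2 α - ((-s / m : ℝ) : UnitAddCircle)) ((-s / m : ℝ) : UnitAddCircle)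
    rw [sub_add_cancel] at this
    linarith
  refine ⟨n, hn, hmu n (by linarith) (by linarith), hmu (n + m) ?_ ?_⟩
  · rw [add_smul]
    have := norm_add_le (n • A2 α) (m • A2 α)
    linarith
  · have h5 : Q α (n + m) = Q α n + m • (n • A2 α - ((-s / m : ℝ) : UnitAddCircle)) := by
      have h6 : m • ((-s / m : ℝ) : UnitAddCircle) = -Q α m := by
        rw [← AddCircle.coe_zsmul, ← hs, ← AddCircle.coe_neg]
        congr 1
        rw [zsmul_eq_mul]; field_simp
      rw [Q_add, smul_sub, h6, mul_comm, mul_smul]; abel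
    rw [h5]
    have h7 := norm_add_le (Q α n) (m • (n • A2 α - ((-s / m : ℝ) : UnitAddCircle)))
    have h8 := norm_zsmul_le' m (n • A2 α - ((-s / m : ℝ) : UnitAddCircle))
    rw [abs_of_pos hm0] at h8
    have h9 : m * ‖n • A2 α - ((-s / m : ℝ) : UnitAddCircle)‖ < η0 / 4 := by
      rw [mul_comm, ← lt_div_iff₀ hm0]; exact h1
    linarith

lemma Q_add3 (α : ℝ) (h m n : ℤ) :
    Q α (h + m + n) = Q α h + Q α m + m • (h • A2 α) + Q α n + (h + m) • (n • A2 α) := by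
  rw [Q_add, Q_add, mul_comm h m, mul_smul, mul_smul]; abel

lemma part_a (α ρ : ℝ) (hα : Irrational α) (hρ0 : 0 < ρ) (hρ4 : ρ < 1 / 4) (g : ℤ → ℤ)
    (hne : ∀ n : ℤ, 0 < n → ‖Q α n‖ ≠ ρ) (hg : IsInd α ρ g) (ε : ℝ) (hε : 0 < ε) :
    ∃ N : ℤ, 0 < N ∧ ∀ m : ℤ, 0 < m → kap g m N → ‖Q α m‖ < ε := by
  set d := min ε (1 / 2 - 2 * ρ)
  have hd : 0 < d := lt_min hε (by linarith)
  obtain ⟨N, hN, hmu⟩ := mu_nec α ρ hα hρ0 hρ4 g hg (d / 4) (by positivity)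
  refine ⟨N, hN, ?_⟩
  rintro m hm ⟨M, hM, hk⟩
  by_contra! hcon
  have hm0 : (0 : ℝ) < m := by exact_mod_cast hm
  set τ := min ρ (d / 16)
  have hτ : 0 < τ := lt_min hρ0 (by positivity)
  have hτ1 : τ ≤ ρ := min_le_left _ _
  have hτ2 : τ ≤ d / 16 := min_le_right _ _
  obtain ⟨b, hb1, hb2⟩ := push_out ρ (Q α m) d τ hτ hτ1 ((min_le_left _ _).trans hcon)
    (min_le_right _ _)
  obtain ⟨η, hη, hlam⟩ := lam_suff α ρ hα g hne hg M hM
  obtain ⟨h, hh, h1, h2⟩ := joint_density α hα 0 b (min η (min τ (τ / m))) (by positivity)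
  rw [sub_zero, lt_min_iff, lt_min_iff] at h1
  rw [lt_min_iff, lt_min_iff] at h2
  have hgh : g h = 1 := by
    apply hg.1
    have := norm_add_le (Q α h - b) b
    rw [sub_add_cancel] at this
    linarith [h2.2.1]
  have hhm : (0 : ℝ) < ((h + m : ℤ) : ℝ) := by exact_mod_cast (by omega : 0 < h + m)
  obtain ⟨L, hL, hlamL⟩ := lam_nec α ρ hα hρ0 hρ4 g hg (τ / ((h + m : ℤ) : ℝ)) (by positivity)
  obtain ⟨n, hn, hl, hmun, hgn⟩ := hk h hh hgh (hlam h hh h1.1) L hL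
  have e1 := hg.2.1 _ hgn
  have e2 := (hmu n hmun).2
  have e3 : ‖m • (h • A2 α)‖ < τ := by
    refine lt_of_le_of_lt (norm_zsmul_le' _ _) ?_
    rw [abs_of_pos hm0, mul_comm, ← lt_div_iff₀ hm0]
    exact h1.2.2
  have e4 : ‖(h + m) • (n • A2 α)‖ < τ := by
    refine lt_of_le_of_lt (norm_zsmul_le' _ _) ?_
    rw [abs_of_pos hhm, mul_comm, ← lt_div_iff₀ hhm]
    exact hlamL n hl
  have e5 : b + Q α m = Q α (h + m + n) -
      ((Q α h - b) + m • (h • A2 α) + (Q α n + (h + m) • (n • A2 α))) := by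
    rw [Q_add3]; abel
  have e6 := norm_sub_le (Q α (h + m + n))
      ((Q α h - b) + m • (h • A2 α) + (Q α n + (h + m) • (n • A2 α)))
  have e7 := norm_add₃_le (a := Q α h - b) (b := m • (h • A2 α))
    (c := Q α n + (h + m) • (n • A2 α))
  have e8 := norm_add_le (Q α n) ((h + m) • (n • A2 α))
  rw [← e5] at e6
  linarith [h2.2.1]

lemma part_b (α ρ : ℝ) (hα : Irrational α) (hρ0 : 0 < ρ) (hρ4 : ρ < 1 / 4) (g : ℤ → ℤ)
    (hne : ∀ n : ℤ, 0 < n → ‖Q α n‖ ≠ ρ) (hg : IsInd α ρ g) (N : ℤ) (hN : 0 < N) :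
    ∃ ε : ℝ, 0 < ε ∧ ∀ m : ℤ, 0 < m → ‖Q α m‖ < ε → kap g m N := by
  obtain ⟨η0, hη0, hmu⟩ := mu_suff α ρ g hne hg N hN
  refine ⟨η0 / 3, by positivity, ?_⟩
  intro m hm hmQ
  have hm0 : (0 : ℝ) < m := by exact_mod_cast hm
  obtain ⟨M, hM, hlamM⟩ := lam_nec α ρ hα hρ0 hρ4 g hg (η0 / 3 / m) (by positivity)
  refine ⟨M, hM, ?_⟩
  intro h hh hgh hlh L hL
  have e1 : ‖m • (h • A2 α)‖ < η0 / 3 := by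
    refine lt_of_le_of_lt (norm_zsmul_le' _ _) ?_
    rw [abs_of_pos hm0, mul_comm, ← lt_div_iff₀ hm0]
    exact hlamM h hlh
  have e2 := hg.2.1 h hgh
  obtain ⟨η, hη, hlam⟩ := lam_suff α ρ hα g hne hg L hL
  have hhm : (0 : ℝ) < ((h + m : ℤ) : ℝ) := by exact_mod_cast (by omega : 0 < h + m)
  set σ := (ρ - ‖Q α h‖) / 2 with hσdef
  have hσ : 0 < σ := by rw [hσdef]; linarith
  obtain ⟨n, hn, h1, h2⟩ := joint_density α hα 0 (-(Q α m + m • (h • A2 α)))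
    (min (min η (η0 / 3)) (min σ (σ / ((h + m : ℤ) : ℝ)))) (by positivity)
  simp only [sub_zero, lt_min_iff, sub_neg_eq_add] at h1 h2
  obtain ⟨⟨h1a, h1b⟩, h1c, h1d⟩ := h1
  obtain ⟨⟨h2a, h2b⟩, h2c, h2d⟩ := h2
  refine ⟨n, hn, hlam n hn h1a, hmu n (by linarith) ?_, hg.1 _ ?_⟩
  · have e3 : Q α n = (Q α n + (Q α m + m • (h • A2 α))) - (Q α m + m • (h • A2 α)) := by abel
    rw [e3]
    have e4 := norm_sub_le (Q α n + (Q α m + m • (h • A2 α))) (Q α m + m • (h • A2 α))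
    have e5 := norm_add_le (Q α m) (m • (h • A2 α))
    linarith
  · have e3 : Q α (h + m + n) =
        Q α h + (Q α n + (Q α m + m • (h • A2 α))) + (h + m) • (n • A2 α) := by
      rw [Q_add3]; abel
    have e4 : ‖(h + m) • (n • A2 α)‖ < σ := by
      refine lt_of_le_of_lt (norm_zsmul_le' _ _) ?_
      rw [abs_of_pos hhm, mul_comm, ← lt_div_iff₀ hhm]
      exact h1d
    rw [e3]
    have e5 := norm_add₃_le (a := Q α h) (b := Q α n + (Q α m + m • (h • A2 α)))
      (c := (h + m) • (n • A2 α))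
    linarith

open scoped Classical in
theorem statement (α ρ : ℝ) (hρ0 : 0 < ρ) (hρ4 : ρ < 1 / 4)
    (hα : ¬ ∃ q r : ℚ, α = (q : ℝ) + (r : ℝ) * ρ)
    (g : ℤ → ℤ)
    (hg : ∀ n : ℤ, g n = if |α * n ^ 2 - round (α * n ^ 2)| < ρ then 1 else 0) :
    (∀ ε : ℝ, 0 < ε → ∃ N : ℤ, 0 < N ∧ ∀ m : ℤ, 0 < m → kap g m N →
        |α * m ^ 2 - round (α * m ^ 2)| < ε) ∧
      (∀ N : ℤ, 0 < N → ∃ ε : ℝ, 0 < ε ∧ ∀ m : ℤ, 0 < m →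
        |α * m ^ 2 - round (α * m ^ 2)| < ε → kap g m N) := by
  have hirr : Irrational α := by
    rintro ⟨q, hq⟩
    exact hα ⟨q, 0, by simp [hq]⟩
  have hQ : ∀ n : ℤ, ‖Q α n‖ = |α * n ^ 2 - round (α * n ^ 2)| := fun n => UnitAddCircle.norm_eq
  have hne : ∀ n : ℤ, 0 < n → ‖Q α n‖ ≠ ρ := by
    intro n hn h
    rw [hQ] at h
    have hn0 : (n : ℝ) ≠ 0 := by exact_mod_cast hn.ne'
    have hn2 : (n : ℝ) ^ 2 ≠ 0 := pow_ne_zero 2 hn0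
    rcases abs_choice (α * n ^ 2 - round (α * n ^ 2)) with h' | h'
    · rw [h'] at h
      refine hα ⟨(round (α * n ^ 2) : ℚ) / n ^ 2, 1 / n ^ 2, ?_⟩
      push_cast
      rw [div_mul_eq_mul_div, ← add_div, eq_div_iff hn2]
      linarith
    · rw [h'] at h
      refine hα ⟨(round (α * n ^ 2) : ℚ) / n ^ 2, -1 / n ^ 2, ?_⟩
      push_cast
      rw [div_mul_eq_mul_div, ← add_div, eq_div_iff hn2]
      linarith
  have hI : IsInd α ρ g := by
    refine ⟨fun n h => ?_, fun n h => ?_, fun n h => ?_⟩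
    · rw [hg, if_pos]; rwa [← hQ]
    · by_contra hc
      rw [hg, if_neg (by rwa [← hQ])] at h
      simp at h
    · rw [hg, if_neg]; rwa [← hQ]
  simp only [← hQ]
  exact ⟨part_a α ρ hirr hρ0 hρ4 g hne hI, part_b α ρ hirr hρ0 hρ4 g hne hI⟩

end Stmt16
end
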